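/- arXiv:1109.5524 — 2 statements merged into one kernel-verified Lean document; each statement's English description precedes it below -/
import Mathlib

section
/- Bäcklund transformations for the Wronskian T-functions. For fixed b1 ∈ B1, f1 ∈ F1, b2 ∈ B2, f2 ∈ F2, write T^{B1′}, T^{F1′}, T^{B2′}, T^{F2′} for the Wronskian T-functions built with b1 removed from B1, f1 removed from F1, b2 removed from B2, f2 removed from F2, respectively (all other data unchanged). Then for all a, s ∈ ℤ, pointwise on ℂ: (1) T^{[−1]}_{a+1,s}·T^{B1′[+1]}_{a,s} − T_{a,s}·T^{B1′}_{a+1,s} = z_{b1}·T_{a+1,s−1}·T^{B1′}_{a,s+1}; (2) T_{a,s+1}·T^{B1′}_{a,s} − T^{[−1]}_{a,s}·T^{B1′[+1]}_{a,s+1} = z_{b1}·T_{a+1,s}·T^{B1′}_{a−1,s+1}; (3) T^{F1′[−1]}_{a+1,s}·T^{[+1]}_{a,s} − T^{F1′}_{a,s}·T_{a+1,s} = z_{f1}·T^{F1′}_{a+1,s−1}·T_{a,s+1}; (4) T^{F1′}_{a,s+1}·T_{a,s} − T^{F1′[−1]}_{a,s}·T^{[+1]}_{a,s+1} = z_{f1}·T^{F1′}_{a+1,s}·T_{a−1,s+1};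 (5) z_{b2}·T^{[+1]}_{a+1,s}·T^{B2′[−1]}_{a,s} − T_{a,s}·T^{B2′}_{a+1,s} = T_{a+1,s+1}·T^{B2′}_{a,s−1}; (6) T_{a,s−1}·T^{B2′}_{a,s} − T^{[+1]}_{a,s}·T^{B2′[−1]}_{a,s−1} = T_{a+1,s}·T^{B2′}_{a−1,s−1}; (7) z_{f2}·T^{F2′[+1]}_{a+1,s}·T^{[−1]}_{a,s} + T^{F2′}_{a,s}·T_{a+1,s} = T^{F2′}_{a+1,s+1}·T_{a,s−1}; (8) T^{F2′}_{a,s−1}·T_{a,s} − T^{F2′[+1]}_{a,s}·T^{[−1]}_{a,s−1} = −T^{F2′}_{a+1,s}·T_{a−1,s−1}. -/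
open scoped BigOperators

namespace StmtT

/-- The integer segment tuple `⟨a,b⟩ = (a, a+1, …, b)`, empty when `b < a`. -/
def seg (a b : ℤ) : List ℤ := (List.range (b - a + 1).toNat).map (fun k => a + (k : ℤ))

/-- Product of `g x y` over ordered pairs `x ≺ y` in the list `L`. -/
def pairProd {ι : Type*} (L : List ι) (g : ι → ι → ℂ) : ℂ :=
  ∏ i : Fin L.length, ∏ j : Fin L.length, if i < j then g (L.get i) (L.get j) else 1

/-- Product of `g x` over a list. -/
def prodL {ι : Type*} (L : List ι) (g : ι → ℂ) : ℂ := (L.map g).prod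

/-- Product of `g x y` over pairs `(x, y) ∈ L × M`. -/
def prodLL {ι : Type*} (L M : List ι) (g : ι → ι → ℂ) : ℂ :=
  (L.map (fun x => (M.map (g x)).prod)).prod

/-- Determinant of the square matrix whose rows and columns are labelled by the given
key lists (by convention `0` if the two lists have different lengths). -/
noncomputable def listDet {α β : Type*} (rows : List α) (cols : List β) (e : α → β → ℂ) : ℂ :=
  if h : rows.length = cols.length then
    Matrix.det (Matrix.of fun i j : Fin rows.length =>
      e (rows.get i) (cols.get (Fin.cast h j)))
  else 0

/-- The denominator formula `D(B|F)`. -/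
noncomputable def Dden {ι : Type*} (z : ι → ℂ) (B F : List ι) : ℂ :=
  pairProd B (fun b b' => z b - z b') * pairProd F (fun f f' => z f' - z f) /
    prodLL B F (fun b f => z b - z f)

/-- The sparse determinant `Δ^{B1,B2,R,[η;ξ]}_{F,S,T1,T2}` built from Baxter
Q-functions, as a function of the spectral parameter `u`. -/
noncomputable def DeltaT {ι : Type*} [DecidableEq ι] (z : ι → ℂ) (hbar : ℂ)
    (Q : Finset ι → ℂ → ℂ) (B1 B2 F : List ι) (R S T1 T2 : List ℤ) (η ξ : ℤ) (u : ℂ) : ℂ :=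
  listDet
    ((B1.map (Sum.inl : ι → ι ⊕ (ι ⊕ ℤ)) ++
      B2.map (fun b => (Sum.inr (Sum.inl b) : ι ⊕ (ι ⊕ ℤ))) ++
      R.map (fun r => (Sum.inr (Sum.inr r) : ι ⊕ (ι ⊕ ℤ)))))
    ((F.map (Sum.inl : ι → ι ⊕ (ℤ ⊕ (ℤ ⊕ ℤ))) ++
      S.map (fun j => (Sum.inr (Sum.inl j) : ι ⊕ (ℤ ⊕ (ℤ ⊕ ℤ)))) ++
      T1.map (fun j => (Sum.inr (Sum.inr (Sum.inl j)) : ι ⊕ (ℤ ⊕ (ℤ ⊕ ℤ)))) ++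
      T2.map (fun j => (Sum.inr (Sum.inr (Sum.inr j)) : ι ⊕ (ℤ ⊕ (ℤ ⊕ ℤ))))))
    (fun row col =>
      match row, col with
      | Sum.inl b, Sum.inl f => Q {b, f} (u + (ξ : ℂ) * hbar) / (z b - z f)
      | Sum.inl b, Sum.inr (Sum.inl j) =>
          z b ^ (j - 1) * Q {b} (u + ((ξ + 2 * j - 1 : ℤ) : ℂ) * hbar)
      | Sum.inl b, Sum.inr (Sum.inr (Sum.inl j)) =>
          z b ^ (j - 1) * Q {b} (u + ((ξ + 2 * j - 1 : ℤ) : ℂ) * hbar)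
      | Sum.inl _, Sum.inr (Sum.inr (Sum.inr _)) => 0
      | Sum.inr (Sum.inl b), Sum.inl f =>
          (-z f / z b) ^ η * Q {b, f} (u + ((ξ - 2 * η : ℤ) : ℂ) * hbar) / (z b - z f)
      | Sum.inr (Sum.inl b), Sum.inr (Sum.inl j) =>
          z b ^ (j - 1) * Q {b} (u + ((ξ + 2 * j - 1 : ℤ) : ℂ) * hbar)
      | Sum.inr (Sum.inl _), Sum.inr (Sum.inr (Sum.inl _)) => 0
      | Sum.inr (Sum.inl b), Sum.inr (Sum.inr (Sum.inr j)) =>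
          z b ^ (j - 1) * Q {b} (u + ((ξ + 2 * j - 1 : ℤ) : ℂ) * hbar)
      | Sum.inr (Sum.inr r), Sum.inl f =>
          (-z f) ^ (r - 1) * Q {f} (u + ((ξ - 2 * r + 1 : ℤ) : ℂ) * hbar)
      | Sum.inr (Sum.inr _), Sum.inr _ => 0)

/-- The family `Q` of Baxter Q-functions satisfies the QQ-relations on the index
set `S` (with grading `p` and twist parameters `z`), normalized by `Q_∅ = 1`. -/
def QQsys {ι : Type*} [DecidableEq ι] (z : ι → ℂ) (hbar : ℂ) (p : ι → ℤ) (S : Set ι)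
    (Q : Finset ι → ℂ → ℂ) : Prop :=
  (∀ u, Q ∅ u = 1) ∧
  (∀ I : Finset ι, ↑I ⊆ S → ∀ i ∈ S, ∀ j ∈ S, i ∉ I → j ∉ I → i ≠ j → p i = p j →
    ∀ u, (z i - z j) * (Q I u * Q (insert i (insert j I)) u) =
      z i * Q (insert i I) (u + (p i : ℂ) * hbar) * Q (insert j I) (u - (p i : ℂ) * hbar) -
      z j * Q (insert i I) (u - (p i : ℂ) * hbar) * Q (insert j I) (u + (p i : ℂ) * hbar)) ∧
  (∀ I : Finset ι, ↑I ⊆ S → ∀ i ∈ S, ∀ j ∈ S, i ∉ I → j ∉ I → i ≠ j → p i = -p j →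
    ∀ u, (z i - z j) * (Q (insert i I) u * Q (insert j I) u) =
      z i * Q I (u - (p i : ℂ) * hbar) * Q (insert i (insert j I)) (u + (p i : ℂ) * hbar) -
      z j * Q I (u + (p i : ℂ) * hbar) * Q (insert i (insert j I)) (u - (p i : ℂ) * hbar))

/-- `T` is the Wronskian T-function family for the data `(z, hbar, Q, B1, B2, F1, F2)`:
it vanishes outside the generalized T-hook and is given by the eight regional
sparse determinant formulas inside the hook. -/
def IsT {ι : Type*} [DecidableEq ι] (z : ι → ℂ) (hbar : ℂ) (Q : Finset ι → ℂ → ℂ)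
    (B1 B2 F1 F2 : List ι) (T : ℤ → ℤ → ℂ → ℂ) : Prop :=
  let m1 : ℤ := B1.length
  let m2 : ℤ := B2.length
  let n1 : ℤ := F1.length
  let n2 : ℤ := F2.length
  let η1 : ℤ := m1 - n1
  let η2 : ℤ := m2 - n2
  let θ : ℤ := (m1 + m2) * (m1 + m2 - 1) / 2 + (n1 + n2) * (n1 + n2 - 1) / 2
  let F : List ι := F1 ++ F2
  let Dd : ℂ := Dden z (B1 ++ B2) F
  (∀ a s : ℤ, (a < 0 ∨ (m1 < a ∧ n1 < s) ∨ (m2 < a ∧ s < -n2)) → ∀ u, T a s u = 0) ∧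
  (∀ a s : ℤ, s + η1 ≤ a → -s + η2 ≤ a → 0 ≤ a → -η1 ≤ s → s ≤ η2 → ∀ u,
    T a s u = (-1 : ℂ) ^ ((s + η1) * (s + n2) + θ) *
      DeltaT z hbar Q B1 B2 F [] [] (seg 1 (s + η1)) (seg (s - a + η1 + 1) (-a + η1 + η2))
        (a - s - η1) (a - s - η1 - η2) u / Dd) ∧
  (∀ a s : ℤ, s + η1 ≤ a → -s + η2 ≤ a → 0 ≤ a → -η1 ≤ s → η2 ≤ s → ∀ u,
    T a s u = (-1 : ℂ) ^ ((s + η1) * (s + n2) + θ) *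
      DeltaT z hbar Q B1 B2 F (seg (a - s - η1 + 1) (a - η1 - η2)) [] (seg 1 (s + η1)) []
        (a - s - η1) (a - s - η1 - η2) u / Dd) ∧
  (∀ a s : ℤ, s + η1 ≤ a → -s + η2 ≤ a → 0 ≤ a → s ≤ -η1 → s ≤ η2 → ∀ u,
    T a s u = (-1 : ℂ) ^ ((s + η1) * m2 + θ) *
      DeltaT z hbar Q B1 B2 F (seg 1 (-s - η1)) [] [] (seg (s - a + η1 + 1) (-a + η1 + η2))
        (a - s - η1) (a - s - η1 - η2) u / Dd) ∧
  (∀ a s : ℤ, s + η1 ≤ a → -s + η2 ≤ a → 0 ≤ a → η2 ≤ s → s ≤ -η1 → ∀ u,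
    T a s u = (-1 : ℂ) ^ ((s + η1) * m2 + θ) *
      DeltaT z hbar Q B1 B2 F (seg 1 (-s - η1) ++ seg (a - s - η1 + 1) (a - η1 - η2)) [] [] []
        (a - s - η1) (a - s - η1 - η2) u / Dd) ∧
  (∀ a s : ℤ, a ≤ s + η1 → a ≤ η1 + η2 → ∀ u,
    T a s u = (-1 : ℂ) ^ (m2 * a + θ) *
      DeltaT z hbar Q B1 B2 F [] (seg 1 (-a + η1 + η2)) (seg (s - a + η1 + 1) (s + η1)) []
        0 (a - s - η1 - η2) u / Dd) ∧
  (∀ a s : ℤ, η1 + η2 ≤ a → a ≤ s + η1 → ∀ u,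
    T a s u = (-1 : ℂ) ^ (a * (η1 + n2 + 1) + θ) *
      DeltaT z hbar Q B1 B2 F (seg 1 (a - η1 - η2)) [] (seg (s - a + η1 + 1) (s + η1)) []
        0 (a - s - η1 - η2) u / Dd) ∧
  (∀ a s : ℤ, a ≤ -s + η2 → a ≤ η1 + η2 → ∀ u,
    T a s u = (-1 : ℂ) ^ (a * (m2 + 1) + θ) *
      DeltaT z hbar Q B1 B2 F [] (seg 1 (-a + η1 + η2)) [] (seg (s - a + η1 + 1) (s + η1))
        0 (a - s - η1 - η2) u / Dd) ∧
  (∀ a s : ℤ, η1 + η2 ≤ a → a ≤ -s + η2 → ∀ u,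
    T a s u = (-1 : ℂ) ^ (a * (η1 + n2) + θ) *
      DeltaT z hbar Q B1 B2 F (seg 1 (a - η1 - η2)) [] [] (seg (s - a + η1 + 1) (s + η1))
        0 (a - s - η1 - η2) u / Dd)


/-! ### Overview of the argument

Every one of the eight regional determinants is rewritten, up to an explicit sign and an explicit
monomial in the parameters `z`, as one and the same big determinant `G`: its rows are two integer
segments followed by the bosonic indices, and its columns are two further integer segments followed
by the fermionic indices.  The four end points `p, q, h, t` of those segments are affine functions
of `(a, s)`, the common lower end `N` is a free cut-off, and shifting the spectral parameter by
`hbar` merely translates the end points.  The required passage from a regional formula to the big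
determinant uses the mixed QQ-relation for the empty set (a first order difference equation for
`Q_{b,f}`), which lets one trade a row and a column of the gadget for a change of the shift; where
two segments overlap, the unit entries of the gadget are expanded and disappear.

Once this uniform representation is known (predicate `RepP`), removing an index from one of the
four tuples deletes one row or one column of the big determinant, while the neighbouring values of
`a` and `s` lengthen or shorten segments by a single step.  Each Bäcklund relation then becomes a
three-term Plücker identity among minors, proved here for determinants labelled by lists.  All the
signs are collected as elements of `ZMod 2` and compared by commutative algebra in that ring, and
the powers of `z` are gathered in the weight `Wt`, whose behaviour under deletion of an index
produces precisely the factors `z b1`, `z f1`, `z b2`, `z f2` in the final formulas. -/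

/-! ### Generic facts about `listDet` -/

section Generic

variable {α β : Type*}

theorem listDet_ofFn {n : ℕ} (v : Fin n → α) (w : Fin n → β) (e : α → β → ℂ) :
    listDet (List.ofFn v) (List.ofFn w) e = Matrix.det (Matrix.of fun i j => e (v i) (w j)) := by
  have h : (List.ofFn v).length = (List.ofFn w).length := by simp
  have hn : (List.ofFn v).length = n := by simp
  unfold listDet
  rw [dif_pos h]
  rw [← Matrix.det_submatrix_equiv_self (finCongr hn)]
  congr 1
  ext i j
  simp
  rfl

theorem exists_ofFn {n : ℕ} (R : List α) (h : R.length = n) : ∃ v : Fin n → α, R = List.ofFn v := by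
  subst h
  exact ⟨R.get, by simp⟩

theorem listDet_ne (R : List α) (C : List β) (e : α → β → ℂ) (h : R.length ≠ C.length) :
    listDet R C e = 0 := by
  unfold listDet
  rw [dif_neg h]

theorem listDet_flip (R : List α) (C : List β) (e : α → β → ℂ) :
    listDet R C e = listDet C R (fun c r => e r c) := by
  by_cases h : R.length = C.length
  · obtain ⟨v, hv⟩ := exists_ofFn R h
    obtain ⟨w, hw⟩ := exists_ofFn C rfl
    generalize C.length = n at *
    subst hv hw
    rw [listDet_ofFn, listDet_ofFn, ← Matrix.det_transpose]
    rfl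
  · rw [listDet_ne _ _ _ h, listDet_ne _ _ _ (Ne.symm h)]

/-- Rescaling and relabelling of rows and columns. -/
theorem listDet_scale {α' β' : Type*} (R : List α) (C : List β) (e : α → β → ℂ)
    (f : α → α') (g : β → β') (e' : α' → β' → ℂ) (x : α → ℂ) (y : β → ℂ)
    (h : ∀ r ∈ R, ∀ c ∈ C, e r c = x r * y c * e' (f r) (g c)) :
    listDet R C e = (R.map x).prod * (C.map y).prod * listDet (R.map f) (C.map g) e' := by
  by_cases hl : R.length = C.length
  · obtain ⟨v, hv⟩ := exists_ofFn R hl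
    obtain ⟨w, hw⟩ := exists_ofFn C rfl
    generalize C.length = n at *
    subst hv hw
    rw [List.map_ofFn, List.map_ofFn, List.map_ofFn, List.map_ofFn, listDet_ofFn, listDet_ofFn,
      List.prod_ofFn, List.prod_ofFn, mul_assoc]
    have h1 : (Matrix.of fun i j => e (v i) (w j)) =
        Matrix.of fun i j => (x ∘ v) i * (Matrix.of fun i j => (y ∘ w) j *
          (Matrix.of fun i j => e' ((f ∘ v) i) ((g ∘ w) j)) i j) i j := by
      ext i j
      have := h (v i) (List.mem_ofFn.mpr ⟨_, rfl⟩) (w j) (List.mem_ofFn.mpr ⟨_, rfl⟩)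
      simp only [Matrix.of_apply, this, Function.comp]
      ring
    rw [h1, Matrix.det_mul_column, Matrix.det_mul_row]
  · rw [listDet_ne _ _ _ hl, listDet_ne _ _ _ (by simpa using hl), mul_zero]

theorem listDet_congr (R : List α) (C : List β) (e e' : α → β → ℂ)
    (h : ∀ r ∈ R, ∀ c ∈ C, e r c = e' r c) :
    listDet R C e = listDet R C e' := by
  rw [listDet_scale R C e id id e' (fun _ => 1) (fun _ => 1) (by simpa using h)]
  simp

theorem listDet_swap (A B : List α) (x y : α) (C : List β) (e : α → β → ℂ) :
    listDet (A ++ x :: y :: B) C e = - listDet (A ++ y :: x :: B) C e := by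
  by_cases hl : (A ++ x :: y :: B).length = C.length
  · have hl' : (A ++ y :: x :: B).length = C.length := by simpa using hl
    obtain ⟨w, hw⟩ := exists_ofFn C rfl
    obtain ⟨v, hv⟩ := exists_ofFn (A ++ x :: y :: B) hl
    generalize C.length = n at *
    have h1 : A.length < n := by simp at hl; omega
    have h2 : A.length + 1 < n := by simp at hl; omega
    have hget : ∀ k (hk : k < n), v ⟨k, hk⟩ = (A ++ x :: y :: B)[k]'(by rw [hl]; exact hk) := by
      intro k hk
      simp [hv]
    have hv' : A ++ y :: x :: B =
        List.ofFn (v ∘ (Equiv.swap (⟨A.length, h1⟩ : Fin n) ⟨A.length + 1, h2⟩)) := by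
      apply List.ext_get
      · simpa using hl'
      · intro k hk hk'
        simp only [List.get_eq_getElem, List.getElem_ofFn, Function.comp, Equiv.swap_apply_def]
        split_ifs with h3 h4
        · simp only [Fin.mk.injEq] at h3
          subst h3
          rw [hget]
          simp
        · simp only [Fin.mk.injEq] at h4
          subst h4
          rw [hget]
          simp
        · simp only [Fin.mk.injEq] at h3 h4
          rw [hget]
          simp only [List.getElem_append, List.getElem_cons]
          split_ifs <;> first | rfl | omega
    rw [hv', hv, hw, listDet_ofFn, listDet_ofFn]
    have := Matrix.det_permute (Equiv.swap (⟨A.length, h1⟩ : Fin n) ⟨A.length + 1, h2⟩)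
      (Matrix.of fun i j => e (v i) (w j))
    rw [Equiv.Perm.sign_swap (by simp)] at this
    simp only [Units.val_neg, Units.val_one, Int.cast_neg, Int.cast_one, neg_mul, one_mul] at this
    rw [← neg_eq_iff_eq_neg] at this
    rw [← this]
    rfl
  · rw [listDet_ne _ _ _ hl, listDet_ne _ _ _ (by simpa using hl), neg_zero]

/-- Signs indexed by parity. -/
noncomputable def sgn (x : ZMod 2) : ℂ := if x = 0 then 1 else -1

theorem sgn_zero : sgn 0 = 1 := by simp [sgn]

theorem sgn_one : sgn 1 = -1 := by simp [sgn]

theorem sgn_add (x y : ZMod 2) : sgn (x + y) = sgn x * sgn y := by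
  have : ∀ x : ZMod 2, x = 0 ∨ x = 1 := by decide
  rcases this x with rfl | rfl <;> rcases this y with rfl | rfl <;>
    simp [sgn, show (1 : ZMod 2) + 1 = 0 by decide]

theorem sgn_sq (x : ZMod 2) : sgn x * sgn x = 1 := by
  rw [← sgn_add, show ∀ x : ZMod 2, x + x = 0 by decide, sgn_zero]

theorem sgn_ne (x : ZMod 2) : sgn x ≠ 0 := by
  intro h
  have := sgn_sq x
  simp [h] at this

theorem sgn_natCast (n : ℕ) : sgn (n : ZMod 2) = (-1) ^ n := by
  induction n with
  | zero => simp [sgn_zero]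
  | succ n ih => rw [Nat.cast_succ, sgn_add, ih, sgn_one, pow_succ]

theorem sgn_intCast (n : ℤ) : sgn (n : ZMod 2) = (-1) ^ n := by
  rcases Int.even_or_odd n with h | h
  · rw [h.neg_one_zpow]
    obtain ⟨k, rfl⟩ := h
    rw [Int.cast_add, sgn_add, sgn_sq]
  · rw [h.neg_one_zpow]
    obtain ⟨k, rfl⟩ := h
    rw [Int.cast_add, sgn_add]
    simp [show (2 : ZMod 2) = 0 by decide, sgn_zero, sgn_one]

theorem listDet_move (K A B : List α) (x : α) (C : List β) (e : α → β → ℂ) :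
    listDet (K ++ (A ++ x :: B)) C e = sgn (A.length : ZMod 2) * listDet (K ++ x :: (A ++ B)) C e := by
  induction A generalizing K with
  | nil => simp [sgn_zero]
  | cons y A ih =>
    have := ih (K ++ [y])
    simp only [List.append_assoc, List.cons_append, List.nil_append] at this ⊢
    rw [this, listDet_swap, List.length_cons, Nat.cast_succ, sgn_add, sgn_one]
    ring

/-- Interchange two adjacent blocks of rows. -/
theorem listDet_block (K U V L : List α) (C : List β) (e : α → β → ℂ) :
    listDet (K ++ (U ++ (V ++ L))) C e =
      sgn ((U.length : ZMod 2) * (V.length : ZMod 2)) * listDet (K ++ (V ++ (U ++ L))) C e := by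
  induction V generalizing K with
  | nil => simp [sgn_zero]
  | cons y V ih =>
    have := ih (K ++ [y])
    simp only [List.append_assoc, List.cons_append, List.nil_append] at this ⊢
    rw [listDet_move, this, List.length_cons, Nat.cast_succ, mul_add, sgn_add]
    ring_nf

theorem listDet_block_col (R : List α) (K U V L : List β) (e : α → β → ℂ) :
    listDet R (K ++ (U ++ (V ++ L))) e =
      sgn ((U.length : ZMod 2) * (V.length : ZMod 2)) * listDet R (K ++ (V ++ (U ++ L))) e := by
  rw [listDet_flip, listDet_block, listDet_flip R]

theorem listDet_move_col (R : List α) (K A B : List β) (x : β) (e : α → β → ℂ) :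
    listDet R (K ++ (A ++ x :: B)) e = sgn (A.length : ZMod 2) * listDet R (K ++ x :: (A ++ B)) e := by
  rw [listDet_flip, listDet_move, listDet_flip R]

/-- `(-1)^(l(l-1)/2)`. -/
noncomputable def triS : ℕ → ℂ
  | 0 => 1
  | l + 1 => sgn (l : ZMod 2) * triS l

theorem triS_sq (l : ℕ) : triS l * triS l = 1 := by
  induction l with
  | zero => simp [triS]
  | succ l ih =>
    have := sgn_sq (l : ZMod 2)
    simp only [triS]
    linear_combination triS l * triS l * this + ih

theorem listDet_reverse (K A L : List α) (C : List β) (e : α → β → ℂ) :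
    listDet (K ++ (A.reverse ++ L)) C e = triS A.length * listDet (K ++ (A ++ L)) C e := by
  induction A generalizing K with
  | nil => simp [triS]
  | cons y A ih =>
    have := ih (K ++ [y])
    simp only [List.append_assoc, List.cons_append, List.nil_append, List.reverse_cons] at this ⊢
    rw [listDet_move, this, List.length_reverse, List.length_cons, triS, mul_assoc]

/-- Linearity in the first row. -/
theorem listDet_head_sum {κ : Type*} (s : Finset κ) (k : κ → ℂ) (y : κ → α) (x : α)
    (R : List α) (C : List β) (e : α → β → ℂ)
    (h : ∀ c ∈ C, e x c = ∑ i ∈ s, k i * e (y i) c) :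
    listDet (x :: R) C e = ∑ i ∈ s, k i * listDet (y i :: R) C e := by
  by_cases hl : R.length + 1 = C.length
  · obtain ⟨v, hv⟩ := exists_ofFn R rfl
    obtain ⟨w, hw⟩ := exists_ofFn C hl.symm
    generalize R.length = n at *
    subst hv hw
    have key : ∀ x : α, listDet (x :: List.ofFn v) (List.ofFn w) e = ∑ j : Fin (n + 1),
        (-1) ^ (j : ℕ) * e x (w j) * Matrix.det (Matrix.of fun (i : Fin n) (l : Fin n) =>
          e (v i) (w (j.succAbove l))) := by
      intro x
      have : x :: List.ofFn v = List.ofFn (Fin.cons x v : Fin (n + 1) → α) := by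
        rw [List.ofFn_succ]; simp
      rw [this, listDet_ofFn, Matrix.det_succ_row_zero]
      refine Finset.sum_congr rfl fun j _ => ?_
      simp only [Matrix.of_apply, Fin.cons_zero]
      congr 2
    simp only [key, Finset.mul_sum]
    rw [Finset.sum_comm]
    refine Finset.sum_congr rfl fun j _ => ?_
    rw [h (w j) (List.mem_ofFn.mpr ⟨_, rfl⟩), Finset.mul_sum, Finset.sum_mul]
    refine Finset.sum_congr rfl fun i _ => ?_
    ring
  · rw [listDet_ne _ _ _ (by simpa using hl)]
    symm
    refine Finset.sum_eq_zero fun i _ => ?_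
    rw [listDet_ne _ _ _ (by simpa using hl), mul_zero]

theorem listDet_dup (x : α) (R : List α) (C : List β) (e : α → β → ℂ) (h : x ∈ R) :
    listDet (x :: R) C e = 0 := by
  obtain ⟨A, B, rfl⟩ := List.append_of_mem h
  have h1 := listDet_move [x] A B x C e
  have h2 := listDet_swap [] (A ++ B) x x C e
  simp only [List.nil_append, List.cons_append] at h1 h2
  rw [h1, self_eq_neg.mp h2, mul_zero]

theorem listDet_zero_row (x : α) (K R : List α) (C : List β) (e : α → β → ℂ)
    (h : ∀ c ∈ C, e x c = 0) : listDet (K ++ x :: R) C e = 0 := by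
  have := listDet_move [] K R x C e
  simp only [List.nil_append] at this
  rw [this, listDet_head_sum (∅ : Finset ℕ) (fun _ => 0) (fun _ => x) x _ _ _ (by simpa using h)]
  simp

/-- Replace a row by a linear combination involving another row. -/
theorem listDet_replace1 (K L : List α) (x x' y : α) (C : List β) (e : α → β → ℂ) (κ μ : ℂ)
    (hy : y ∈ K ++ L) (h : ∀ c ∈ C, e x' c = κ * e x c + μ * e y c) :
    listDet (K ++ x' :: L) C e = κ * listDet (K ++ x :: L) C e := by
  have h1 := fun x => listDet_move [] K L x C e
  simp only [List.nil_append] at h1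
  rw [h1, h1, listDet_head_sum (Finset.univ : Finset (Fin 2)) ![κ, μ] ![x, y] x' _ _ _
    (by simpa [Fin.sum_univ_two] using h)]
  simp only [Fin.sum_univ_two, Matrix.cons_val_zero, Matrix.cons_val_one]
  rw [listDet_dup y _ _ _ hy]
  ring

theorem listDet_replace {γ : Type*} (A : List γ) (g g' y : γ → α) (K L : List α) (C : List β)
    (e : α → β → ℂ) (κ μ : ℂ)
    (hy : ∀ i ∈ A, y i ∈ K ++ L) (h : ∀ i ∈ A, ∀ c ∈ C, e (g' i) c = κ * e (g i) c + μ * e (y i) c) :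
    listDet (K ++ (A.map g' ++ L)) C e = κ ^ A.length * listDet (K ++ (A.map g ++ L)) C e := by
  induction A generalizing K with
  | nil => simp
  | cons i A ih =>
    have h1 := ih (K ++ [g' i]) (fun j hj => by
      have := hy j (by simp [hj])
      simp only [List.mem_append] at this ⊢
      tauto) (fun j hj => h j (by simp [hj]))
    have h2 := listDet_replace1 K (A.map g ++ L) (g i) (g' i) (y i) C e κ μ (by
      have := hy i (by simp)
      simp only [List.mem_append] at this ⊢
      tauto) (h i (by simp))
    simp only [List.append_assoc, List.cons_append, List.nil_append, List.map_cons] at h1 h2 ⊢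
    rw [h1, h2, List.length_cons]
    ring

theorem listDet_replace_col {γ : Type*} (A : List γ) (g g' y : γ → β) (K L : List β) (R : List α)
    (e : α → β → ℂ) (κ μ : ℂ)
    (hy : ∀ i ∈ A, y i ∈ K ++ L) (h : ∀ i ∈ A, ∀ r ∈ R, e r (g' i) = κ * e r (g i) + μ * e r (y i)) :
    listDet R (K ++ (A.map g' ++ L)) e = κ ^ A.length * listDet R (K ++ (A.map g ++ L)) e := by
  rw [listDet_flip, listDet_replace A g g' y K L R _ κ μ hy h, listDet_flip R]

/-- Adding multiples of one row to all the rows. -/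
theorem listDet_rowop (R : List α) (C : List β) (e e' : α → β → ℂ) (y : α) (hy : y ∈ R)
    (l : α → ℂ) (hl : l y = 0) (h : ∀ r ∈ R, ∀ c ∈ C, e' r c = e r c + l r * e y c) :
    listDet R C e' = listDet R C e := by
  by_cases hlen : R.length = C.length
  · obtain ⟨v, hv⟩ := exists_ofFn R hlen
    obtain ⟨w, hw⟩ := exists_ofFn C rfl
    generalize C.length = n at *
    subst hv hw
    rw [List.mem_ofFn] at hy
    obtain ⟨k, rfl⟩ := hy
    rw [listDet_ofFn, listDet_ofFn]
    refine Matrix.det_eq_of_forall_row_eq_smul_add_const (fun i => l (v i)) k hl ?_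
    intro i j
    exact h (v i) (List.mem_ofFn.mpr ⟨_, rfl⟩) (w j) (List.mem_ofFn.mpr ⟨_, rfl⟩)
  · rw [listDet_ne _ _ _ hlen, listDet_ne _ _ _ hlen]

theorem listDet_colop (R : List α) (C : List β) (e e' : α → β → ℂ) (y : β) (hy : y ∈ C)
    (l : β → ℂ) (hl : l y = 0) (h : ∀ r ∈ R, ∀ c ∈ C, e' r c = e r c + l c * e r y) :
    listDet R C e' = listDet R C e := by
  rw [listDet_flip, listDet_rowop C R (fun c r => e r c) _ y hy l hl (fun c hc r hr => h r hr c hc),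
    ← listDet_flip]

/-- A row with a single nonzero entry. -/
theorem listDet_single (x : α) (y : β) (R : List α) (C : List β) (e : α → β → ℂ)
    (h : ∀ c ∈ C, e x c = 0) : listDet (x :: R) (y :: C) e = e x y * listDet R C e := by
  by_cases hl : R.length = C.length
  · obtain ⟨v, hv⟩ := exists_ofFn R rfl
    obtain ⟨w, hw⟩ := exists_ofFn C hl.symm
    generalize R.length = n at *
    subst hv hw
    have h1 : x :: List.ofFn v = List.ofFn (Fin.cons x v : Fin (n + 1) → α) := by
      rw [List.ofFn_succ]; simp
    have h2 : y :: List.ofFn w = List.ofFn (Fin.cons y w : Fin (n + 1) → β) := by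
      rw [List.ofFn_succ]; simp
    rw [h1, h2, listDet_ofFn, listDet_ofFn, Matrix.det_succ_row_zero, Fin.sum_univ_succ]
    rw [Finset.sum_eq_zero]
    · simp only [Matrix.of_apply, Fin.cons_zero, Fin.val_zero, pow_zero, one_mul, add_zero]
      congr 2
    · intro j _
      simp [h (w j) (List.mem_ofFn.mpr ⟨_, rfl⟩)]
  · rw [listDet_ne _ _ _ (by simpa using hl), listDet_ne _ _ _ hl, mul_zero]

/-- Elimination of a pivot in the corner. -/
theorem listDet_pivot (x : α) (y : β) (R : List α) (C : List β) (e e' : α → β → ℂ) (π : ℂ)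
    (hπ : π * π = 1) (hxy : e x y = π)
    (h : ∀ r ∈ R, ∀ c ∈ C, e' r c = e r c - π * e r y * e x c) :
    listDet (x :: R) (y :: C) e = π * listDet R C e' := by
  -- column operation, on optional column labels
  have h1 : listDet (x :: R) (y :: C) e =
      listDet (x :: R) (none :: C.map some) (fun r c => match c with
        | none => e r y
        | some c => e r c) := by
    have := listDet_scale (x :: R) (none :: C.map some) (fun r c => match c with
        | none => e r y
        | some c => e r c) id (fun c => match c with | none => y | some c => c) e
        (fun _ => 1) (fun _ => 1) (by
          rintro r - (_ | c) - <;> simp)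
    rw [this]
    simp [Function.comp_def]
  rw [h1, ← listDet_colop (x :: R) (none :: C.map some) _ (fun r c => match c with
        | none => e r y
        | some c => e r c - π * e r y * e x c) none (by simp) (fun c => match c with
        | none => 0
        | some c => - π * e x c) rfl (by
          rintro r - (_ | c) -
          · simp
          · simp only []; ring), listDet_single _ _ _ _ _ (by
          intro c hc
          obtain ⟨c, hc, rfl⟩ := List.mem_map.mp hc
          simp only [hxy]
          linear_combination - e x c * hπ)]
  simp only [hxy]
  congr 1
  have := listDet_scale R C e' id some (fun r c => match c with
        | none => e r y
        | some c => e r c - π * e r y * e x c) (fun _ => 1) (fun _ => 1) (by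
          intro r hr c hc
          simp [h r hr c hc])
  rw [this]
  simp

end Generic

/-! ### Plücker type identities -/

section Pluecker

variable {α β : Type*}

theorem listDet_head_expand (R : List α) (C : List β) (e : α → β → ℂ) :
    ∃ k : Fin C.length → ℂ, ∀ x : α, listDet (x :: R) C e = ∑ j, k j * e x (C.get j) := by
  by_cases hl : R.length + 1 = C.length
  · obtain ⟨v, hv⟩ := exists_ofFn R rfl
    obtain ⟨w, hw⟩ := exists_ofFn C hl.symm
    generalize R.length = n at *
    subst hv hw
    have hn : (List.ofFn w).length = n + 1 := by simp
    refine ⟨fun j => (-1) ^ (j : ℕ) * Matrix.det (Matrix.of fun (i : Fin n) (l : Fin n) =>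
          e (v i) (w ((j.cast hn).succAbove l))), fun x => ?_⟩
    have : x :: List.ofFn v = List.ofFn (Fin.cons x v : Fin (n + 1) → α) := by
      rw [List.ofFn_succ]; simp
    rw [this, listDet_ofFn, Matrix.det_succ_row_zero]
    rw [← (finCongr hn).sum_comp]
    refine Finset.sum_congr rfl fun j _ => ?_
    simp only [Matrix.of_apply, Fin.cons_zero, finCongr_apply, Fin.val_cast]
    rw [show (List.ofFn w).get j = w (Fin.cast hn j) by
      rw [List.get_eq_getElem, List.getElem_ofFn]; rfl]
    rw [mul_right_comm]
    congr 2
  · refine ⟨fun _ => 0, fun x => ?_⟩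
    rw [listDet_ne _ _ _ (by simpa using hl)]
    simp

theorem listDet_three (x : α) (u v w : β) (R : List α) (C : List β) (e : α → β → ℂ)
    (h : ∀ c ∈ C, e x c = 0) :
    listDet (x :: R) (u :: v :: w :: C) e = e x u * listDet R (v :: w :: C) e
      - e x v * listDet R (u :: w :: C) e + e x w * listDet R (u :: v :: C) e := by
  by_cases hl : R.length = C.length + 2
  · obtain ⟨r, hr⟩ := exists_ofFn R hl
    obtain ⟨q, hq⟩ := exists_ofFn C rfl
    generalize C.length = n at *
    subst hr hq
    have h1 : x :: List.ofFn r = List.ofFn (Fin.cons x r : Fin (n + 3) → α) := by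
      rw [List.ofFn_succ]; simp
    have h2 : ∀ u v, u :: v :: List.ofFn q =
        List.ofFn (Fin.cons u (Fin.cons v q : Fin (n + 1) → β) : Fin (n + 2) → β) := by
      intro u v
      rw [List.ofFn_succ, List.ofFn_succ]; simp
    have h3 : u :: v :: w :: List.ofFn q = List.ofFn (Fin.cons u (Fin.cons v
        (Fin.cons w q : Fin (n + 1) → β) : Fin (n + 2) → β) : Fin (n + 3) → β) := by
      rw [List.ofFn_succ, List.ofFn_succ, List.ofFn_succ]; rfl
    rw [h3, h1, h2, h2, h2, listDet_ofFn, listDet_ofFn, listDet_ofFn, listDet_ofFn,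
      Matrix.det_succ_row_zero, Fin.sum_univ_succ, Fin.sum_univ_succ, Fin.sum_univ_succ]
    rw [Finset.sum_eq_zero]
    · simp only [Matrix.of_apply, Fin.cons_zero, Fin.val_zero, pow_zero, one_mul, add_zero,
        Fin.cons_succ, Fin.val_succ, zero_add, pow_one, neg_mul]
      have e1 : ∀ (w1 w2 : Fin (n + 2) → β), w1 = w2 →
          Matrix.det (Matrix.of fun i j => e (r i) (w1 j)) =
          Matrix.det (Matrix.of fun i j => e (r i) (w2 j)) := by
        rintro _ _ rfl; rfl
      rw [sub_eq_add_neg]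
      refine Eq.trans (add_assoc _ _ _).symm ?_
      congr 1
      congr 1
      · congr 2
        refine e1 (fun j => (Fin.cons u (Fin.cons v
          (Fin.cons w q : Fin (n + 1) → β) : Fin (n + 2) → β) : Fin (n + 3) → β)
            ((Fin.succ 0).succAbove j)) _ ?_
        funext l
        refine Fin.cases ?_ (fun l => ?_) l
        · simp
        · simp
      · norm_num
        left
        refine e1 (fun j => (Fin.cons u (Fin.cons v
          (Fin.cons w q : Fin (n + 1) → β) : Fin (n + 2) → β) : Fin (n + 3) → β)
            (Fin.succAbove 2 j)) _ ?_
        have h22 : (2 : Fin (n + 3)) = Fin.succ (Fin.succ 0) := rfl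
        rw [h22]
        funext l
        refine Fin.cases ?_ (fun l => ?_) l
        · rfl
        · refine Fin.cases ?_ (fun l => ?_) l
          · rfl
          · rw [Fin.succ_succAbove_succ, Fin.succ_succAbove_succ, Fin.succAbove_zero]
            rfl
    · intro j _
      simp [h (q j) (List.mem_ofFn.mpr ⟨_, rfl⟩)]
  · rw [listDet_ne _ _ _ (by simpa using hl), listDet_ne _ _ _ (by simpa using hl),
      listDet_ne _ _ _ (by simpa using hl), listDet_ne _ _ _ (by simpa using hl)]
    simp

theorem listDet_two (x : α) (u v : β) (R : List α) (C : List β) (e : α → β → ℂ)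
    (h : ∀ c ∈ C, e x c = 0) :
    listDet (x :: R) (u :: v :: C) e = e x u * listDet R (v :: C) e
      - e x v * listDet R (u :: C) e := by
  by_cases hl : R.length = C.length + 1
  · obtain ⟨r, hr⟩ := exists_ofFn R hl
    obtain ⟨q, hq⟩ := exists_ofFn C rfl
    generalize C.length = n at *
    subst hr hq
    have h1 : x :: List.ofFn r = List.ofFn (Fin.cons x r : Fin (n + 2) → α) := by
      rw [List.ofFn_succ]; simp
    have h2 : ∀ u, u :: List.ofFn q =
        List.ofFn (Fin.cons u q : Fin (n + 1) → β) := by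
      intro u
      rw [List.ofFn_succ]; simp
    have h3 : u :: v :: List.ofFn q = List.ofFn (Fin.cons u (Fin.cons v
        q : Fin (n + 1) → β) : Fin (n + 2) → β) := by
      rw [List.ofFn_succ, List.ofFn_succ]; simp
    rw [h3, h1, h2, h2, listDet_ofFn, listDet_ofFn, listDet_ofFn,
      Matrix.det_succ_row_zero, Fin.sum_univ_succ, Fin.sum_univ_succ]
    rw [Finset.sum_eq_zero]
    · simp only [Matrix.of_apply, Fin.cons_zero, Fin.val_zero, pow_zero, one_mul, add_zero,
        Fin.cons_succ, Fin.val_succ, zero_add, pow_one, neg_mul]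
      have e1 : ∀ (w1 w2 : Fin (n + 1) → β), w1 = w2 →
          Matrix.det (Matrix.of fun i j => e (r i) (w1 j)) =
          Matrix.det (Matrix.of fun i j => e (r i) (w2 j)) := by
        rintro _ _ rfl; rfl
      rw [sub_eq_add_neg]
      congr 1
      congr 2
      refine e1 (fun j => (Fin.cons u (Fin.cons v
          q : Fin (n + 1) → β) : Fin (n + 2) → β)
            ((Fin.succ 0).succAbove j)) _ ?_
      funext l
      refine Fin.cases ?_ (fun l => ?_) l
      · simp
      · simp
    · intro j _
      simp [h (q j) (List.mem_ofFn.mpr ⟨_, rfl⟩)]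
  · rw [listDet_ne _ _ _ (by simpa using hl), listDet_ne _ _ _ (by simpa using hl),
      listDet_ne _ _ _ (by simpa using hl)]
    simp

theorem listDet_eval (R : List α) (C : List β) (e : α → β → ℂ) :
    listDet R C e = listDet (R.map e) C (fun (φ : β → ℂ) c => φ c) := by
  rw [listDet_scale R C e e id (fun (φ : β → ℂ) c => φ c) (fun _ => 1) (fun _ => 1) (by simp)]
  simp

theorem pluecker_1r3c (x : α) (u v w : β) (R : List α) (C : List β) (e : α → β → ℂ) :
    listDet R (u :: C) e * listDet (x :: R) (v :: w :: C) e
      - listDet R (v :: C) e * listDet (x :: R) (u :: w :: C) e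
      + listDet R (w :: C) e * listDet (x :: R) (u :: v :: C) e = 0 := by
  set l : β → ℂ := fun κ => listDet R (κ :: C) e with hl
  have h0 : ∀ c ∈ C, l c = 0 := by
    intro c hc
    rw [hl]
    simp only
    rw [listDet_flip]
    exact listDet_dup _ _ _ _ hc
  have h3 := listDet_three l u v w ((x :: R).map e) C (fun (φ : β → ℂ) c => φ c) h0
  rw [← listDet_eval, ← listDet_eval, ← listDet_eval] at h3
  rw [← h3]
  obtain ⟨k, hk⟩ := listDet_head_expand C R (fun c r => e r c)
  rw [listDet_head_sum Finset.univ k (fun j => e (R.get j)) l _ _ _ (by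
    intro c hc
    rw [← hk c, ← listDet_flip])]
  refine Finset.sum_eq_zero fun j _ => ?_
  rw [listDet_dup, mul_zero]
  exact List.mem_map_of_mem (List.mem_cons_of_mem _ (List.get_mem _ _))

theorem pluecker_2r2c (x y : α) (u v : β) (R : List α) (C : List β) (e : α → β → ℂ) :
    listDet R C e * listDet (y :: x :: R) (u :: v :: C) e =
      listDet (y :: R) (u :: C) e * listDet (x :: R) (v :: C) e
      - listDet (y :: R) (v :: C) e * listDet (x :: R) (u :: C) e := by
  by_cases hlen : R.length = C.length
  swap
  · rw [listDet_ne _ _ _ (by simpa using hlen), listDet_ne (y :: R) _ _ (by simpa using hlen),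
      listDet_ne (y :: R) _ _ (by simpa using hlen)]
    simp
  set l : β → ℂ := fun κ => listDet (y :: R) (κ :: C) e with hl
  have h0 : ∀ c ∈ C, l c = 0 := by
    intro c hc
    rw [hl]
    simp only
    rw [listDet_flip]
    exact listDet_dup _ _ _ _ hc
  have h3 := listDet_two l u v ((x :: R).map e) C (fun (φ : β → ℂ) c => φ c) h0
  rw [← listDet_eval, ← listDet_eval] at h3
  rw [← h3]
  have hexp : ∃ k : Fin R.length → ℂ, ∀ c, l c = listDet R C e * e y c + ∑ j, k j * e (R.get j) c := by
    obtain ⟨n, hCn⟩ : ∃ n, C.length = n := ⟨_, rfl⟩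
    obtain ⟨r, hr⟩ := exists_ofFn R (hlen.trans hCn)
    obtain ⟨q, hq⟩ := exists_ofFn C hCn
    subst hr hq
    have hn : (List.ofFn r).length = n := by simp
    have h1 : ∀ c, c :: List.ofFn q = List.ofFn (Fin.cons c q : Fin (n + 1) → β) := by
      intro c; rw [List.ofFn_succ]; simp
    have h2 : y :: List.ofFn r = List.ofFn (Fin.cons y r : Fin (n + 1) → α) := by
      rw [List.ofFn_succ]; simp
    refine ⟨fun j => (-1) ^ ((j : ℕ) + 1) * Matrix.det (Matrix.of fun (i : Fin n) (l : Fin n) =>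
          e ((Fin.cons y r : Fin (n + 1) → α) ((j.cast hn).succ.succAbove i)) (q l)), fun c => ?_⟩
    rw [hl]
    simp only
    rw [h1, h2, listDet_ofFn, listDet_ofFn, Matrix.det_succ_column_zero, Fin.sum_univ_succ]
    congr 1
    · simp only [Matrix.of_apply, Fin.cons_zero, Fin.val_zero, pow_zero, one_mul]
      rw [mul_comm]
      rfl
    · rw [← (finCongr hn).sum_comp]
      refine Finset.sum_congr rfl fun j _ => ?_
      simp only [Matrix.of_apply, Fin.cons_zero, finCongr_apply, Fin.val_cast, Fin.val_succ,
        Fin.cons_succ]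
      rw [show (List.ofFn r).get j = r (Fin.cast hn j) by
      rw [List.get_eq_getElem, List.getElem_ofFn]; rfl]
      rw [mul_right_comm]
      congr 2
  obtain ⟨k, hk⟩ := hexp
  rw [listDet_head_sum Finset.univ (fun o : Option (Fin R.length) => match o with
      | none => listDet R C e
      | some j => k j) (fun o => match o with
      | none => e y
      | some j => e (R.get j)) l _ _ _ (by
    intro c hc
    rw [Fintype.sum_option]
    exact hk c)]
  rw [Fintype.sum_option, Finset.sum_eq_zero]
  · simp only [add_zero]
    rw [listDet_eval (y :: x :: R)]
    rfl
  · intro j _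
    simp only
    rw [listDet_dup, mul_zero]
    exact List.mem_map_of_mem (List.mem_cons_of_mem _ (List.get_mem _ _))

theorem pluecker_3r1c (x : β) (u v w : α) (R : List β) (C : List α) (e : α → β → ℂ) :
    listDet (u :: C) R e * listDet (v :: w :: C) (x :: R) e
      - listDet (v :: C) R e * listDet (u :: w :: C) (x :: R) e
      + listDet (w :: C) R e * listDet (u :: v :: C) (x :: R) e = 0 := by
  have := pluecker_1r3c x u v w R C (fun c r => e r c)
  simpa only [← listDet_flip (α := α) (β := β)] using this

end Pluecker

/-! ### Integer segments -/

/-- The half-open integer interval `(a, b]` as a list. -/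
def iv (a b : ℤ) : List ℤ := seg (a + 1) b

theorem seg_def (a b : ℤ) :
    seg a b = (List.range (b - a + 1).toNat).map (fun k : ℕ => a + (k : ℤ)) := by
  unfold seg
  induction List.range (b - a + 1).toNat with
  | nil => rfl
  | cons x L ih => exact congrArg (List.cons (a + (x : ℤ))) ih

theorem seg_eq_iv (a b : ℤ) : seg a b = iv (a - 1) b := by
  unfold iv
  rw [sub_add_cancel]

theorem iv_nil {a b : ℤ} (h : b ≤ a) : iv a b = [] := by
  unfold iv
  simp only [seg_def]
  rw [show (b - (a + 1) + 1).toNat = 0 by omega]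
  rfl

theorem length_iv (a b : ℤ) : (iv a b).length = (b - a).toNat := by
  unfold iv
  simp only [seg_def]
  rw [List.length_map, List.length_range]
  congr 1
  ring

theorem mem_iv {a b i : ℤ} : i ∈ iv a b ↔ a < i ∧ i ≤ b := by
  unfold iv
  simp only [seg_def]
  simp only [List.mem_map, List.mem_range]
  constructor
  · rintro ⟨k, hk, rfl⟩
    omega
  · rintro ⟨h1, h2⟩
    exact ⟨(i - a - 1).toNat, by omega, by omega⟩

theorem iv_cons {a b : ℤ} (h : a < b) : iv a b = (a + 1) :: iv (a + 1) b := by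
  unfold iv
  simp only [seg_def]
  rw [show (b - (a + 1) + 1).toNat = (b - (a + 1 + 1) + 1).toNat + 1 by omega,
    List.range_succ_eq_map, List.map_cons, List.map_map]
  simp only [Nat.cast_zero, add_zero, List.cons.injEq, true_and]
  apply List.map_congr_left
  intro k _
  simp only [Function.comp, Nat.succ_eq_add_one, Nat.cast_add, Nat.cast_one]
  ring

theorem iv_snoc {a b : ℤ} (h : a ≤ b) : iv a (b + 1) = iv a b ++ [b + 1] := by
  unfold iv
  simp only [seg_def]
  rw [show (b + 1 - (a + 1) + 1).toNat = (b - (a + 1) + 1).toNat + 1 by omega,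
    List.range_succ, List.map_append]
  simp only [List.map_cons, List.map_nil]
  congr 2
  omega

theorem iv_shift (k a b : ℤ) : (iv a b).map (fun j => k + j) = iv (k + a) (k + b) := by
  unfold iv
  simp only [seg_def]
  rw [List.map_map, show b - (a + 1) + 1 = k + b - (k + a + 1) + 1 by ring]
  apply List.map_congr_left
  intro j _
  simp only [Function.comp]
  ring

theorem iv_reflect (k a b : ℤ) : (iv a b).map (fun j => k - j + 1) = (iv (k - b) (k - a)).reverse := by
  by_cases hab : b ≤ a
  · rw [iv_nil hab, iv_nil (by omega)]; rfl
  · apply List.ext_getElem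
    · simp only [List.length_map, List.length_reverse, length_iv]
      congr 1; ring
    · intro i h1 h2
      simp only [List.length_map, length_iv] at h1
      simp only [List.getElem_map, List.getElem_reverse, length_iv]
      unfold iv
      simp only [seg_def]
      simp only [List.getElem_map, List.getElem_range]
      omega

/-! ### The gadget -/

theorem gadget {α β : Type*} (E : ℤ → α → β → ℂ) (P : ℤ → α) (T : ℤ → β) (R0 : List α)
    (C0 : List β) (π : ℂ) (hπ : π * π = 1) (N p h : ℤ) (hNp : N ≤ p) (hNh : N ≤ h)
    (hPT : ∀ i j j', E i (P j) (T j') = if j = j' then π else 0)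
    (hP : ∀ i j, ∀ c ∈ C0, E (i + 1) (P j) c = E i (P j) c)
    (hT : ∀ i j, ∀ r ∈ R0, E (i + 1) r (T j) = E i r (T j))
    (hR : ∀ i, ∀ r ∈ R0, ∀ c ∈ C0,
      E (i + 1) r c = E i r c - π * E i r (T (i + 1)) * E i (P (i + 1)) c)
    (hRT : ∀ i j, E i (P j) (T j) = π) :
    listDet ((iv N p).map P ++ R0) ((iv N h).map T ++ C0) (E N) =
      π ^ (min p h - N).toNat *
        listDet ((iv h p).map P ++ R0) ((iv p h).map T ++ C0) (E p) := by
  classical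
  -- the pivots
  have key : ∀ l : ℕ, ∀ N : ℤ, N + l = min p h →
      listDet ((iv N p).map P ++ R0) ((iv N h).map T ++ C0) (E N) =
      π ^ l * listDet ((iv (N + l) p).map P ++ R0) ((iv (N + l) h).map T ++ C0) (E (N + l)) := by
    intro l
    induction l with
    | zero => intro N _; simp
    | succ l ih =>
      intro N hN
      push_cast at hN
      rw [iv_cons (show N < p by omega), iv_cons (show N < h by omega)]
      simp only [List.map_cons, List.cons_append]
      rw [listDet_pivot _ _ _ _ (E N) (E (N + 1)) π hπ (hRT _ _), ih (N + 1) (by omega)]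
      · push_cast
        rw [show N + (l + 1 : ℤ) = N + 1 + l by ring, pow_succ]
        ring
      · intro r hr c hc
        rw [List.mem_append, List.mem_map] at hr hc
        rcases hr with ⟨i, hi, rfl⟩ | hr
        · rw [mem_iv] at hi
          rw [hPT N i (N + 1), if_neg (by omega)]
          rcases hc with ⟨j, hj, rfl⟩ | hc
          · rw [hPT, hPT]; ring
          · rw [hP _ _ c hc]; ring
        · rcases hc with ⟨j, hj, rfl⟩ | hc
          · rw [mem_iv] at hj
            rw [hT _ _ r hr, hPT, if_neg (by omega)]; ring
          · exact hR _ r hr c hc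
  have h1 := key (min p h - N).toNat N (by omega)
  rw [h1]
  rw [show N + ((min p h - N).toNat : ℤ) = min p h by omega]
  congr 1
  rcases le_total p h with hph | hph
  · rw [min_eq_left hph, iv_nil hph, iv_nil (le_refl p)]
  · rw [min_eq_right hph, iv_nil hph, iv_nil (le_refl h)]
    simp only [List.map_nil, List.nil_append]
    have key2 : ∀ l : ℕ, h + l ≤ p → listDet ((iv h p).map P ++ R0) C0 (E (h + l)) =
        listDet ((iv h p).map P ++ R0) C0 (E h) := by
      intro l
      induction l with
      | zero => simp
      | succ l ih =>
        intro hl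
        push_cast at hl
        rw [← ih (by omega)]
        push_cast
        rw [← add_assoc]
        refine listDet_rowop _ _ _ _ (P (h + l + 1)) ?_
          (fun r => if r ∈ (iv h p).map P then 0 else - π * E (h + l) r (T (h + l + 1))) ?_ ?_
        · rw [List.mem_append]
          left
          exact List.mem_map_of_mem (mem_iv.mpr (by omega))
        · rw [if_pos]
          exact List.mem_map_of_mem (mem_iv.mpr (by omega))
        · intro r hr c hc
          split_ifs with hr'
          · rw [List.mem_map] at hr'
            obtain ⟨j, _, rfl⟩ := hr'
            rw [hP _ _ c hc]; ring
          · rw [List.mem_append] at hr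
            rw [hR _ r (by tauto) c hc]; ring
    have := key2 (p - h).toNat (by omega)
    rw [show h + ((p - h).toNat : ℤ) = p by omega] at this
    rw [this]

/-! ### Universal keys -/

/-- Row labels. -/
inductive RowK (ι : Type*) where
  | b1 : ι → RowK ι
  | b2 : ι → RowK ι
  | P1 : ℤ → RowK ι
  | P2 : ℤ → RowK ι
  | D : ℤ → RowK ι
  | R : ℤ → RowK ι

/-- Column labels. -/
inductive ColK (ι : Type*) where
  | F : ι → ColK ι
  | S : ℤ → ColK ι
  | T1 : ℤ → ColK ι
  | T2 : ℤ → ColK ι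

/-- Minus the Kronecker symbol. -/
noncomputable def mdel (i j : ℤ) : ℂ := if i = j then -1 else 0

/-- Entries of the universal determinant. -/
noncomputable def ent {ι : Type*} (X : ℤ → ι → ι → ℂ) (c r : ℤ → ι → ℂ) (x1 x2 : ℤ) :
    RowK ι → ColK ι → ℂ
  | .b1 b, .F f => X x1 b f
  | .b1 b, .S j => c j b
  | .b1 b, .T1 j => c j b
  | .b1 _, .T2 _ => 0
  | .b2 b, .F f => X x2 b f
  | .b2 b, .S j => c j b
  | .b2 _, .T1 _ => 0
  | .b2 b, .T2 j => c j b
  | .P1 i, .F f => r i f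
  | .P1 i, .S j => mdel i j
  | .P1 i, .T1 j => mdel i j
  | .P1 _, .T2 _ => 0
  | .P2 i, .F f => r i f
  | .P2 i, .S j => mdel i j
  | .P2 _, .T1 _ => 0
  | .P2 i, .T2 j => mdel i j
  | .D _, .F _ => 0
  | .D _, .S _ => 0
  | .D i, .T1 j => mdel i j
  | .D i, .T2 j => - mdel i j
  | .R i, .F f => r i f
  | .R _, .S _ => 0
  | .R _, .T1 _ => 0
  | .R _, .T2 _ => 0

section Regimes

variable {ι : Type*} (X : ℤ → ι → ι → ℂ) (c r : ℤ → ι → ℂ) (B1 B2 F : List ι)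

/-- The bosonic rows. -/
def rowsB (B1 B2 : List ι) : List (RowK ι) := B1.map RowK.b1 ++ B2.map RowK.b2

/-- The big determinant. -/
noncomputable def Mdet (N p q t h : ℤ) : ℂ :=
  listDet ((iv N p).map RowK.P1 ++ ((iv N q).map RowK.D ++ rowsB B1 B2))
    ((iv N h).map ColK.T1 ++ ((iv N t).map ColK.S ++ F.map ColK.F)) (ent X c r N N)

/-- The regional determinants, in gauge-fixed form. -/
noncomputable def Ndet (R S T1 T2 : List ℤ) (x1 x2 : ℤ) : ℂ :=
  listDet (rowsB B1 B2 ++ R.map RowK.R)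
    (F.map ColK.F ++ (S.map ColK.S ++ (T1.map ColK.T1 ++ T2.map ColK.T2))) (ent X c r x1 x2)

theorem mem_rowsB {B1 B2 : List ι} {x : RowK ι} (h : x ∈ rowsB B1 B2) :
    (∃ b ∈ B1 ++ B2, x = RowK.b1 b) ∨ (∃ b ∈ B1 ++ B2, x = RowK.b2 b) := by
  unfold rowsB at h
  simp only [List.mem_append, List.mem_map] at h ⊢
  rcases h with ⟨b, hb, rfl⟩ | ⟨b, hb, rfl⟩
  · exact Or.inl ⟨b, Or.inl hb, rfl⟩
  · exact Or.inr ⟨b, Or.inr hb, rfl⟩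

theorem length_rowsB (B1 B2 : List ι) : (rowsB B1 B2).length = B1.length + B2.length := by
  simp [rowsB]

/-- The recursion encoding the fermionic QQ-relation. -/
def Xrec : Prop := ∀ k : ℤ, ∀ b ∈ B1 ++ B2, ∀ f ∈ F,
  X (k + 1) b f = X k b f + c (k + 1) b * r (k + 1) f

/-- Relabelling the auxiliary rows as `R` rows. -/
def toR : RowK ι → RowK ι
  | .b1 b => .b1 b
  | .b2 b => .b2 b
  | .P1 i => .R i
  | .P2 i => .R i
  | .D i => .R i
  | .R i => .R i

theorem toR_rowsB (B1 B2 : List ι) : (rowsB B1 B2).map toR = rowsB B1 B2 := by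
  simp [rowsB, toR, Function.comp_def]

theorem neg_one_pow_sgn (n : ℕ) : (-1 : ℂ) ^ n = sgn (n : ZMod 2) := (sgn_natCast n).symm

end Regimes

/-! ### Evaluation of the big determinant in the three regimes -/

section RegimeThms

theorem listDet_relabel {α β : Type*} (R : List α) (C : List β) (e : α → β → ℂ) (f : α → α)
    (h : ∀ r ∈ R, ∀ c ∈ C, e r c = e (f r) c) : listDet R C e = listDet (R.map f) C e := by
  rw [listDet_scale R C e f id e (fun _ => 1) (fun _ => 1) (by simpa using h)]
  simp

variable {ι : Type*} (X : ℤ → ι → ι → ℂ) (c r : ℤ → ι → ℂ) (B1 B2 F : List ι)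

theorem ent_P2_eq_P1 (x1 x2 i : ℤ) (y : ColK ι) :
    ent X c r x1 x2 (.P2 i) y = 1 * ent X c r x1 x2 (.P1 i) y + (-1) * ent X c r x1 x2 (.D i) y := by
  cases y <;> simp [ent]

theorem ent_P2_eq_D (x1 x2 i : ℤ) (y : ColK ι) :
    ent X c r x1 x2 (.P2 i) y = (-1) * ent X c r x1 x2 (.D i) y + 1 * ent X c r x1 x2 (.P1 i) y := by
  cases y <;> simp [ent]

theorem ent_T2_eq_S (x1 x2 i : ℤ) (y : RowK ι) :
    ent X c r x1 x2 y (.T2 i) = 1 * ent X c r x1 x2 y (.S i) + (-1) * ent X c r x1 x2 y (.T1 i) := by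
  cases y <;> simp [ent]

theorem ent_T2_eq_T1 (x1 x2 i : ℤ) (y : RowK ι) :
    ent X c r x1 x2 y (.T2 i) = (-1) * ent X c r x1 x2 y (.T1 i) + 1 * ent X c r x1 x2 y (.S i) := by
  cases y <;> simp [ent]

/-- Regime A. -/
theorem regimeA (hX : Xrec X c r B1 B2 F) (N p q t h : ℤ) (hp : N ≤ p) (hq : N ≤ q) (ht : N ≤ t)
    (hh : N ≤ h) (hqp : q ≤ p) (hth : t ≤ h) :
    Mdet X c r B1 B2 F N p q t h =
      (sgn ((q - N).toNat : ZMod 2) * sgn ((min p h - N).toNat : ZMod 2) *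
        sgn ((min q t - N).toNat : ZMod 2) *
        sgn (((p - h).toNat : ZMod 2) * ((q - N).toNat + (q - t).toNat)) *
        sgn (((h - p).toNat : ZMod 2) * ((t - N).toNat + (t - q).toNat)) *
        sgn ((((p - h).toNat : ZMod 2) + (q - t).toNat) * (B1.length + B2.length)) *
        sgn ((((h - p).toNat : ZMod 2) + (t - q).toNat) * F.length)) *
      Ndet X c r B1 B2 F (iv h p ++ iv t q) [] (iv p h) (iv q t) p q := by
  have s1 : listDet ((iv N p).map RowK.P1 ++ ((iv N q).map RowK.P2 ++ rowsB B1 B2))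
      ((iv N h).map ColK.T1 ++ ((iv N t).map ColK.T2 ++ F.map ColK.F)) (ent X c r N N) =
      sgn ((q - N).toNat : ZMod 2) * Mdet X c r B1 B2 F N p q t h := by
    rw [listDet_replace (iv N q) RowK.D RowK.P2 RowK.P1 _ _ _ _ (-1) 1
      (fun i hi => List.mem_append_left _ (List.mem_map_of_mem (mem_iv.mpr (by
        rw [mem_iv] at hi; omega)))) (fun i _ y _ => ent_P2_eq_D X c r N N i y),
      listDet_replace_col (iv N t) ColK.S ColK.T2 ColK.T1 _ _ _ _ 1 (-1)
      (fun i hi => List.mem_append_left _ (List.mem_map_of_mem (mem_iv.mpr (by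
        rw [mem_iv] at hi; omega)))) (fun i _ y _ => ent_T2_eq_S X c r N N i y),
      neg_one_pow_sgn, length_iv, one_pow, one_mul]
    rfl
  have s2 := gadget (fun i => ent X c r i N) RowK.P1 ColK.T1 ((iv N q).map RowK.P2 ++ rowsB B1 B2)
    ((iv N t).map ColK.T2 ++ F.map ColK.F) (-1) (by ring) N p h hp hh
    (by intro i j j'; rfl)
    (by
      intro i j y hy
      rw [List.mem_append, List.mem_map, List.mem_map] at hy
      rcases hy with ⟨l, _, rfl⟩ | ⟨f, _, rfl⟩ <;> rfl)
    (by
      intro i j y hy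
      rw [List.mem_append, List.mem_map] at hy
      rcases hy with ⟨l, _, rfl⟩ | hy
      · rfl
      · rcases mem_rowsB hy with ⟨b, _, rfl⟩ | ⟨b, _, rfl⟩ <;> rfl)
    (by
      intro i y hy y' hy'
      rw [List.mem_append, List.mem_map] at hy
      rw [List.mem_append, List.mem_map, List.mem_map] at hy'
      rcases hy with ⟨l, _, rfl⟩ | hy
      · rcases hy' with ⟨l', _, rfl⟩ | ⟨f, _, rfl⟩ <;> simp [ent]
      · rcases mem_rowsB hy with ⟨b, hb, rfl⟩ | ⟨b, hb, rfl⟩ <;>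
          rcases hy' with ⟨l', _, rfl⟩ | ⟨f, hf, rfl⟩ <;> simp [ent]
        rw [hX i b hb f hf])
    (by intro i j; simp [ent, mdel])
  have s3 := listDet_block [] ((iv h p).map RowK.P1) ((iv N q).map RowK.P2) (rowsB B1 B2)
    ((iv p h).map ColK.T1 ++ ((iv N t).map ColK.T2 ++ F.map ColK.F)) (ent X c r p N)
  have s4 := listDet_block_col ((iv N q).map RowK.P2 ++ ((iv h p).map RowK.P1 ++ rowsB B1 B2)) []
    ((iv p h).map ColK.T1) ((iv N t).map ColK.T2) (F.map ColK.F) (ent X c r p N)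
  have s5 := gadget (fun i => ent X c r p i) RowK.P2 ColK.T2 ((iv h p).map RowK.P1 ++ rowsB B1 B2)
    ((iv p h).map ColK.T1 ++ F.map ColK.F) (-1) (by ring) N q t hq ht
    (by intro i j j'; rfl)
    (by
      intro i j y hy
      rw [List.mem_append, List.mem_map, List.mem_map] at hy
      rcases hy with ⟨l, _, rfl⟩ | ⟨f, _, rfl⟩ <;> rfl)
    (by
      intro i j y hy
      rw [List.mem_append, List.mem_map] at hy
      rcases hy with ⟨l, _, rfl⟩ | hy
      · rfl
      · rcases mem_rowsB hy with ⟨b, _, rfl⟩ | ⟨b, _, rfl⟩ <;> rfl)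
    (by
      intro i y hy y' hy'
      rw [List.mem_append, List.mem_map] at hy
      rw [List.mem_append, List.mem_map, List.mem_map] at hy'
      rcases hy with ⟨l, _, rfl⟩ | hy
      · rcases hy' with ⟨l', _, rfl⟩ | ⟨f, _, rfl⟩ <;> simp [ent]
      · rcases mem_rowsB hy with ⟨b, hb, rfl⟩ | ⟨b, hb, rfl⟩ <;>
          rcases hy' with ⟨l', _, rfl⟩ | ⟨f, hf, rfl⟩ <;> simp [ent]
        rw [hX i b hb f hf])
    (by intro i j; simp [ent, mdel])
  have s6 := listDet_block [] ((iv t q).map RowK.P2) ((iv h p).map RowK.P1) (rowsB B1 B2)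
    ((iv q t).map ColK.T2 ++ ((iv p h).map ColK.T1 ++ F.map ColK.F)) (ent X c r p q)
  have s7 := listDet_block_col ((iv h p).map RowK.P1 ++ ((iv t q).map RowK.P2 ++ rowsB B1 B2)) []
    ((iv q t).map ColK.T2) ((iv p h).map ColK.T1) (F.map ColK.F) (ent X c r p q)
  have s8 := listDet_block [] ((iv h p).map RowK.P1 ++ (iv t q).map RowK.P2) (rowsB B1 B2) []
    ((iv p h).map ColK.T1 ++ ((iv q t).map ColK.T2 ++ F.map ColK.F)) (ent X c r p q)
  have s9 := listDet_block_col (rowsB B1 B2 ++ ((iv h p).map RowK.P1 ++ (iv t q).map RowK.P2)) []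
    ((iv p h).map ColK.T1 ++ (iv q t).map ColK.T2) (F.map ColK.F) [] (ent X c r p q)
  have s10 : listDet (rowsB B1 B2 ++ ((iv h p).map RowK.P1 ++ (iv t q).map RowK.P2))
      (F.map ColK.F ++ ((iv p h).map ColK.T1 ++ (iv q t).map ColK.T2)) (ent X c r p q) =
      Ndet X c r B1 B2 F (iv h p ++ iv t q) [] (iv p h) (iv q t) p q := by
    rw [listDet_relabel _ _ _ toR (by
      intro y hy y' hy'
      rw [List.mem_append, List.mem_append, List.mem_map, List.mem_map] at hy
      rw [List.mem_append, List.mem_append, List.mem_map, List.mem_map, List.mem_map] at hy'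
      rcases hy with hy | ⟨l, hl, rfl⟩ | ⟨l, hl, rfl⟩
      · rcases mem_rowsB hy with ⟨b, hb, rfl⟩ | ⟨b, hb, rfl⟩ <;> simp [toR]
      · rw [mem_iv] at hl
        rcases hy' with ⟨f, _, rfl⟩ | ⟨l', hl', rfl⟩ | ⟨l', hl', rfl⟩ <;> simp [toR, ent, mdel]
        rw [mem_iv] at hl'
        omega
      · rw [mem_iv] at hl
        rcases hy' with ⟨f, _, rfl⟩ | ⟨l', hl', rfl⟩ | ⟨l', hl', rfl⟩ <;> simp [toR, ent, mdel]
        rw [mem_iv] at hl'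
        omega)]
    rw [List.map_append (l₁ := rowsB B1 B2), List.map_append (f := toR), toR_rowsB]
    simp only [List.map_map]
    unfold Ndet
    rw [List.map_append, List.map_nil, List.nil_append]
    rfl
  simp only [List.nil_append, List.append_nil, List.append_assoc, List.length_append, List.length_map,
    length_iv, length_rowsB, neg_one_pow_sgn, Nat.cast_add] at s2 s3 s4 s5 s6 s7 s8 s9
  rw [← s10]
  have s1' : Mdet X c r B1 B2 F N p q t h = sgn ((q - N).toNat : ZMod 2) *
      listDet ((iv N p).map RowK.P1 ++ ((iv N q).map RowK.P2 ++ rowsB B1 B2))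
      ((iv N h).map ColK.T1 ++ ((iv N t).map ColK.T2 ++ F.map ColK.F)) (ent X c r N N) := by
    rw [s1, ← mul_assoc, sgn_sq, one_mul]
  rw [s1', s2, s3, s4, s5, s6, s7, s8, s9]
  simp only [sgn_add, mul_add, add_mul]
  rw [mul_comm ((t - q).toNat : ZMod 2) ((h - p).toNat : ZMod 2),
    mul_comm ((q - t).toNat : ZMod 2) ((p - h).toNat : ZMod 2)]
  ring

/-- Regime B. -/
theorem regimeB (hX : Xrec X c r B1 B2 F) (N p q t h : ℤ) (hp : N ≤ p) (hq : N ≤ q) (ht : N ≤ t)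
    (hh : N ≤ h) (hpq : p ≤ q) (hqh : q ≤ h) :
    Mdet X c r B1 B2 F N p q t h =
      (sgn (((h - N).toNat : ZMod 2) * (t - N).toNat) * sgn ((min p t - N).toNat : ZMod 2) *
        sgn (((p - t).toNat : ZMod 2) * (q - N).toNat) *
        sgn (((t - p).toNat : ZMod 2) * (h - N).toNat) *
        sgn ((q - N).toNat : ZMod 2) *
        sgn (((p - t).toNat : ZMod 2) * (B1.length + B2.length)) *
        sgn (((h - q).toNat : ZMod 2) * (t - p).toNat) *
        sgn ((((h - q).toNat : ZMod 2) + (t - p).toNat) * F.length)) *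
      Ndet X c r B1 B2 F (iv t p) (iv p t) (iv q h) [] p p := by
  have s1 : listDet ((iv N p).map RowK.P2 ++ ((iv N q).map RowK.D ++ rowsB B1 B2))
      ((iv N h).map ColK.T1 ++ ((iv N t).map ColK.S ++ F.map ColK.F)) (ent X c r N N) =
      Mdet X c r B1 B2 F N p q t h := by
    have := listDet_replace (iv N p) RowK.P1 RowK.P2 RowK.D [] ((iv N q).map RowK.D ++ rowsB B1 B2)
      ((iv N h).map ColK.T1 ++ ((iv N t).map ColK.S ++ F.map ColK.F)) (ent X c r N N) 1 (-1)
      (fun i hi => List.mem_append_right _ (List.mem_append_left _ (List.mem_map_of_mem (mem_iv.mpr (by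
        rw [mem_iv] at hi; omega))))) (fun i _ y _ => ent_P2_eq_P1 X c r N N i y)
    simp only [List.nil_append, one_pow, one_mul] at this
    exact this
  have s2 := listDet_block_col ((iv N p).map RowK.P2 ++ ((iv N q).map RowK.D ++ rowsB B1 B2)) []
    ((iv N h).map ColK.T1) ((iv N t).map ColK.S) (F.map ColK.F) (ent X c r N N)
  have s3 := gadget (fun i => ent X c r i i) RowK.P2 ColK.S ((iv N q).map RowK.D ++ rowsB B1 B2)
    ((iv N h).map ColK.T1 ++ F.map ColK.F) (-1) (by ring) N p t hp ht
    (by intro i j j'; rfl)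
    (by
      intro i j y hy
      rw [List.mem_append, List.mem_map, List.mem_map] at hy
      rcases hy with ⟨l, _, rfl⟩ | ⟨f, _, rfl⟩ <;> rfl)
    (by
      intro i j y hy
      rw [List.mem_append, List.mem_map] at hy
      rcases hy with ⟨l, _, rfl⟩ | hy
      · rfl
      · rcases mem_rowsB hy with ⟨b, _, rfl⟩ | ⟨b, _, rfl⟩ <;> rfl)
    (by
      intro i y hy y' hy'
      rw [List.mem_append, List.mem_map] at hy
      rw [List.mem_append, List.mem_map, List.mem_map] at hy'
      rcases hy with ⟨l, _, rfl⟩ | hy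
      · rcases hy' with ⟨l', _, rfl⟩ | ⟨f, _, rfl⟩ <;> simp [ent]
      · rcases mem_rowsB hy with ⟨b, hb, rfl⟩ | ⟨b, hb, rfl⟩ <;>
          rcases hy' with ⟨l', _, rfl⟩ | ⟨f, hf, rfl⟩ <;> simp [ent] <;> rw [hX i b hb f hf])
    (by intro i j; simp [ent, mdel])
  have s4 := listDet_block [] ((iv t p).map RowK.P2) ((iv N q).map RowK.D) (rowsB B1 B2)
    ((iv p t).map ColK.S ++ ((iv N h).map ColK.T1 ++ F.map ColK.F)) (ent X c r p p)
  have s5 := listDet_block_col ((iv N q).map RowK.D ++ ((iv t p).map RowK.P2 ++ rowsB B1 B2)) []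
    ((iv p t).map ColK.S) ((iv N h).map ColK.T1) (F.map ColK.F) (ent X c r p p)
  have s6 := gadget (fun _ => ent X c r p p) RowK.D ColK.T1 ((iv t p).map RowK.P2 ++ rowsB B1 B2)
    ((iv p t).map ColK.S ++ F.map ColK.F) (-1) (by ring) N q h hq hh
    (by intro i j j'; rfl)
    (fun _ _ _ _ => rfl) (fun _ _ _ _ => rfl)
    (by
      intro i y hy y' hy'
      rw [List.mem_append, List.mem_map, List.mem_map] at hy'
      rcases hy' with ⟨l', _, rfl⟩ | ⟨f, _, rfl⟩ <;> simp [ent])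
    (by intro i j; simp [ent, mdel])
  rw [iv_nil hqh, min_eq_left hqh] at s6
  have s7 := listDet_block [] ((iv t p).map RowK.P2) (rowsB B1 B2) []
    ((iv q h).map ColK.T1 ++ ((iv p t).map ColK.S ++ F.map ColK.F)) (ent X c r p p)
  have s8 := listDet_block_col (rowsB B1 B2 ++ (iv t p).map RowK.P2) []
    ((iv q h).map ColK.T1) ((iv p t).map ColK.S) (F.map ColK.F) (ent X c r p p)
  have s9 := listDet_block_col (rowsB B1 B2 ++ (iv t p).map RowK.P2) []
    ((iv p t).map ColK.S ++ (iv q h).map ColK.T1) (F.map ColK.F) [] (ent X c r p p)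
  have s10 : listDet (rowsB B1 B2 ++ (iv t p).map RowK.P2)
      (F.map ColK.F ++ ((iv p t).map ColK.S ++ (iv q h).map ColK.T1)) (ent X c r p p) =
      Ndet X c r B1 B2 F (iv t p) (iv p t) (iv q h) [] p p := by
    rw [listDet_relabel _ _ _ toR (by
      intro y hy y' hy'
      rw [List.mem_append, List.mem_map] at hy
      rw [List.mem_append, List.mem_append, List.mem_map, List.mem_map, List.mem_map] at hy'
      rcases hy with hy | ⟨l, hl, rfl⟩
      · rcases mem_rowsB hy with ⟨b, hb, rfl⟩ | ⟨b, hb, rfl⟩ <;> simp [toR]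
      · rw [mem_iv] at hl
        rcases hy' with ⟨f, _, rfl⟩ | ⟨l', hl', rfl⟩ | ⟨l', hl', rfl⟩ <;> simp [toR, ent, mdel]
        rw [mem_iv] at hl'
        omega)]
    rw [List.map_append (l₁ := rowsB B1 B2), toR_rowsB]
    simp only [List.map_map]
    unfold Ndet
    rw [List.map_nil, List.append_nil]
    rfl
  simp only [List.nil_append, List.append_nil, List.append_assoc, List.length_append, List.length_map,
    length_iv, length_rowsB, neg_one_pow_sgn, Nat.cast_add, List.map_nil] at s2 s3 s4 s5 s6 s7 s8 s9
  rw [← s10, ← s1, s2, s3, s4, s5, s6, s7, s8, s9]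
  simp only [sgn_add, mul_add, add_mul]
  ring

/-- Regime C. -/
theorem regimeC (hX : Xrec X c r B1 B2 F) (N p q t h : ℤ) (hp : N ≤ p) (hq : N ≤ q) (ht : N ≤ t)
    (hh : N ≤ h) (hht : h ≤ t) (hqh : q ≤ h) :
    Mdet X c r B1 B2 F N p q t h =
      (sgn ((h - N).toNat : ZMod 2) *
        sgn (((h - N).toNat : ZMod 2) * (t - N).toNat) * sgn ((min p t - N).toNat : ZMod 2) *
        sgn (((p - t).toNat : ZMod 2) * (q - N).toNat) *
        sgn (((t - p).toNat : ZMod 2) * (h - N).toNat) *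
        sgn (((p - t).toNat : ZMod 2) * (B1.length + B2.length)) *
        sgn (((h - q).toNat : ZMod 2) * (t - p).toNat) *
        sgn ((((h - q).toNat : ZMod 2) + (t - p).toNat) * F.length)) *
      Ndet X c r B1 B2 F (iv t p) (iv p t) [] (iv q h) p p := by
  have s1 : listDet ((iv N p).map RowK.P1 ++ ((iv N q).map RowK.D ++ rowsB B1 B2))
      ((iv N h).map ColK.T2 ++ ((iv N t).map ColK.S ++ F.map ColK.F)) (ent X c r N N) =
      sgn ((h - N).toNat : ZMod 2) * Mdet X c r B1 B2 F N p q t h := by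
    have := listDet_replace_col (iv N h) ColK.T1 ColK.T2 ColK.S []
      ((iv N t).map ColK.S ++ F.map ColK.F)
      ((iv N p).map RowK.P1 ++ ((iv N q).map RowK.D ++ rowsB B1 B2)) (ent X c r N N) (-1) 1
      (fun i hi => List.mem_append_right _ (List.mem_append_left _ (List.mem_map_of_mem (mem_iv.mpr (by
        rw [mem_iv] at hi; omega))))) (fun i _ y _ => ent_T2_eq_T1 X c r N N i y)
    simp only [List.nil_append, neg_one_pow_sgn, length_iv] at this
    exact this
  have s2 := listDet_block_col ((iv N p).map RowK.P1 ++ ((iv N q).map RowK.D ++ rowsB B1 B2)) []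
    ((iv N h).map ColK.T2) ((iv N t).map ColK.S) (F.map ColK.F) (ent X c r N N)
  have s3 := gadget (fun i => ent X c r i i) RowK.P1 ColK.S ((iv N q).map RowK.D ++ rowsB B1 B2)
    ((iv N h).map ColK.T2 ++ F.map ColK.F) (-1) (by ring) N p t hp ht
    (by intro i j j'; rfl)
    (by
      intro i j y hy
      rw [List.mem_append, List.mem_map, List.mem_map] at hy
      rcases hy with ⟨l, _, rfl⟩ | ⟨f, _, rfl⟩ <;> rfl)
    (by
      intro i j y hy
      rw [List.mem_append, List.mem_map] at hy
      rcases hy with ⟨l, _, rfl⟩ | hy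
      · rfl
      · rcases mem_rowsB hy with ⟨b, _, rfl⟩ | ⟨b, _, rfl⟩ <;> rfl)
    (by
      intro i y hy y' hy'
      rw [List.mem_append, List.mem_map] at hy
      rw [List.mem_append, List.mem_map, List.mem_map] at hy'
      rcases hy with ⟨l, _, rfl⟩ | hy
      · rcases hy' with ⟨l', _, rfl⟩ | ⟨f, _, rfl⟩ <;> simp [ent]
      · rcases mem_rowsB hy with ⟨b, hb, rfl⟩ | ⟨b, hb, rfl⟩ <;>
          rcases hy' with ⟨l', _, rfl⟩ | ⟨f, hf, rfl⟩ <;> simp [ent] <;> rw [hX i b hb f hf])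
    (by intro i j; simp [ent, mdel])
  have s4 := listDet_block [] ((iv t p).map RowK.P1) ((iv N q).map RowK.D) (rowsB B1 B2)
    ((iv p t).map ColK.S ++ ((iv N h).map ColK.T2 ++ F.map ColK.F)) (ent X c r p p)
  have s5 := listDet_block_col ((iv N q).map RowK.D ++ ((iv t p).map RowK.P1 ++ rowsB B1 B2)) []
    ((iv p t).map ColK.S) ((iv N h).map ColK.T2) (F.map ColK.F) (ent X c r p p)
  have s6 := gadget (fun _ => ent X c r p p) RowK.D ColK.T2 ((iv t p).map RowK.P1 ++ rowsB B1 B2)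
    ((iv p t).map ColK.S ++ F.map ColK.F) 1 (by ring) N q h hq hh
    (by intro i j j'; simp only [ent, mdel]; split_ifs <;> simp)
    (fun _ _ _ _ => rfl) (fun _ _ _ _ => rfl)
    (by
      intro i y hy y' hy'
      rw [List.mem_append, List.mem_map, List.mem_map] at hy'
      rcases hy' with ⟨l', _, rfl⟩ | ⟨f, _, rfl⟩ <;> simp [ent])
    (by intro i j; simp [ent, mdel])
  rw [iv_nil hqh, one_pow, one_mul] at s6
  have s7 := listDet_block [] ((iv t p).map RowK.P1) (rowsB B1 B2) []
    ((iv q h).map ColK.T2 ++ ((iv p t).map ColK.S ++ F.map ColK.F)) (ent X c r p p)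
  have s8 := listDet_block_col (rowsB B1 B2 ++ (iv t p).map RowK.P1) []
    ((iv q h).map ColK.T2) ((iv p t).map ColK.S) (F.map ColK.F) (ent X c r p p)
  have s9 := listDet_block_col (rowsB B1 B2 ++ (iv t p).map RowK.P1) []
    ((iv p t).map ColK.S ++ (iv q h).map ColK.T2) (F.map ColK.F) [] (ent X c r p p)
  have s10 : listDet (rowsB B1 B2 ++ (iv t p).map RowK.P1)
      (F.map ColK.F ++ ((iv p t).map ColK.S ++ (iv q h).map ColK.T2)) (ent X c r p p) =
      Ndet X c r B1 B2 F (iv t p) (iv p t) [] (iv q h) p p := by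
    rw [listDet_relabel _ _ _ toR (by
      intro y hy y' hy'
      rw [List.mem_append, List.mem_map] at hy
      rw [List.mem_append, List.mem_append, List.mem_map, List.mem_map, List.mem_map] at hy'
      rcases hy with hy | ⟨l, hl, rfl⟩
      · rcases mem_rowsB hy with ⟨b, hb, rfl⟩ | ⟨b, hb, rfl⟩ <;> simp [toR]
      · rw [mem_iv] at hl
        rcases hy' with ⟨f, _, rfl⟩ | ⟨l', hl', rfl⟩ | ⟨l', hl', rfl⟩ <;> simp [toR, ent, mdel]
        rw [mem_iv] at hl'
        omega)]
    rw [List.map_append (l₁ := rowsB B1 B2), toR_rowsB]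
    simp only [List.map_map]
    unfold Ndet
    rw [List.map_nil, List.nil_append]
    rfl
  simp only [List.nil_append, List.append_nil, List.append_assoc, List.length_append, List.length_map,
    length_iv, length_rowsB, neg_one_pow_sgn, Nat.cast_add, List.map_nil] at s2 s3 s4 s5 s6 s7 s8 s9
  have s1' : Mdet X c r B1 B2 F N p q t h = sgn ((h - N).toNat : ZMod 2) *
      listDet ((iv N p).map RowK.P1 ++ ((iv N q).map RowK.D ++ rowsB B1 B2))
      ((iv N h).map ColK.T2 ++ ((iv N t).map ColK.S ++ F.map ColK.F)) (ent X c r N N) := by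
    rw [s1, ← mul_assoc, sgn_sq, one_mul]
  rw [← s10, s1', s2, s3, s4, s5, s6, s7, s8, s9]
  simp only [sgn_add, mul_add, add_mul]
  ring

/-- The big determinant vanishes for negative `a`. -/
theorem regimeNeg (N p q t h : ℤ) (hh : N ≤ h) (hq : h < q) :
    Mdet X c r B1 B2 F N p q t h = 0 := by
  unfold Mdet
  obtain ⟨q, rfl⟩ : ∃ q', q = q' + 1 := ⟨q - 1, by ring⟩
  rw [iv_snoc (show N ≤ q by omega), List.map_append, List.append_assoc, ← List.append_assoc]
  refine listDet_zero_row (RowK.D (q + 1)) _ _ _ _ ?_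
  intro y hy
  rw [List.mem_append, List.mem_append, List.mem_map, List.mem_map, List.mem_map] at hy
  rcases hy with ⟨j, hj, rfl⟩ | ⟨j, hj, rfl⟩ | ⟨f, hf, rfl⟩ <;> simp [ent, mdel]
  rw [mem_iv] at hj
  omega

end RegimeThms

/-! ### Gauge transformation of the regional determinants -/

section Gauge

variable {ι : Type*} [DecidableEq ι] (z : ι → ℂ) (hbar : ℂ) (Q : Finset ι → ℂ → ℂ) (u0 : ℂ)

noncomputable def cQ (k : ℤ) (b : ι) : ℂ :=
  z b ^ (k - 1) * Q {b} (u0 + ((2 * k - 1 : ℤ) : ℂ) * hbar)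

noncomputable def rQ (k : ℤ) (f : ι) : ℂ :=
  z f ^ (-k) * Q {f} (u0 + ((2 * k - 1 : ℤ) : ℂ) * hbar)

noncomputable def XQ (k : ℤ) (b f : ι) : ℂ :=
  (z b ^ k * z f ^ (-k)) * Q {b, f} (u0 + ((2 * k : ℤ) : ℂ) * hbar) / (z b - z f)

noncomputable def Wt (B F : List ι) : ℂ := (B.map z).prod * ((F.map z).prod)⁻¹

theorem prod_zpow_list (L : List ι) (k : ℤ) :
    (L.map (fun b => z b ^ k)).prod = ((L.map z).prod) ^ k := by
  induction L with
  | nil => simp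
  | cons x L ih => simp only [List.map_cons, List.prod_cons, ih, mul_zpow]

theorem Wt_zpow (B F : List ι) (k : ℤ) :
    (B.map (fun b => z b ^ (-k))).prod * (F.map (fun f => z f ^ k)).prod = Wt z B F ^ (-k) := by
  rw [prod_zpow_list, prod_zpow_list, Wt, mul_zpow, inv_zpow, zpow_neg (F.map z).prod, inv_inv]

theorem prod_const_list {α : Type*} (L : List α) (x : ℂ) :
    (L.map (fun _ => x)).prod = x ^ L.length := by
  simp

theorem sgn_pow (x : ZMod 2) (n : ℕ) : sgn x ^ n = sgn (x * n) := by
  induction n with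
  | zero => simp [sgn_zero]
  | succ n ih => rw [pow_succ, ih, Nat.cast_succ, mul_add, sgn_add, mul_one]

theorem DeltaT_gauge (B1 B2 F : List ι) (hB : ∀ b ∈ B1 ++ B2, z b ≠ 0) (hF : ∀ f ∈ F, z f ≠ 0)
    (R S T1 T2 : List ℤ) (η ξ k : ℤ) (u : ℂ) (hu : u + (ξ : ℂ) * hbar = u0 + ((2 * k : ℤ) : ℂ) * hbar)
    (hη : S = [] ∨ η = 0) :
    DeltaT z hbar Q B1 B2 F R S T1 T2 η ξ u =
      Wt z (B1 ++ B2) F ^ (-k) * sgn ((η : ZMod 2) * (B2.length + T2.length)) *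
      (R.map (fun r : ℤ => sgn ((r - 1 : ℤ) : ZMod 2))).prod *
      Ndet (XQ z hbar Q u0) (cQ z hbar Q u0) (rQ z hbar Q u0) B1 B2 F (R.map (fun j => k - j + 1))
        (S.map (fun j => k + j)) (T1.map (fun j => k + j)) (T2.map (fun j => k + j)) k (k - η) := by
  have hsh : ∀ x y : ℤ, y = x - ξ + 2 * k → u + ((x : ℤ) : ℂ) * hbar = u0 + ((y : ℤ) : ℂ) * hbar := by
    rintro x y rfl
    push_cast at hu ⊢
    linear_combination hu
  unfold DeltaT
  rw [listDet_scale _ _ _ (fun row => match row with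
      | Sum.inl b => RowK.b1 b
      | Sum.inr (Sum.inl b) => RowK.b2 b
      | Sum.inr (Sum.inr r) => RowK.R (k - r + 1))
    (fun col => match col with
      | Sum.inl f => ColK.F f
      | Sum.inr (Sum.inl j) => ColK.S (k + j)
      | Sum.inr (Sum.inr (Sum.inl j)) => ColK.T1 (k + j)
      | Sum.inr (Sum.inr (Sum.inr j)) => ColK.T2 (k + j))
    (ent (XQ z hbar Q u0) (cQ z hbar Q u0) (rQ z hbar Q u0) k (k - η))
    (fun row => match row with
      | Sum.inl b => z b ^ (-k)
      | Sum.inr (Sum.inl b) => z b ^ (-k) * sgn (η : ZMod 2)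
      | Sum.inr (Sum.inr r) => sgn ((r - 1 : ℤ) : ZMod 2))
    (fun col => match col with
      | Sum.inl f => z f ^ k
      | Sum.inr (Sum.inl _) => 1
      | Sum.inr (Sum.inr (Sum.inl _)) => 1
      | Sum.inr (Sum.inr (Sum.inr _)) => sgn (η : ZMod 2))]
  · simp only [List.map_append, List.map_map, Function.comp_def, List.prod_append]
    have h2 : (B2.map (fun b => z b ^ (-k) * sgn (η : ZMod 2))).prod =
        (B2.map (fun b => z b ^ (-k))).prod * sgn ((η : ZMod 2) * B2.length) := by
      rw [List.prod_map_mul, prod_const_list, sgn_pow]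
    rw [h2, ← Wt_zpow, List.map_append, List.prod_append, mul_add, sgn_add]
    rw [prod_const_list T2, sgn_pow]
    simp only [prod_const_list, one_pow, mul_one]
    unfold Ndet rowsB
    simp only [List.map_map, Function.comp_def, List.append_assoc]
    ring
  · intro row hrow col hcol
    simp only [List.mem_append, List.mem_map] at hrow hcol hB
    have hzz : ∀ w : ℂ, w ≠ 0 → w ^ (-k) * w ^ k = 1 := fun w hw => by
      rw [← zpow_add₀ hw]; simp
    have hcS : ∀ b, z b ≠ 0 → ∀ j, z b ^ (j - 1) * Q {b} (u + ((ξ + 2 * j - 1 : ℤ) : ℂ) * hbar) =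
        z b ^ (-k) * cQ z hbar Q u0 (k + j) b := by
      intro b hb j
      rw [hsh _ (2 * (k + j) - 1) (by ring), cQ, ← mul_assoc, ← zpow_add₀ hb]
      congr 2
      ring
    rcases hrow with (⟨b, hb, rfl⟩ | ⟨b, hb, rfl⟩) | ⟨j, hj, rfl⟩
    · have hb0 := hB b (Or.inl hb)
      rcases hcol with ((⟨f, hf, rfl⟩ | ⟨j', hj', rfl⟩) | ⟨j', hj', rfl⟩) | ⟨j', hj', rfl⟩
      · have hf0 := hF f hf
        simp only [ent, XQ]
        rw [hu]
        have h1 := hzz _ hb0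
        have h2 := hzz _ hf0
        linear_combination (- Q {b, f} (u0 + ((2 * k : ℤ) : ℂ) * hbar) / (z b - z f)) * h1
          - (z b ^ (-k) * z b ^ k * Q {b, f} (u0 + ((2 * k : ℤ) : ℂ) * hbar) / (z b - z f)) * h2
      · simp only [ent]
        rw [hcS b hb0]; ring
      · simp only [ent]
        rw [hcS b hb0]; ring
      · simp only [ent]; ring
    · have hb0 := hB b (Or.inr hb)
      rcases hcol with ((⟨f, hf, rfl⟩ | ⟨j', hj', rfl⟩) | ⟨j', hj', rfl⟩) | ⟨j', hj', rfl⟩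
      · have hf0 := hF f hf
        simp only [ent, XQ]
        rw [hsh _ (2 * (k - η)) (by ring), sgn_intCast]
        have h1 : (-z f / z b) ^ η = z b ^ (-k) * (-1) ^ η * z f ^ k * (z b ^ (k - η) * z f ^ (-(k - η))) := by
          rw [show -z f / z b = (-1) * z f * (z b)⁻¹ by field_simp, mul_zpow, mul_zpow, inv_zpow,
            ← zpow_neg, show -η = -k + (k - η) by ring, zpow_add₀ hb0,
            show -(k - η) = η - k by ring]
          have : z f ^ η = z f ^ k * z f ^ (η - k) := by
            rw [← zpow_add₀ hf0]; congr 1; ring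
          rw [this]
          ring
        rw [h1]
        ring
      · simp only [ent]
        rcases hη with rfl | rfl
        · simp at hj'
        · rw [hcS b hb0]
          simp [sgn_zero]
      · simp only [ent]; ring
      · simp only [ent]
        rw [hcS b hb0]
        linear_combination - (z b ^ (-k) * cQ z hbar Q u0 (k + j') b) * sgn_sq (η : ZMod 2)
    · rcases hcol with ((⟨f, hf, rfl⟩ | ⟨j', hj', rfl⟩) | ⟨j', hj', rfl⟩) | ⟨j', hj', rfl⟩
      · have hf0 := hF f hf
        simp only [ent, rQ]
        rw [hsh _ (2 * (k - j + 1) - 1) (by ring), sgn_intCast]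
        have : (-z f) ^ (j - 1) = (-1) ^ (j - 1) * (z f ^ k * z f ^ (-(k - j + 1))) := by
          rw [← zpow_add₀ hf0, show -z f = (-1) * z f by ring, mul_zpow]
          congr 2
          ring
        rw [this]
        ring
      all_goals simp only [ent]; ring

theorem prod_sgn_iv (a : ℤ) (l : ℕ) :
    ((iv a (a + l)).map (fun r : ℤ => sgn ((r - 1 : ℤ) : ZMod 2))).prod =
      sgn ((l : ZMod 2) * (a : ZMod 2)) * triS l := by
  induction l with
  | zero => simp [iv_nil, triS, sgn_zero]
  | succ l ih =>
    rw [show a + ((l + 1 : ℕ) : ℤ) = a + l + 1 by push_cast; ring, Nat.cast_add, Nat.cast_one,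
      iv_snoc (by omega), List.map_append, List.prod_append, ih, triS]
    simp only [List.map_cons, List.map_nil, List.prod_cons, List.prod_nil, mul_one]
    rw [add_mul, one_mul, sgn_add, show a + l + 1 - 1 = a + (l : ℤ) by ring]
    push_cast
    rw [sgn_add]
    ring

theorem prod_sgn_iv' (a b : ℤ) :
    ((iv a b).map (fun r : ℤ => sgn ((r - 1 : ℤ) : ZMod 2))).prod =
      sgn (((b - a).toNat : ZMod 2) * (a : ZMod 2)) * triS (b - a).toNat := by
  rcases le_total a b with h | h
  · rw [← prod_sgn_iv, show a + ((b - a).toNat : ℤ) = b by omega]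
  · rw [iv_nil h, show (b - a).toNat = 0 by omega]
    simp [triS, sgn_zero]

theorem Ndet_reflect (X : ℤ → ι → ι → ℂ) (c r : ℤ → ι → ℂ) (B1 B2 F : List ι)
    (x y w k x1 x2 : ℤ) (S T1 T2 : List ℤ) :
    ((iv 0 x ++ iv y w).map (fun r : ℤ => sgn ((r - 1 : ℤ) : ZMod 2))).prod *
      Ndet X c r B1 B2 F ((iv 0 x ++ iv y w).map (fun j => k - j + 1)) S T1 T2 x1 x2 =
    sgn (((w - y).toNat : ZMod 2) * (y : ZMod 2)) *
      Ndet X c r B1 B2 F (iv (k - x) k ++ iv (k - w) (k - y)) S T1 T2 x1 x2 := by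
  rw [List.map_append, List.prod_append, prod_sgn_iv', prod_sgn_iv', List.map_append, iv_reflect,
    iv_reflect]
  unfold Ndet
  simp only [List.map_append, List.map_reverse]
  rw [listDet_reverse]
  have := listDet_reverse (rowsB B1 B2 ++ (iv (k - x) (k - 0)).map RowK.R)
    ((iv (k - w) (k - y)).map RowK.R) [] (F.map ColK.F ++ (S.map ColK.S ++ (T1.map ColK.T1 ++ T2.map ColK.T2)))
    (ent X c r x1 x2)
  simp only [List.append_nil, List.append_assoc] at this
  rw [this]
  simp only [List.length_map, length_iv, sub_zero, Int.cast_zero, mul_zero, sgn_zero, one_mul]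
  rw [show k - (k - x) = x by ring, show k - y - (k - w) = w - y by ring]
  linear_combination (sgn (((w - y).toNat : ZMod 2) * (y : ZMod 2)) *
    listDet (rowsB B1 B2 ++ ((iv (k - x) k).map RowK.R ++ (iv (k - w) (k - y)).map RowK.R))
    (F.map ColK.F ++ (S.map ColK.S ++ (T1.map ColK.T1 ++ T2.map ColK.T2))) (ent X c r x1 x2)) *
    (triS x.toNat * triS x.toNat * triS_sq (w - y).toNat + triS_sq x.toNat)

theorem Xrec_Q (p : ι → ℤ) (Sx : Set ι) (hQQ : QQsys z hbar p Sx Q) (B1 B2 F : List ι)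
    (hBS : ∀ b ∈ B1 ++ B2, b ∈ Sx ∧ p b = 1 ∧ z b ≠ 0) (hFS : ∀ f ∈ F, f ∈ Sx ∧ p f = -1 ∧ z f ≠ 0)
    (hd : ∀ b ∈ B1 ++ B2, ∀ f ∈ F, z b ≠ z f) :
    Xrec (XQ z hbar Q u0) (cQ z hbar Q u0) (rQ z hbar Q u0) B1 B2 F := by
  intro k b hb f hf
  obtain ⟨hbS, hpb, hb0⟩ := hBS b hb
  obtain ⟨hfS, hpf, hf0⟩ := hFS f hf
  have hbf := hd b hb f hf
  have hne : b ≠ f := fun h => hbf (by rw [h])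
  have h := hQQ.2.2 ∅ (by simp) b hbS f hfS (by simp) (by simp) hne (by rw [hpb, hpf]; norm_num)
    (u0 + ((2 * (k + 1) - 1 : ℤ) : ℂ) * hbar)
  have hf1 : (insert f ∅ : Finset ι) = {f} := rfl
  have hb1 : (insert b ∅ : Finset ι) = {b} := rfl
  rw [hQQ.1, hQQ.1, hf1, hb1, hpb] at h
  have e1 : u0 + ((2 * (k + 1) - 1 : ℤ) : ℂ) * hbar + ((1 : ℤ) : ℂ) * hbar =
      u0 + ((2 * (k + 1) : ℤ) : ℂ) * hbar := by push_cast; ring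
  have e2 : u0 + ((2 * (k + 1) - 1 : ℤ) : ℂ) * hbar - ((1 : ℤ) : ℂ) * hbar =
      u0 + ((2 * k : ℤ) : ℂ) * hbar := by push_cast; ring
  rw [e1, e2] at h
  unfold XQ cQ rQ
  have hsub : z b - z f ≠ 0 := sub_ne_zero.mpr hbf
  rw [add_sub_cancel_right, div_eq_iff hsub, add_mul, div_mul_cancel₀ _ hsub]
  rw [neg_add, zpow_add₀ hf0, zpow_add₀ hb0, zpow_one, zpow_neg_one]
  have hff : z f * (z f)⁻¹ = 1 := mul_inv_cancel₀ hf0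
  linear_combination (- z b ^ k * z f ^ (-k) * (z f)⁻¹) * h
    + (z b ^ k * z f ^ (-k) * Q {b, f} (u0 + ((2 * k : ℤ) : ℂ) * hbar)) * hff

end Gauge

theorem zm2 (x : ZMod 2) : x * x = x := by
  revert x
  decide

/-! ### Uniform representation of the T-functions -/

section Rep

theorem tn_pos {x : ℤ} (h : 0 ≤ x) : ((x.toNat : ℕ) : ZMod 2) = (x : ZMod 2) := by
  obtain ⟨n, rfl⟩ := Int.eq_ofNat_of_zero_le h
  simp

theorem tn_neg {x : ℤ} (h : x ≤ 0) : ((x.toNat : ℕ) : ZMod 2) = 0 := by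
  rw [Int.toNat_of_nonpos h]; simp

variable {ι : Type*} [DecidableEq ι] (z : ι → ℂ) (hbar : ℂ) (Q : Finset ι → ℂ → ℂ) (u0 : ℂ)

theorem DeltaT_uni (B1 B2 F : List ι) (hB : ∀ b ∈ B1 ++ B2, z b ≠ 0) (hF : ∀ f ∈ F, z f ≠ 0)
    (x y w : ℤ) (S T1 T2 : List ℤ) (η ξ k : ℤ) (u : ℂ)
    (hu : u + (ξ : ℂ) * hbar = u0 + ((2 * k : ℤ) : ℂ) * hbar) (hη : S = [] ∨ η = 0) :
    DeltaT z hbar Q B1 B2 F (iv 0 x ++ iv y w) S T1 T2 η ξ u =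
      Wt z (B1 ++ B2) F ^ (-k) * (sgn ((η : ZMod 2) * (B2.length + T2.length)) *
      sgn (((w - y).toNat : ZMod 2) * (y : ZMod 2))) *
      Ndet (XQ z hbar Q u0) (cQ z hbar Q u0) (rQ z hbar Q u0) B1 B2 F
        (iv (k - x) k ++ iv (k - w) (k - y))
        (S.map (fun j => k + j)) (T1.map (fun j => k + j)) (T2.map (fun j => k + j)) k (k - η) := by
  rw [DeltaT_gauge z hbar Q u0 B1 B2 F hB hF _ S T1 T2 η ξ k u hu hη, mul_assoc, Ndet_reflect]
  ring

/-- Assembling the signs. -/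
theorem rep_assemble (v w d M Nd e th x y g : ℂ) (Dd : ℂ)
    (hv : v = e * th * (w * x * Nd) / Dd) (hM : M = y * Nd) (hs : e * x = g * d * y) :
    v = (th * g / Dd) * w * d * M := by
  rw [hv, hM]
  linear_combination (th * w * Nd / Dd) * hs

theorem Rep (B1 B2 F1 F2 : List ι) (T : ℤ → ℤ → ℂ → ℂ) (hT : IsT z hbar Q B1 B2 F1 F2 T)
    (hB : ∀ b ∈ B1 ++ B2, z b ≠ 0) (hF : ∀ f ∈ F1 ++ F2, z f ≠ 0)
    (hX : Xrec (XQ z hbar Q u0) (cQ z hbar Q u0) (rQ z hbar Q u0) B1 B2 (F1 ++ F2)) :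
    ∃ K : ℂ, ∀ (a s k N p q t h : ℤ) (u : ℂ), N ≤ p → N ≤ q → N ≤ t → N ≤ h →
      p = k → q = k + s + B1.length - F1.length - a →
      t = k + B1.length - F1.length + B2.length - F2.length - a →
      h = k + s + B1.length - F1.length →
      u = u0 + ((2 * k - (a - s - (B1.length - F1.length) - (B2.length - F2.length)) : ℤ) : ℂ) * hbar →
      T a s u = K * Wt z (B1 ++ B2) (F1 ++ F2) ^ (-k) *
        sgn (((k - N) * (s + B1.length - F1.length) + (k - N) + (s + B1.length - F1.length) +
          a * (B1.length + F1.length + F2.length) : ℤ) : ZMod 2) *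
        Mdet (XQ z hbar Q u0) (cQ z hbar Q u0) (rQ z hbar Q u0) B1 B2 (F1 ++ F2) N p q t h := by
  obtain ⟨h0, h1, h2, h3, h4, h5, h6, h7, h8⟩ := hT
  generalize hθ : (((B1.length : ℤ) + B2.length) * (B1.length + B2.length - 1) / 2 +
    ((F1.length : ℤ) + F2.length) * (F1.length + F2.length - 1) / 2) = θ at *
  generalize hDd : Dden z (B1 ++ B2) (F1 ++ F2) = Dd at *
  refine ⟨(-1 : ℂ) ^ θ * sgn (((F1.length + F2.length + (B1.length + B2.length) *
    (F1.length + F2.length) : ℤ)) : ZMod 2) / Dd, ?_⟩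
  intro a s k N p q t h u hp hq ht hh ep eq et eh hu
  subst ep
  have hneg : (-1 : ℂ) ≠ 0 := by norm_num
  have hu1 : u + ((a - s - ((B1.length : ℤ) - F1.length) - ((B2.length : ℤ) - F2.length) : ℤ) : ℂ) * hbar =
      u0 + ((2 * p : ℤ) : ℂ) * hbar := by
    rw [hu]; push_cast; ring
  have hlen : (F1 ++ F2).length = F1.length + F2.length := List.length_append
  by_cases ha : a < 0
  · rw [h0 a s (Or.inl ha), regimeNeg _ _ _ _ _ _ N p q t h hh (by omega), mul_zero]
  rw [not_lt] at ha
  by_cases hcB : a ≤ s + ((B1.length : ℤ) - F1.length)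
  · have hreg := regimeB _ _ _ B1 B2 (F1 ++ F2) hX N p q t h hp hq ht hh (by omega) (by omega)
    have hd := DeltaT_uni z hbar Q u0 B1 B2 (F1 ++ F2) hB hF
      (a - ((B1.length : ℤ) - F1.length) - ((B2.length : ℤ) - F2.length)) 0 0
      (iv 0 (-a + ((B1.length : ℤ) - F1.length) + ((B2.length : ℤ) - F2.length)))
      (iv (s - a + ((B1.length : ℤ) - F1.length)) (s + ((B1.length : ℤ) - F1.length))) [] 0 _ p u hu1
      (Or.inr rfl)
    rw [iv_shift, iv_shift, iv_nil (le_refl 0), iv_nil (le_refl (p - 0)), List.append_nil,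
      List.append_nil, List.map_nil,
      show p - (a - ((B1.length : ℤ) - F1.length) - ((B2.length : ℤ) - F2.length)) = t by omega,
      show p + 0 = p by omega, show p - 0 = p by omega,
      show p + (-a + ((B1.length : ℤ) - F1.length) + ((B2.length : ℤ) - F2.length)) = t by omega,
      show p + (s - a + ((B1.length : ℤ) - F1.length)) = q by omega,
      show p + (s + ((B1.length : ℤ) - F1.length)) = h by omega] at hd
    rcases le_total a (((B1.length : ℤ) - F1.length) + ((B2.length : ℤ) - F2.length)) with hc | hc
    · have hv := h5 a s hcB hc u
      rw [seg_eq_iv, seg_eq_iv] at hv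
      rw [iv_nil (show a - ((B1.length : ℤ) - F1.length) - ((B2.length : ℤ) - F2.length) ≤ 0 by omega)] at hd
      rw [show (1 : ℤ) - 1 = 0 by norm_num, add_sub_cancel_right, hd, zpow_add₀ hneg] at hv
      refine rep_assemble _ _ _ _ _ _ _ _ _ _ _ hv hreg ?_
      rw [hlen, ← sgn_intCast]
      simp only [← sgn_add, List.length_nil, length_iv]
      congr 1
      simp only [min_eq_left (show p ≤ t by omega),
        tn_pos (show 0 ≤ p - N by omega),
        tn_pos (show 0 ≤ q - N by omega),
        tn_pos (show 0 ≤ t - N by omega),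
        tn_pos (show 0 ≤ h - N by omega),
        tn_pos (show 0 ≤ h - q by omega),
        tn_pos (show 0 ≤ t - p by omega),
        tn_neg (show p - t ≤ 0 by omega),
        tn_neg (show (0 : ℤ) - 0 ≤ 0 by omega),
        tn_pos (show 0 ≤ (s + ((B1.length : ℤ) - F1.length)) - (s - a + ((B1.length : ℤ) - F1.length)) by omega)]
      simp only [eq, et, eh]
      push_cast
      generalize (p : ZMod 2) = xp, (N : ZMod 2) = xN, (a : ZMod 2) = xa, (s : ZMod 2) = xs,
        (B1.length : ZMod 2) = xm1, (B2.length : ZMod 2) = xm2, (F1.length : ZMod 2) = xn1,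
        (F2.length : ZMod 2) = xn2
      have idem := zm2
      clear * - idem
      grind [idem xp, idem xN, idem xa, idem xs, idem xm1, idem xm2, idem xn1, idem xn2]
    · have hv := h6 a s hc hcB u
      rw [seg_eq_iv, seg_eq_iv] at hv
      rw [iv_nil (show -a + ((B1.length : ℤ) - F1.length) + ((B2.length : ℤ) - F2.length) ≤ 0 by omega)] at hd
      rw [show (1 : ℤ) - 1 = 0 by norm_num, add_sub_cancel_right, hd, zpow_add₀ hneg] at hv
      refine rep_assemble _ _ _ _ _ _ _ _ _ _ _ hv hreg ?_
      rw [hlen, ← sgn_intCast]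
      simp only [← sgn_add, List.length_nil, length_iv]
      congr 1
      simp only [min_eq_right (show t ≤ p by omega),
        tn_pos (show 0 ≤ p - N by omega),
        tn_pos (show 0 ≤ q - N by omega),
        tn_pos (show 0 ≤ t - N by omega),
        tn_pos (show 0 ≤ h - N by omega),
        tn_pos (show 0 ≤ h - q by omega),
        tn_neg (show t - p ≤ 0 by omega),
        tn_pos (show 0 ≤ p - t by omega),
        tn_neg (show (0 : ℤ) - 0 ≤ 0 by omega),
        tn_pos (show 0 ≤ (s + ((B1.length : ℤ) - F1.length)) - (s - a + ((B1.length : ℤ) - F1.length)) by omega)]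
      simp only [eq, et, eh]
      push_cast
      generalize (p : ZMod 2) = xp, (N : ZMod 2) = xN, (a : ZMod 2) = xa, (s : ZMod 2) = xs,
        (B1.length : ZMod 2) = xm1, (B2.length : ZMod 2) = xm2, (F1.length : ZMod 2) = xn1,
        (F2.length : ZMod 2) = xn2
      have idem := zm2
      clear * - idem
      grind [idem xp, idem xN, idem xa, idem xs, idem xm1, idem xm2, idem xn1, idem xn2]
  by_cases hcC : a ≤ -s + ((B2.length : ℤ) - F2.length)
  · have hreg := regimeC _ _ _ B1 B2 (F1 ++ F2) hX N p q t h hp hq ht hh (by omega) (by omega)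
    have hd := DeltaT_uni z hbar Q u0 B1 B2 (F1 ++ F2) hB hF
      (a - ((B1.length : ℤ) - F1.length) - ((B2.length : ℤ) - F2.length)) 0 0
      (iv 0 (-a + ((B1.length : ℤ) - F1.length) + ((B2.length : ℤ) - F2.length)))
      [] (iv (s - a + ((B1.length : ℤ) - F1.length)) (s + ((B1.length : ℤ) - F1.length))) 0 _ p u hu1
      (Or.inr rfl)
    rw [iv_shift, iv_shift, iv_nil (le_refl 0), iv_nil (le_refl (p - 0)), List.append_nil,
      List.append_nil, List.map_nil,
      show p - (a - ((B1.length : ℤ) - F1.length) - ((B2.length : ℤ) - F2.length)) = t by omega,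
      show p + 0 = p by omega, show p - 0 = p by omega,
      show p + (-a + ((B1.length : ℤ) - F1.length) + ((B2.length : ℤ) - F2.length)) = t by omega,
      show p + (s - a + ((B1.length : ℤ) - F1.length)) = q by omega,
      show p + (s + ((B1.length : ℤ) - F1.length)) = h by omega] at hd
    rcases le_total a (((B1.length : ℤ) - F1.length) + ((B2.length : ℤ) - F2.length)) with hc | hc
    · have hv := h7 a s hcC hc u
      rw [seg_eq_iv, seg_eq_iv] at hv
      rw [iv_nil (show a - ((B1.length : ℤ) - F1.length) - ((B2.length : ℤ) - F2.length) ≤ 0 by omega)] at hd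
      rw [show (1 : ℤ) - 1 = 0 by norm_num, add_sub_cancel_right, hd, zpow_add₀ hneg] at hv
      refine rep_assemble _ _ _ _ _ _ _ _ _ _ _ hv hreg ?_
      rw [hlen, ← sgn_intCast]
      simp only [← sgn_add, List.length_nil, length_iv]
      congr 1
      simp only [min_eq_left (show p ≤ t by omega),
        tn_pos (show 0 ≤ p - N by omega),
        tn_pos (show 0 ≤ q - N by omega),
        tn_pos (show 0 ≤ t - N by omega),
        tn_pos (show 0 ≤ h - N by omega),
        tn_pos (show 0 ≤ h - q by omega),
        tn_pos (show 0 ≤ t - p by omega),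
        tn_neg (show p - t ≤ 0 by omega),
        tn_neg (show (0 : ℤ) - 0 ≤ 0 by omega),
        tn_pos (show 0 ≤ (s + ((B1.length : ℤ) - F1.length)) - (s - a + ((B1.length : ℤ) - F1.length)) by omega)]
      simp only [eq, et, eh]
      push_cast
      generalize (p : ZMod 2) = xp, (N : ZMod 2) = xN, (a : ZMod 2) = xa, (s : ZMod 2) = xs,
        (B1.length : ZMod 2) = xm1, (B2.length : ZMod 2) = xm2, (F1.length : ZMod 2) = xn1,
        (F2.length : ZMod 2) = xn2
      have idem := zm2
      clear * - idem
      grind [idem xp, idem xN, idem xa, idem xs, idem xm1, idem xm2, idem xn1, idem xn2]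
    · have hv := h8 a s hc hcC u
      rw [seg_eq_iv, seg_eq_iv] at hv
      rw [iv_nil (show -a + ((B1.length : ℤ) - F1.length) + ((B2.length : ℤ) - F2.length) ≤ 0 by omega)] at hd
      rw [show (1 : ℤ) - 1 = 0 by norm_num, add_sub_cancel_right, hd, zpow_add₀ hneg] at hv
      refine rep_assemble _ _ _ _ _ _ _ _ _ _ _ hv hreg ?_
      rw [hlen, ← sgn_intCast]
      simp only [← sgn_add, List.length_nil, length_iv]
      congr 1
      simp only [min_eq_right (show t ≤ p by omega),
        tn_pos (show 0 ≤ p - N by omega),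
        tn_pos (show 0 ≤ q - N by omega),
        tn_pos (show 0 ≤ t - N by omega),
        tn_pos (show 0 ≤ h - N by omega),
        tn_pos (show 0 ≤ h - q by omega),
        tn_neg (show t - p ≤ 0 by omega),
        tn_pos (show 0 ≤ p - t by omega),
        tn_neg (show (0 : ℤ) - 0 ≤ 0 by omega),
        tn_pos (show 0 ≤ (s + ((B1.length : ℤ) - F1.length)) - (s - a + ((B1.length : ℤ) - F1.length)) by omega)]
      simp only [eq, et, eh]
      push_cast
      generalize (p : ZMod 2) = xp, (N : ZMod 2) = xN, (a : ZMod 2) = xa, (s : ZMod 2) = xs,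
        (B1.length : ZMod 2) = xm1, (B2.length : ZMod 2) = xm2, (F1.length : ZMod 2) = xn1,
        (F2.length : ZMod 2) = xn2
      have idem := zm2
      clear * - idem
      grind [idem xp, idem xN, idem xa, idem xs, idem xm1, idem xm2, idem xn1, idem xn2]
  rw [not_le] at hcB hcC
  have hreg := regimeA _ _ _ B1 B2 (F1 ++ F2) hX N p q t h hp hq ht hh (by omega) (by omega)
  have hd := DeltaT_uni z hbar Q u0 B1 B2 (F1 ++ F2) hB hF
    (-s - ((B1.length : ℤ) - F1.length)) (a - s - ((B1.length : ℤ) - F1.length)) (a - ((B1.length : ℤ) - F1.length) - ((B2.length : ℤ) - F2.length)) []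
    (iv 0 (s + ((B1.length : ℤ) - F1.length))) (iv (s - a + ((B1.length : ℤ) - F1.length)) (-a + ((B1.length : ℤ) - F1.length) + ((B2.length : ℤ) - F2.length))) (a - s - ((B1.length : ℤ) - F1.length)) _ p u hu1 (Or.inl rfl)
  rw [iv_shift, iv_shift, List.map_nil,
    show p - (-s - ((B1.length : ℤ) - F1.length)) = h by omega, show p + 0 = p by omega,
    show p - (a - ((B1.length : ℤ) - F1.length) - ((B2.length : ℤ) - F2.length)) = t by omega,
    show p - (a - s - ((B1.length : ℤ) - F1.length)) = q by omega,
    show p + (-a + ((B1.length : ℤ) - F1.length) + ((B2.length : ℤ) - F2.length)) = t by omega,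
    show p + (s - a + ((B1.length : ℤ) - F1.length)) = q by omega,
    show p + (s + ((B1.length : ℤ) - F1.length)) = h by omega] at hd
  rcases le_total (-((B1.length : ℤ) - F1.length)) s with hc1 | hc1 <;> rcases le_total s ((B2.length : ℤ) - F2.length) with hc2 | hc2
  · have hv := h1 a s (by omega) (by omega) ha hc1 hc2 u
    rw [seg_eq_iv, seg_eq_iv] at hv
    simp only [show iv 0 (-s - ((B1.length : ℤ) - F1.length)) = [] from iv_nil (by omega),
      show iv (a - s - ((B1.length : ℤ) - F1.length)) (a - ((B1.length : ℤ) - F1.length) - ((B2.length : ℤ) - F2.length)) = [] from iv_nil (by omega), List.append_nil, List.nil_append] at hd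
    rw [add_sub_cancel_right] at hv
    simp only [show (1 : ℤ) - 1 = 0 by norm_num] at hv
    rw [hd, zpow_add₀ hneg] at hv
    refine rep_assemble _ _ _ _ _ _ _ _ _ _ _ hv hreg ?_
    rw [hlen, ← sgn_intCast]
    simp only [← sgn_add, List.length_nil, length_iv]
    congr 1
    simp only [min_eq_left (show p ≤ h by omega),
      min_eq_left (show q ≤ t by omega),
      tn_pos (show 0 ≤ p - N by omega),
      tn_pos (show 0 ≤ q - N by omega),
      tn_pos (show 0 ≤ t - N by omega),
      tn_pos (show 0 ≤ h - N by omega),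
      tn_neg (show p - h ≤ 0 by omega),
      tn_pos (show 0 ≤ h - p by omega),
      tn_neg (show q - t ≤ 0 by omega),
      tn_pos (show 0 ≤ t - q by omega),
      tn_neg (show (a - ((B1.length : ℤ) - F1.length) - ((B2.length : ℤ) - F2.length)) - (a - s - ((B1.length : ℤ) - F1.length)) ≤ 0 by omega),
      tn_pos (show 0 ≤ (-a + ((B1.length : ℤ) - F1.length) + ((B2.length : ℤ) - F2.length)) - (s - a + ((B1.length : ℤ) - F1.length)) by omega)]
    simp only [eq, et, eh]
    push_cast
    generalize (p : ZMod 2) = xp, (N : ZMod 2) = xN, (a : ZMod 2) = xa, (s : ZMod 2) = xs,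
      (B1.length : ZMod 2) = xm1, (B2.length : ZMod 2) = xm2, (F1.length : ZMod 2) = xn1,
      (F2.length : ZMod 2) = xn2
    have idem := zm2
    clear * - idem
    grind [idem xp, idem xN, idem xa, idem xs, idem xm1, idem xm2, idem xn1, idem xn2]
  · have hv := h2 a s (by omega) (by omega) ha hc1 hc2 u
    rw [seg_eq_iv, seg_eq_iv] at hv
    simp only [show iv 0 (-s - ((B1.length : ℤ) - F1.length)) = [] from iv_nil (by omega),
      show iv (s - a + ((B1.length : ℤ) - F1.length)) (-a + ((B1.length : ℤ) - F1.length) + ((B2.length : ℤ) - F2.length)) = [] from iv_nil (by omega), List.append_nil, List.nil_append] at hd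
    rw [add_sub_cancel_right] at hv
    simp only [show (1 : ℤ) - 1 = 0 by norm_num] at hv
    rw [hd, zpow_add₀ hneg] at hv
    refine rep_assemble _ _ _ _ _ _ _ _ _ _ _ hv hreg ?_
    rw [hlen, ← sgn_intCast]
    simp only [← sgn_add, List.length_nil, length_iv]
    congr 1
    simp only [min_eq_left (show p ≤ h by omega),
      min_eq_right (show t ≤ q by omega),
      tn_pos (show 0 ≤ p - N by omega),
      tn_pos (show 0 ≤ q - N by omega),
      tn_pos (show 0 ≤ t - N by omega),
      tn_pos (show 0 ≤ h - N by omega),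
      tn_neg (show p - h ≤ 0 by omega),
      tn_pos (show 0 ≤ h - p by omega),
      tn_pos (show 0 ≤ q - t by omega),
      tn_neg (show t - q ≤ 0 by omega),
      tn_pos (show 0 ≤ (a - ((B1.length : ℤ) - F1.length) - ((B2.length : ℤ) - F2.length)) - (a - s - ((B1.length : ℤ) - F1.length)) by omega)]
    simp only [eq, et, eh]
    push_cast
    generalize (p : ZMod 2) = xp, (N : ZMod 2) = xN, (a : ZMod 2) = xa, (s : ZMod 2) = xs,
      (B1.length : ZMod 2) = xm1, (B2.length : ZMod 2) = xm2, (F1.length : ZMod 2) = xn1,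
      (F2.length : ZMod 2) = xn2
    have idem := zm2
    clear * - idem
    grind [idem xp, idem xN, idem xa, idem xs, idem xm1, idem xm2, idem xn1, idem xn2]
  · have hv := h3 a s (by omega) (by omega) ha hc1 hc2 u
    rw [seg_eq_iv, seg_eq_iv] at hv
    simp only [show iv 0 (s + ((B1.length : ℤ) - F1.length)) = [] from iv_nil (by omega),
      show iv (a - s - ((B1.length : ℤ) - F1.length)) (a - ((B1.length : ℤ) - F1.length) - ((B2.length : ℤ) - F2.length)) = [] from iv_nil (by omega), List.append_nil, List.nil_append] at hd
    rw [add_sub_cancel_right] at hv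
    simp only [show (1 : ℤ) - 1 = 0 by norm_num] at hv
    rw [hd, zpow_add₀ hneg] at hv
    refine rep_assemble _ _ _ _ _ _ _ _ _ _ _ hv hreg ?_
    rw [hlen, ← sgn_intCast]
    simp only [← sgn_add, List.length_nil, length_iv]
    congr 1
    simp only [min_eq_right (show h ≤ p by omega),
      min_eq_left (show q ≤ t by omega),
      tn_pos (show 0 ≤ p - N by omega),
      tn_pos (show 0 ≤ q - N by omega),
      tn_pos (show 0 ≤ t - N by omega),
      tn_pos (show 0 ≤ h - N by omega),
      tn_pos (show 0 ≤ p - h by omega),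
      tn_neg (show h - p ≤ 0 by omega),
      tn_neg (show q - t ≤ 0 by omega),
      tn_pos (show 0 ≤ t - q by omega),
      tn_neg (show (a - ((B1.length : ℤ) - F1.length) - ((B2.length : ℤ) - F2.length)) - (a - s - ((B1.length : ℤ) - F1.length)) ≤ 0 by omega),
      tn_pos (show 0 ≤ (-a + ((B1.length : ℤ) - F1.length) + ((B2.length : ℤ) - F2.length)) - (s - a + ((B1.length : ℤ) - F1.length)) by omega)]
    simp only [eq, et, eh]
    push_cast
    generalize (p : ZMod 2) = xp, (N : ZMod 2) = xN, (a : ZMod 2) = xa, (s : ZMod 2) = xs,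
      (B1.length : ZMod 2) = xm1, (B2.length : ZMod 2) = xm2, (F1.length : ZMod 2) = xn1,
      (F2.length : ZMod 2) = xn2
    have idem := zm2
    clear * - idem
    grind [idem xp, idem xN, idem xa, idem xs, idem xm1, idem xm2, idem xn1, idem xn2]
  · have hv := h4 a s (by omega) (by omega) ha hc2 hc1 u
    rw [seg_eq_iv, seg_eq_iv] at hv
    simp only [show iv 0 (s + ((B1.length : ℤ) - F1.length)) = [] from iv_nil (by omega),
      show iv (s - a + ((B1.length : ℤ) - F1.length)) (-a + ((B1.length : ℤ) - F1.length) + ((B2.length : ℤ) - F2.length)) = [] from iv_nil (by omega), List.append_nil, List.nil_append] at hd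
    rw [add_sub_cancel_right] at hv
    simp only [show (1 : ℤ) - 1 = 0 by norm_num] at hv
    rw [hd, zpow_add₀ hneg] at hv
    refine rep_assemble _ _ _ _ _ _ _ _ _ _ _ hv hreg ?_
    rw [hlen, ← sgn_intCast]
    simp only [← sgn_add, List.length_nil, length_iv]
    congr 1
    simp only [min_eq_right (show h ≤ p by omega),
      min_eq_right (show t ≤ q by omega),
      tn_pos (show 0 ≤ p - N by omega),
      tn_pos (show 0 ≤ q - N by omega),
      tn_pos (show 0 ≤ t - N by omega),
      tn_pos (show 0 ≤ h - N by omega),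
      tn_pos (show 0 ≤ p - h by omega),
      tn_neg (show h - p ≤ 0 by omega),
      tn_pos (show 0 ≤ q - t by omega),
      tn_neg (show t - q ≤ 0 by omega),
      tn_pos (show 0 ≤ (a - ((B1.length : ℤ) - F1.length) - ((B2.length : ℤ) - F2.length)) - (a - s - ((B1.length : ℤ) - F1.length)) by omega)]
    simp only [eq, et, eh]
    push_cast
    generalize (p : ZMod 2) = xp, (N : ZMod 2) = xN, (a : ZMod 2) = xa, (s : ZMod 2) = xs,
      (B1.length : ZMod 2) = xm1, (B2.length : ZMod 2) = xm2, (F1.length : ZMod 2) = xn1,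
      (F2.length : ZMod 2) = xn2
    have idem := zm2
    clear * - idem
    grind [idem xp, idem xN, idem xa, idem xs, idem xm1, idem xm2, idem xn1, idem xn2]

end Rep

/-! ### Peeling rows and columns -/

section Peel

variable {ι : Type*} (X : ℤ → ι → ι → ℂ) (c r : ℤ → ι → ℂ)

/-- The big determinant with additional leading rows and columns. -/
noncomputable def G (K1 : List (RowK ι)) (K2 : List (ColK ι)) (B1 B2 F : List ι)
    (N p q t h : ℤ) : ℂ :=
  listDet (K1 ++ ((iv N p).map RowK.P1 ++ ((iv N q).map RowK.D ++ rowsB B1 B2)))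
    (K2 ++ ((iv N h).map ColK.T1 ++ ((iv N t).map ColK.S ++ F.map ColK.F))) (ent X c r N N)

theorem Mdet_eq_G (B1 B2 F : List ι) (N p q t h : ℤ) :
    Mdet X c r B1 B2 F N p q t h = G X c r [] [] B1 B2 F N p q t h := rfl

variable (K1 : List (RowK ι)) (K2 : List (ColK ι)) (B1 B2 F : List ι) (N p q t h : ℤ)

theorem G_P (hp : N ≤ p) : G X c r K1 K2 B1 B2 F N (p + 1) q t h =
    sgn ((p - N : ℤ) : ZMod 2) * G X c r (K1 ++ [RowK.P1 (p + 1)]) K2 B1 B2 F N p q t h := by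
  unfold G
  rw [iv_snoc hp, List.map_append, List.append_assoc, List.map_singleton, List.singleton_append,
    listDet_move, List.length_map, length_iv, tn_pos (by omega), List.append_assoc K1,
    List.singleton_append]

theorem G_D (hp : N ≤ p) (hq : N ≤ q) : G X c r K1 K2 B1 B2 F N p (q + 1) t h =
    sgn (((p - N) + (q - N) : ℤ) : ZMod 2) *
      G X c r (K1 ++ [RowK.D (q + 1)]) K2 B1 B2 F N p q t h := by
  unfold G
  rw [iv_snoc hq, List.map_append, List.append_assoc, List.map_singleton, List.singleton_append,
    ← List.append_assoc ((iv N p).map RowK.P1), listDet_move, List.length_append, Nat.cast_add,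
    List.length_map, List.length_map, length_iv, length_iv, tn_pos (by omega), tn_pos (by omega),
    List.append_assoc K1, List.singleton_append, List.append_assoc, Int.cast_add]

theorem G_b1 (L1 L2 : List ι) (b : ι) (hp : N ≤ p) (hq : N ≤ q) :
    G X c r K1 K2 (L1 ++ b :: L2) B2 F N p q t h =
    sgn (((p - N) + (q - N) + L1.length : ℤ) : ZMod 2) *
      G X c r (K1 ++ [RowK.b1 b]) K2 (L1 ++ L2) B2 F N p q t h := by
  unfold G rowsB
  have := listDet_move K1 ((iv N p).map RowK.P1 ++ ((iv N q).map RowK.D ++ L1.map RowK.b1))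
    (L2.map RowK.b1 ++ B2.map RowK.b2) (RowK.b1 b)
    (K2 ++ ((iv N h).map ColK.T1 ++ ((iv N t).map ColK.S ++ F.map ColK.F))) (ent X c r N N)
  simp only [List.length_append, List.length_map, length_iv, Nat.cast_add,
    tn_pos (show 0 ≤ p - N by omega), tn_pos (show 0 ≤ q - N by omega), List.append_assoc] at this
  simp only [List.map_append, List.map_cons, List.append_assoc, List.cons_append, List.nil_append,
    Int.cast_add, Int.cast_natCast]
  rw [this, add_assoc]

theorem G_b2 (L1 L2 : List ι) (b : ι) (hp : N ≤ p) (hq : N ≤ q) :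
    G X c r K1 K2 B1 (L1 ++ b :: L2) F N p q t h =
    sgn (((p - N) + (q - N) + B1.length + L1.length : ℤ) : ZMod 2) *
      G X c r (K1 ++ [RowK.b2 b]) K2 B1 (L1 ++ L2) F N p q t h := by
  unfold G rowsB
  have := listDet_move K1 ((iv N p).map RowK.P1 ++ ((iv N q).map RowK.D ++
    (B1.map RowK.b1 ++ L1.map RowK.b2)))
    (L2.map RowK.b2) (RowK.b2 b)
    (K2 ++ ((iv N h).map ColK.T1 ++ ((iv N t).map ColK.S ++ F.map ColK.F))) (ent X c r N N)
  simp only [List.length_append, List.length_map, length_iv, Nat.cast_add,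
    tn_pos (show 0 ≤ p - N by omega), tn_pos (show 0 ≤ q - N by omega), List.append_assoc] at this
  simp only [List.map_append, List.map_cons, List.append_assoc, List.cons_append, List.nil_append,
    Int.cast_add, Int.cast_natCast]
  rw [this, add_assoc, add_assoc]

theorem G_T (hh : N ≤ h) : G X c r K1 K2 B1 B2 F N p q t (h + 1) =
    sgn ((h - N : ℤ) : ZMod 2) * G X c r K1 (K2 ++ [ColK.T1 (h + 1)]) B1 B2 F N p q t h := by
  unfold G
  rw [iv_snoc hh, List.map_append, List.append_assoc, List.map_singleton, List.singleton_append,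
    listDet_move_col, List.length_map, length_iv, tn_pos (by omega), List.append_assoc K2,
    List.singleton_append]

theorem G_S (hh : N ≤ h) (ht : N ≤ t) : G X c r K1 K2 B1 B2 F N p q (t + 1) h =
    sgn (((h - N) + (t - N) : ℤ) : ZMod 2) *
      G X c r K1 (K2 ++ [ColK.S (t + 1)]) B1 B2 F N p q t h := by
  unfold G
  rw [iv_snoc ht, List.map_append, List.append_assoc, List.map_singleton, List.singleton_append,
    ← List.append_assoc ((iv N h).map ColK.T1), listDet_move_col, List.length_append, Nat.cast_add,
    List.length_map, List.length_map, length_iv, length_iv, tn_pos (by omega), tn_pos (by omega),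
    List.append_assoc K2, List.singleton_append, List.append_assoc, Int.cast_add]

theorem G_F (L1 L2 : List ι) (f : ι) (hh : N ≤ h) (ht : N ≤ t) :
    G X c r K1 K2 B1 B2 (L1 ++ f :: L2) N p q t h =
    sgn (((h - N) + (t - N) + L1.length : ℤ) : ZMod 2) *
      G X c r K1 (K2 ++ [ColK.F f]) B1 B2 (L1 ++ L2) N p q t h := by
  unfold G
  have := listDet_move_col (K1 ++ ((iv N p).map RowK.P1 ++ ((iv N q).map RowK.D ++ rowsB B1 B2)))
    K2 ((iv N h).map ColK.T1 ++ ((iv N t).map ColK.S ++ L1.map ColK.F))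
    (L2.map ColK.F) (ColK.F f) (ent X c r N N)
  simp only [List.length_append, List.length_map, length_iv, Nat.cast_add,
    tn_pos (show 0 ≤ h - N by omega), tn_pos (show 0 ≤ t - N by omega), List.append_assoc] at this
  simp only [List.map_append, List.map_cons, List.append_assoc, List.cons_append, List.nil_append,
    Int.cast_add, Int.cast_natCast]
  rw [this, add_assoc]

theorem G_pl31 (u v w : RowK ι) (x : ColK ι) :
    G X c r [u] [] B1 B2 F N p q t h * G X c r [v, w] [x] B1 B2 F N p q t h -
    G X c r [v] [] B1 B2 F N p q t h * G X c r [u, w] [x] B1 B2 F N p q t h +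
    G X c r [w] [] B1 B2 F N p q t h * G X c r [u, v] [x] B1 B2 F N p q t h = 0 :=
  pluecker_3r1c x u v w _ _ _

theorem G_pl22 (y x : RowK ι) (u v : ColK ι) :
    G X c r [] [] B1 B2 F N p q t h * G X c r [y, x] [u, v] B1 B2 F N p q t h -
    G X c r [y] [u] B1 B2 F N p q t h * G X c r [x] [v] B1 B2 F N p q t h +
    G X c r [y] [v] B1 B2 F N p q t h * G X c r [x] [u] B1 B2 F N p q t h = 0 := by
  have := pluecker_2r2c x y u v
    ((iv N p).map RowK.P1 ++ ((iv N q).map RowK.D ++ rowsB B1 B2))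
    ((iv N h).map ColK.T1 ++ ((iv N t).map ColK.S ++ F.map ColK.F)) (ent X c r N N)
  unfold G
  simp only [List.nil_append, List.cons_append]
  linear_combination this

theorem G_pl13 (x : RowK ι) (u v w : ColK ι) :
    G X c r [] [u] B1 B2 F N p q t h * G X c r [x] [v, w] B1 B2 F N p q t h -
    G X c r [] [v] B1 B2 F N p q t h * G X c r [x] [u, w] B1 B2 F N p q t h +
    G X c r [] [w] B1 B2 F N p q t h * G X c r [x] [u, v] B1 B2 F N p q t h = 0 :=
  pluecker_1r3c x u v w _ _ _

end Peel

section RepPred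

variable {ι : Type*} [DecidableEq ι] (z : ι → ℂ) (hbar : ℂ) (Q : Finset ι → ℂ → ℂ) (u0 : ℂ)

/-- The standing assumptions on the index lists. -/
def Good (B1 B2 F : List ι) : Prop :=
  (∀ b ∈ B1 ++ B2, z b ≠ 0) ∧ (∀ f ∈ F, z f ≠ 0) ∧
    ∀ u0, Xrec (XQ z hbar Q u0) (cQ z hbar Q u0) (rQ z hbar Q u0) B1 B2 F

/-- Uniform representation, as a predicate with integer lengths. -/
def RepP (B1 B2 F : List ι) (T : ℤ → ℤ → ℂ → ℂ) (m1 m2 n1 n2 : ℤ) (K : ℂ) : Prop :=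
  ∀ (a s k N p q t h : ℤ) (u : ℂ), N ≤ p → N ≤ q → N ≤ t → N ≤ h →
      p = k → q = k + s + m1 - n1 - a → t = k + m1 - n1 + m2 - n2 - a → h = k + s + m1 - n1 →
      u = u0 + ((2 * k - (a - s - (m1 - n1) - (m2 - n2)) : ℤ) : ℂ) * hbar →
      T a s u = K * Wt z (B1 ++ B2) F ^ (-k) *
        sgn (((k - N) * (s + m1 - n1) + (k - N) + (s + m1 - n1) + a * (m1 + n1 + n2) : ℤ) : ZMod 2) *
        G (XQ z hbar Q u0) (cQ z hbar Q u0) (rQ z hbar Q u0) [] [] B1 B2 F N p q t h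

theorem exists_RepP (B1 B2 F1 F2 : List ι) (T : ℤ → ℤ → ℂ → ℂ)
    (hT : IsT z hbar Q B1 B2 F1 F2 T) (hG : Good z hbar Q B1 B2 (F1 ++ F2)) (m1 m2 n1 n2 : ℤ)
    (h1 : m1 = B1.length) (h2 : m2 = B2.length) (h3 : n1 = F1.length) (h4 : n2 = F2.length) :
    ∃ K, RepP z hbar Q u0 B1 B2 (F1 ++ F2) T m1 m2 n1 n2 K := by
  obtain ⟨K, hK⟩ := Rep z hbar Q u0 B1 B2 F1 F2 T hT hG.1 hG.2.1 (hG.2.2 u0)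
  subst h1 h2 h3 h4
  exact ⟨K, hK⟩

theorem Wt_ne (B F : List ι) (hB : ∀ b ∈ B, z b ≠ 0) (hF : ∀ f ∈ F, z f ≠ 0) : Wt z B F ≠ 0 := by
  unfold Wt
  refine mul_ne_zero (List.prod_ne_zero ?_) (inv_ne_zero (List.prod_ne_zero ?_))
  · intro h
    obtain ⟨b, hb, h0⟩ := List.mem_map.mp h
    exact hB b hb h0
  · intro h
    obtain ⟨b, hb, h0⟩ := List.mem_map.mp h
    exact hF b hb h0

theorem Wt_b (L1 L2 F : List ι) (b : ι) : Wt z (L1 ++ b :: L2) F = z b * Wt z (L1 ++ L2) F := by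
  unfold Wt
  simp only [List.map_append, List.map_cons, List.prod_append, List.prod_cons]
  ring

theorem Wt_f (L1 L2 B : List ι) (f : ι) (hf : z f ≠ 0) :
    Wt z B (L1 ++ L2) = z f * Wt z B (L1 ++ f :: L2) := by
  unfold Wt
  simp only [List.map_append, List.map_cons, List.prod_append, List.prod_cons, mul_inv]
  field_simp

theorem zw_eq (x w : ℂ) (hx : x ≠ 0) (hw : w ≠ 0) (e i j : ℤ) :
    x ^ e * ((x * w) ^ (-i) * w ^ (-j)) = x ^ (e - i) * w ^ (-i - j) := by
  rw [mul_zpow, sub_eq_add_neg, zpow_add₀ hx, sub_eq_add_neg (-i), zpow_add₀ hw]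
  ring

end RepPred

/-! ### The eight equations -/

section Equations

theorem sgn_acc (c g : ℂ) (x y : ZMod 2) : c * sgn x * (sgn y * g) = c * sgn (x + y) * g := by
  rw [sgn_add]; ring

/-- Product of two represented values (next pairs). -/
theorem pair_next {x w W V1 V2 K K' g g' : ℂ} {i j : ℤ} {y y' : ZMod 2} (hx : x ≠ 0) (hw : w ≠ 0)
    (hW : W = x * w) (h1 : V1 = K * W ^ (-i) * sgn y * g) (h2 : V2 = K' * w ^ (-j) * sgn y' * g')
    (e : ℤ) (c : ℂ) (s1 : ZMod 2) (hc : x ^ (e - i) * w ^ (-i - j) = c) (hs : y + y' = s1) :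
    x ^ e * (V1 * V2) = (K * K') * c * sgn s1 * (g * g') := by
  rw [h1, h2, ← hs, ← hc, ← zw_eq x w hx hw, hW, sgn_add]
  ring

/-- Product of two represented values (first pair). -/
theorem pair_one {x w W V1 V2 K K' g g' : ℂ} {i j : ℤ} {y y' : ZMod 2} (hx : x ≠ 0) (hw : w ≠ 0)
    (hW : W = x * w) (h1 : V1 = K * W ^ (-i) * sgn y * g) (h2 : V2 = K' * w ^ (-j) * sgn y' * g')
    (e : ℤ) : ∃ (c : ℂ) (s1 : ZMod 2), c = x ^ (e - i) * w ^ (-i - j) ∧ s1 = y + y' ∧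
    x ^ e * (V1 * V2) = (K * K') * c * sgn s1 * (g * g') :=
  ⟨_, _, rfl, rfl, pair_next hx hw hW h1 h2 e _ _ rfl rfl⟩

variable {ι : Type*} [DecidableEq ι] (z : ι → ℂ) (hbar : ℂ) (Q : Finset ι → ℂ → ℂ)

theorem backlund_eq1 (A C B2 F : List ι) (x : ι) (T TL : ℤ → ℤ → ℂ → ℂ) (m1 m2 n1 n2 : ℤ)
    (hT : ∀ u0, ∃ K, RepP z hbar Q u0 (A ++ x :: C) B2 F T (m1 + 1) m2 n1 n2 K)
    (hL : ∀ u0, ∃ K, RepP z hbar Q u0 (A ++ C) B2 F TL m1 m2 n1 n2 K)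
    (hx : z x ≠ 0) (hw : Wt z ((A ++ C) ++ B2) F ≠ 0)
    (hW : Wt z ((A ++ x :: C) ++ B2) F = z x * Wt z ((A ++ C) ++ B2) F)
    (a s : ℤ) (u : ℂ) :
    T (a + 1) s (u - hbar) * TL a s (u + hbar) - T a s u * TL (a + 1) s u =
      z x * T (a + 1) (s - 1) u * TL a (s + 1) u := by
  obtain ⟨p⟩ : Nonempty ℤ := ⟨0⟩
  obtain ⟨q, hq⟩ : ∃ q : ℤ, q = p + s + m1 - n1 - a := ⟨_, rfl⟩
  obtain ⟨t, ht⟩ : ∃ t : ℤ, t = p + m1 - n1 + m2 - n2 - a := ⟨_, rfl⟩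
  obtain ⟨h, hh⟩ : ∃ h : ℤ, h = p + s + m1 - n1 + 1 := ⟨_, rfl⟩
  obtain ⟨N, N1, N2, N3, N4⟩ : ∃ N : ℤ, N ≤ p ∧ N ≤ q ∧ N ≤ t ∧ N ≤ h :=
    ⟨min (min p q) (min t h), by omega, by omega, by omega, by omega⟩
  obtain ⟨u0, hu⟩ : ∃ u0 : ℂ, u = u0 +
      ((2 * (p) - ((a) - (s) - ((m1 + 1) - n1) - (m2 - n2)) : ℤ) : ℂ) * hbar :=
    ⟨u - _, (sub_add_cancel _ _).symm⟩
  obtain ⟨K, hK⟩ := hT u0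
  obtain ⟨K', hK'⟩ := hL u0
  have e1 := hK (a + 1) s p N p q t h (u - hbar) (by omega) (by omega) (by omega)
    (by omega) rfl (by omega) (by omega) (by omega) (by push_cast at hu ⊢; linear_combination hu)
  rw [G_b1 _ _ _ _ _ _ _ _ _ _ _ _ _ _ _ (by omega) (by omega)] at e1
  simp only [List.nil_append, List.cons_append, sgn_acc] at e1
  have e2 := hK' a s (p + 1) N (p + 1) (q + 1) (t + 1) h (u + hbar) (by omega) (by omega) (by omega)
    (by omega) rfl (by omega) (by omega) (by omega) (by push_cast at hu ⊢; linear_combination hu)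
  rw [G_P _ _ _ _ _ _ _ _ _ _ _ _ _ N1, 
    G_D _ _ _ _ _ _ _ _ _ _ _ _ _ N1 N2, 
    G_S _ _ _ _ _ _ _ _ _ _ _ _ _ (by omega) N3] at e2
  simp only [List.nil_append, List.cons_append, sgn_acc] at e2
  obtain ⟨c, s1, hc, hs, v1⟩ := pair_one hx hw hW e1 e2 0
  have e3 := hK a s p N p (q + 1) (t + 1) h u (by omega) (by omega) (by omega)
    (by omega) rfl (by omega) (by omega) (by omega) (by push_cast at hu ⊢; linear_combination hu)
  rw [G_b1 _ _ _ _ _ _ _ _ _ _ _ _ _ _ _ (by omega) (by omega), 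
    G_D _ _ _ _ _ _ _ _ _ _ _ _ _ N1 N2, 
    G_S _ _ _ _ _ _ _ _ _ _ _ _ _ (by omega) N3] at e3
  simp only [List.nil_append, List.cons_append, sgn_acc] at e3
  have e4 := hK' (a + 1) s (p + 1) N (p + 1) q t h u (by omega) (by omega) (by omega)
    (by omega) rfl (by omega) (by omega) (by omega) (by push_cast at hu ⊢; linear_combination hu)
  rw [G_P _ _ _ _ _ _ _ _ _ _ _ _ _ N1] at e4
  simp only [List.nil_append, List.cons_append, sgn_acc] at e4
  have v2 := pair_next hx hw hW e3 e4 0 c (s1)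
    (by refine Eq.trans ?_ hc.symm; congr 2 <;> ring) (by
      simp only [hs, hq, ht, hh]
      push_cast
      generalize (p : ZMod 2) = xp, (N : ZMod 2) = xN, (a : ZMod 2) = xa, (s : ZMod 2) = xs,
        (m1 : ZMod 2) = xm1, (m2 : ZMod 2) = xm2, (n1 : ZMod 2) = xn1, (n2 : ZMod 2) = xn2,
        (A.length : ZMod 2) = xl
      clear * -
      grind)
  have e5 := hK (a + 1) (s - 1) (p + 1) N (p + 1) q (t + 1) h u (by omega) (by omega) (by omega)
    (by omega) rfl (by omega) (by omega) (by omega) (by push_cast at hu ⊢; linear_combination hu)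
  rw [G_b1 _ _ _ _ _ _ _ _ _ _ _ _ _ _ _ (by omega) (by omega), 
    G_P _ _ _ _ _ _ _ _ _ _ _ _ _ N1, 
    G_S _ _ _ _ _ _ _ _ _ _ _ _ _ (by omega) N3] at e5
  simp only [List.nil_append, List.cons_append, sgn_acc] at e5
  have e6 := hK' a (s + 1) p N p (q + 1) t h u (by omega) (by omega) (by omega)
    (by omega) rfl (by omega) (by omega) (by omega) (by push_cast at hu ⊢; linear_combination hu)
  rw [G_D _ _ _ _ _ _ _ _ _ _ _ _ _ N1 N2] at e6
  simp only [List.nil_append, List.cons_append, sgn_acc] at e6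
  have v3 := pair_next hx hw hW e5 e6 1 c (s1 + 1)
    (by refine Eq.trans ?_ hc.symm; congr 2 <;> ring) (by
      simp only [hs, hq, ht, hh]
      push_cast
      generalize (p : ZMod 2) = xp, (N : ZMod 2) = xN, (a : ZMod 2) = xa, (s : ZMod 2) = xs,
        (m1 : ZMod 2) = xm1, (m2 : ZMod 2) = xm2, (n1 : ZMod 2) = xn1, (n2 : ZMod 2) = xn2,
        (A.length : ZMod 2) = xl
      clear * -
      grind)
  simp only [sgn_add s1, sgn_one, zpow_zero, zpow_one, one_mul] at v1 v2 v3
  have hp := G_pl31 (XQ z hbar Q u0) (cQ z hbar Q u0) (rQ z hbar Q u0) (A ++ C) B2 F N p q t h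
    (RowK.b1 x) (RowK.P1 (p + 1)) (RowK.D (q + 1)) (ColK.S (t + 1))
  linear_combination (1) * v1 + (-1) * v2 + (-1) * v3 + (1) * ((K * K') * c * sgn s1) * hp

theorem backlund_eq2 (A C B2 F : List ι) (x : ι) (T TL : ℤ → ℤ → ℂ → ℂ) (m1 m2 n1 n2 : ℤ)
    (hT : ∀ u0, ∃ K, RepP z hbar Q u0 (A ++ x :: C) B2 F T (m1 + 1) m2 n1 n2 K)
    (hL : ∀ u0, ∃ K, RepP z hbar Q u0 (A ++ C) B2 F TL m1 m2 n1 n2 K)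
    (hx : z x ≠ 0) (hw : Wt z ((A ++ C) ++ B2) F ≠ 0)
    (hW : Wt z ((A ++ x :: C) ++ B2) F = z x * Wt z ((A ++ C) ++ B2) F)
    (a s : ℤ) (u : ℂ) :
    T a (s + 1) u * TL a s u - T a s (u - hbar) * TL a (s + 1) (u + hbar) =
      z x * T (a + 1) s u * TL (a - 1) (s + 1) u := by
  obtain ⟨p⟩ : Nonempty ℤ := ⟨0⟩
  obtain ⟨q, hq⟩ : ∃ q : ℤ, q = p + s + m1 - n1 - a + 1 := ⟨_, rfl⟩
  obtain ⟨t, ht⟩ : ∃ t : ℤ, t = p + m1 - n1 + m2 - n2 - a + 1 := ⟨_, rfl⟩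
  obtain ⟨h, hh⟩ : ∃ h : ℤ, h = p + s + m1 - n1 + 1 := ⟨_, rfl⟩
  obtain ⟨N, N1, N2, N3, N4⟩ : ∃ N : ℤ, N ≤ p ∧ N ≤ q ∧ N ≤ t ∧ N ≤ h :=
    ⟨min (min p q) (min t h), by omega, by omega, by omega, by omega⟩
  obtain ⟨u0, hu⟩ : ∃ u0 : ℂ, u = u0 +
      ((2 * (p) - ((a) - (s + 1) - ((m1 + 1) - n1) - (m2 - n2)) : ℤ) : ℂ) * hbar :=
    ⟨u - _, (sub_add_cancel _ _).symm⟩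
  obtain ⟨K, hK⟩ := hT u0
  obtain ⟨K', hK'⟩ := hL u0
  have e1 := hK a (s + 1) p N p (q + 1) t (h + 1) u (by omega) (by omega) (by omega)
    (by omega) rfl (by omega) (by omega) (by omega) (by push_cast at hu ⊢; linear_combination hu)
  rw [G_b1 _ _ _ _ _ _ _ _ _ _ _ _ _ _ _ (by omega) (by omega), 
    G_D _ _ _ _ _ _ _ _ _ _ _ _ _ N1 N2, 
    G_T _ _ _ _ _ _ _ _ _ _ _ _ _ N4] at e1
  simp only [List.nil_append, List.cons_append, sgn_acc] at e1
  have e2 := hK' a s (p + 1) N (p + 1) q t h u (by omega) (by omega) (by omega)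
    (by omega) rfl (by omega) (by omega) (by omega) (by push_cast at hu ⊢; linear_combination hu)
  rw [G_P _ _ _ _ _ _ _ _ _ _ _ _ _ N1] at e2
  simp only [List.nil_append, List.cons_append, sgn_acc] at e2
  obtain ⟨c, s1, hc, hs, v1⟩ := pair_one hx hw hW e1 e2 0
  have e3 := hK a s p N p q t h (u - hbar) (by omega) (by omega) (by omega)
    (by omega) rfl (by omega) (by omega) (by omega) (by push_cast at hu ⊢; linear_combination hu)
  rw [G_b1 _ _ _ _ _ _ _ _ _ _ _ _ _ _ _ (by omega) (by omega)] at e3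
  simp only [List.nil_append, List.cons_append, sgn_acc] at e3
  have e4 := hK' a (s + 1) (p + 1) N (p + 1) (q + 1) t (h + 1) (u + hbar) (by omega) (by omega) (by omega)
    (by omega) rfl (by omega) (by omega) (by omega) (by push_cast at hu ⊢; linear_combination hu)
  rw [G_P _ _ _ _ _ _ _ _ _ _ _ _ _ N1, 
    G_D _ _ _ _ _ _ _ _ _ _ _ _ _ N1 N2, 
    G_T _ _ _ _ _ _ _ _ _ _ _ _ _ N4] at e4
  simp only [List.nil_append, List.cons_append, sgn_acc] at e4
  have v2 := pair_next hx hw hW e3 e4 0 c (s1)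
    (by refine Eq.trans ?_ hc.symm; congr 2 <;> ring) (by
      simp only [hs, hq, ht, hh]
      push_cast
      generalize (p : ZMod 2) = xp, (N : ZMod 2) = xN, (a : ZMod 2) = xa, (s : ZMod 2) = xs,
        (m1 : ZMod 2) = xm1, (m2 : ZMod 2) = xm2, (n1 : ZMod 2) = xn1, (n2 : ZMod 2) = xn2,
        (A.length : ZMod 2) = xl
      clear * -
      grind)
  have e5 := hK (a + 1) s (p + 1) N (p + 1) q t (h + 1) u (by omega) (by omega) (by omega)
    (by omega) rfl (by omega) (by omega) (by omega) (by push_cast at hu ⊢; linear_combination hu)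
  rw [G_b1 _ _ _ _ _ _ _ _ _ _ _ _ _ _ _ (by omega) (by omega), 
    G_P _ _ _ _ _ _ _ _ _ _ _ _ _ N1, 
    G_T _ _ _ _ _ _ _ _ _ _ _ _ _ N4] at e5
  simp only [List.nil_append, List.cons_append, sgn_acc] at e5
  have e6 := hK' (a - 1) (s + 1) p N p (q + 1) t h u (by omega) (by omega) (by omega)
    (by omega) rfl (by omega) (by omega) (by omega) (by push_cast at hu ⊢; linear_combination hu)
  rw [G_D _ _ _ _ _ _ _ _ _ _ _ _ _ N1 N2] at e6
  simp only [List.nil_append, List.cons_append, sgn_acc] at e6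
  have v3 := pair_next hx hw hW e5 e6 1 c (s1)
    (by refine Eq.trans ?_ hc.symm; congr 2 <;> ring) (by
      simp only [hs, hq, ht, hh]
      push_cast
      generalize (p : ZMod 2) = xp, (N : ZMod 2) = xN, (a : ZMod 2) = xa, (s : ZMod 2) = xs,
        (m1 : ZMod 2) = xm1, (m2 : ZMod 2) = xm2, (n1 : ZMod 2) = xn1, (n2 : ZMod 2) = xn2,
        (A.length : ZMod 2) = xl
      clear * -
      grind)
  simp only [zpow_zero, zpow_one, one_mul] at v1 v2 v3
  have hp := G_pl31 (XQ z hbar Q u0) (cQ z hbar Q u0) (rQ z hbar Q u0) (A ++ C) B2 F N p q t h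
    (RowK.b1 x) (RowK.P1 (p + 1)) (RowK.D (q + 1)) (ColK.T1 (h + 1))
  linear_combination (1) * v1 + (-1) * v2 + (-1) * v3 + (-1) * ((K * K') * c * sgn s1) * hp

theorem backlund_eq3 (A C B1 B2 : List ι) (x : ι) (T TL : ℤ → ℤ → ℂ → ℂ) (m1 m2 n1 n2 : ℤ)
    (hT : ∀ u0, ∃ K, RepP z hbar Q u0 B1 B2 (A ++ x :: C) T m1 m2 (n1 + 1) n2 K)
    (hL : ∀ u0, ∃ K, RepP z hbar Q u0 B1 B2 (A ++ C) TL m1 m2 n1 n2 K)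
    (hx : z x ≠ 0) (hw : Wt z (B1 ++ B2) (A ++ x :: C) ≠ 0)
    (hW : Wt z (B1 ++ B2) (A ++ C) = z x * Wt z (B1 ++ B2) (A ++ x :: C))
    (a s : ℤ) (u : ℂ) :
    TL (a + 1) s (u - hbar) * T a s (u + hbar) - TL a s u * T (a + 1) s u =
      z x * TL (a + 1) (s - 1) u * T a (s + 1) u := by
  obtain ⟨p⟩ : Nonempty ℤ := ⟨0⟩
  obtain ⟨q, hq⟩ : ∃ q : ℤ, q = p + s + m1 - n1 - a - 1 := ⟨_, rfl⟩
  obtain ⟨t, ht⟩ : ∃ t : ℤ, t = p + m1 - n1 + m2 - n2 - a - 1 := ⟨_, rfl⟩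
  obtain ⟨h, hh⟩ : ∃ h : ℤ, h = p + s + m1 - n1 := ⟨_, rfl⟩
  obtain ⟨N, N1, N2, N3, N4⟩ : ∃ N : ℤ, N ≤ p ∧ N ≤ q ∧ N ≤ t ∧ N ≤ h :=
    ⟨min (min p q) (min t h), by omega, by omega, by omega, by omega⟩
  obtain ⟨u0, hu⟩ : ∃ u0 : ℂ, u = u0 +
      ((2 * (p) - ((a) - (s) - (m1 - n1) - (m2 - n2)) : ℤ) : ℂ) * hbar :=
    ⟨u - _, (sub_add_cancel _ _).symm⟩
  obtain ⟨K, hK⟩ := hT u0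
  obtain ⟨K', hK'⟩ := hL u0
  have e1 := hK' (a + 1) s p N p q t h (u - hbar) (by omega) (by omega) (by omega)
    (by omega) rfl (by omega) (by omega) (by omega) (by push_cast at hu ⊢; linear_combination hu)
  have e2 := hK a s (p + 1) N (p + 1) (q + 1) (t + 1) h (u + hbar) (by omega) (by omega) (by omega)
    (by omega) rfl (by omega) (by omega) (by omega) (by push_cast at hu ⊢; linear_combination hu)
  rw [G_P _ _ _ _ _ _ _ _ _ _ _ _ _ N1, 
    G_D _ _ _ _ _ _ _ _ _ _ _ _ _ N1 N2, 
    G_F _ _ _ _ _ _ _ _ _ _ _ _ _ _ _ (by omega) (by omega), 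
    G_S _ _ _ _ _ _ _ _ _ _ _ _ _ (by omega) N3] at e2
  simp only [List.nil_append, List.cons_append, sgn_acc] at e2
  obtain ⟨c, s1, hc, hs, v1⟩ := pair_one hx hw hW e1 e2 0
  have e3 := hK' a s p N p (q + 1) (t + 1) h u (by omega) (by omega) (by omega)
    (by omega) rfl (by omega) (by omega) (by omega) (by push_cast at hu ⊢; linear_combination hu)
  rw [G_D _ _ _ _ _ _ _ _ _ _ _ _ _ N1 N2, 
    G_S _ _ _ _ _ _ _ _ _ _ _ _ _ (by omega) N3] at e3
  simp only [List.nil_append, List.cons_append, sgn_acc] at e3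
  have e4 := hK (a + 1) s (p + 1) N (p + 1) q t h u (by omega) (by omega) (by omega)
    (by omega) rfl (by omega) (by omega) (by omega) (by push_cast at hu ⊢; linear_combination hu)
  rw [G_P _ _ _ _ _ _ _ _ _ _ _ _ _ N1, 
    G_F _ _ _ _ _ _ _ _ _ _ _ _ _ _ _ (by omega) (by omega)] at e4
  simp only [List.nil_append, List.cons_append, sgn_acc] at e4
  have v2 := pair_next hx hw hW e3 e4 0 c (s1)
    (by refine Eq.trans ?_ hc.symm; congr 2 <;> ring) (by
      simp only [hs, hq, ht, hh]
      push_cast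
      generalize (p : ZMod 2) = xp, (N : ZMod 2) = xN, (a : ZMod 2) = xa, (s : ZMod 2) = xs,
        (m1 : ZMod 2) = xm1, (m2 : ZMod 2) = xm2, (n1 : ZMod 2) = xn1, (n2 : ZMod 2) = xn2,
        (A.length : ZMod 2) = xl
      clear * -
      grind)
  have e5 := hK' (a + 1) (s - 1) (p + 1) N (p + 1) q (t + 1) h u (by omega) (by omega) (by omega)
    (by omega) rfl (by omega) (by omega) (by omega) (by push_cast at hu ⊢; linear_combination hu)
  rw [G_P _ _ _ _ _ _ _ _ _ _ _ _ _ N1, 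
    G_S _ _ _ _ _ _ _ _ _ _ _ _ _ (by omega) N3] at e5
  simp only [List.nil_append, List.cons_append, sgn_acc] at e5
  have e6 := hK a (s + 1) p N p (q + 1) t h u (by omega) (by omega) (by omega)
    (by omega) rfl (by omega) (by omega) (by omega) (by push_cast at hu ⊢; linear_combination hu)
  rw [G_D _ _ _ _ _ _ _ _ _ _ _ _ _ N1 N2, 
    G_F _ _ _ _ _ _ _ _ _ _ _ _ _ _ _ (by omega) (by omega)] at e6
  simp only [List.nil_append, List.cons_append, sgn_acc] at e6
  have v3 := pair_next hx hw hW e5 e6 1 c (s1 + 1)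
    (by refine Eq.trans ?_ hc.symm; congr 2 <;> ring) (by
      simp only [hs, hq, ht, hh]
      push_cast
      generalize (p : ZMod 2) = xp, (N : ZMod 2) = xN, (a : ZMod 2) = xa, (s : ZMod 2) = xs,
        (m1 : ZMod 2) = xm1, (m2 : ZMod 2) = xm2, (n1 : ZMod 2) = xn1, (n2 : ZMod 2) = xn2,
        (A.length : ZMod 2) = xl
      clear * -
      grind)
  simp only [sgn_add s1, sgn_one, zpow_zero, zpow_one, one_mul] at v1 v2 v3
  have hp := G_pl22 (XQ z hbar Q u0) (cQ z hbar Q u0) (rQ z hbar Q u0) B1 B2 (A ++ C) N p q t h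
    (RowK.P1 (p + 1)) (RowK.D (q + 1)) (ColK.F x) (ColK.S (t + 1))
  linear_combination (1) * v1 + (-1) * v2 + (-1) * v3 + (1) * ((K' * K) * c * sgn s1) * hp

theorem backlund_eq4 (A C B1 B2 : List ι) (x : ι) (T TL : ℤ → ℤ → ℂ → ℂ) (m1 m2 n1 n2 : ℤ)
    (hT : ∀ u0, ∃ K, RepP z hbar Q u0 B1 B2 (A ++ x :: C) T m1 m2 (n1 + 1) n2 K)
    (hL : ∀ u0, ∃ K, RepP z hbar Q u0 B1 B2 (A ++ C) TL m1 m2 n1 n2 K)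
    (hx : z x ≠ 0) (hw : Wt z (B1 ++ B2) (A ++ x :: C) ≠ 0)
    (hW : Wt z (B1 ++ B2) (A ++ C) = z x * Wt z (B1 ++ B2) (A ++ x :: C))
    (a s : ℤ) (u : ℂ) :
    TL a (s + 1) u * T a s u - TL a s (u - hbar) * T a (s + 1) (u + hbar) =
      z x * TL (a + 1) s u * T (a - 1) (s + 1) u := by
  obtain ⟨p⟩ : Nonempty ℤ := ⟨0⟩
  obtain ⟨q, hq⟩ : ∃ q : ℤ, q = p + s + m1 - n1 - a := ⟨_, rfl⟩
  obtain ⟨t, ht⟩ : ∃ t : ℤ, t = p + m1 - n1 + m2 - n2 - a := ⟨_, rfl⟩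
  obtain ⟨h, hh⟩ : ∃ h : ℤ, h = p + s + m1 - n1 := ⟨_, rfl⟩
  obtain ⟨N, N1, N2, N3, N4⟩ : ∃ N : ℤ, N ≤ p ∧ N ≤ q ∧ N ≤ t ∧ N ≤ h :=
    ⟨min (min p q) (min t h), by omega, by omega, by omega, by omega⟩
  obtain ⟨u0, hu⟩ : ∃ u0 : ℂ, u = u0 +
      ((2 * (p) - ((a) - (s + 1) - (m1 - n1) - (m2 - n2)) : ℤ) : ℂ) * hbar :=
    ⟨u - _, (sub_add_cancel _ _).symm⟩
  obtain ⟨K, hK⟩ := hT u0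
  obtain ⟨K', hK'⟩ := hL u0
  have e1 := hK' a (s + 1) p N p (q + 1) t (h + 1) u (by omega) (by omega) (by omega)
    (by omega) rfl (by omega) (by omega) (by omega) (by push_cast at hu ⊢; linear_combination hu)
  rw [G_D _ _ _ _ _ _ _ _ _ _ _ _ _ N1 N2, 
    G_T _ _ _ _ _ _ _ _ _ _ _ _ _ N4] at e1
  simp only [List.nil_append, List.cons_append, sgn_acc] at e1
  have e2 := hK a s (p + 1) N (p + 1) q t h u (by omega) (by omega) (by omega)
    (by omega) rfl (by omega) (by omega) (by omega) (by push_cast at hu ⊢; linear_combination hu)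
  rw [G_P _ _ _ _ _ _ _ _ _ _ _ _ _ N1, 
    G_F _ _ _ _ _ _ _ _ _ _ _ _ _ _ _ (by omega) (by omega)] at e2
  simp only [List.nil_append, List.cons_append, sgn_acc] at e2
  obtain ⟨c, s1, hc, hs, v1⟩ := pair_one hx hw hW e1 e2 0
  have e3 := hK' a s p N p q t h (u - hbar) (by omega) (by omega) (by omega)
    (by omega) rfl (by omega) (by omega) (by omega) (by push_cast at hu ⊢; linear_combination hu)
  have e4 := hK a (s + 1) (p + 1) N (p + 1) (q + 1) t (h + 1) (u + hbar) (by omega) (by omega) (by omega)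
    (by omega) rfl (by omega) (by omega) (by omega) (by push_cast at hu ⊢; linear_combination hu)
  rw [G_P _ _ _ _ _ _ _ _ _ _ _ _ _ N1, 
    G_D _ _ _ _ _ _ _ _ _ _ _ _ _ N1 N2, 
    G_F _ _ _ _ _ _ _ _ _ _ _ _ _ _ _ (by omega) (by omega), 
    G_T _ _ _ _ _ _ _ _ _ _ _ _ _ N4] at e4
  simp only [List.nil_append, List.cons_append, sgn_acc] at e4
  have v2 := pair_next hx hw hW e3 e4 0 c (s1)
    (by refine Eq.trans ?_ hc.symm; congr 2 <;> ring) (by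
      simp only [hs, hq, ht, hh]
      push_cast
      generalize (p : ZMod 2) = xp, (N : ZMod 2) = xN, (a : ZMod 2) = xa, (s : ZMod 2) = xs,
        (m1 : ZMod 2) = xm1, (m2 : ZMod 2) = xm2, (n1 : ZMod 2) = xn1, (n2 : ZMod 2) = xn2,
        (A.length : ZMod 2) = xl
      clear * -
      grind)
  have e5 := hK' (a + 1) s (p + 1) N (p + 1) q t (h + 1) u (by omega) (by omega) (by omega)
    (by omega) rfl (by omega) (by omega) (by omega) (by push_cast at hu ⊢; linear_combination hu)
  rw [G_P _ _ _ _ _ _ _ _ _ _ _ _ _ N1, 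
    G_T _ _ _ _ _ _ _ _ _ _ _ _ _ N4] at e5
  simp only [List.nil_append, List.cons_append, sgn_acc] at e5
  have e6 := hK (a - 1) (s + 1) p N p (q + 1) t h u (by omega) (by omega) (by omega)
    (by omega) rfl (by omega) (by omega) (by omega) (by push_cast at hu ⊢; linear_combination hu)
  rw [G_D _ _ _ _ _ _ _ _ _ _ _ _ _ N1 N2, 
    G_F _ _ _ _ _ _ _ _ _ _ _ _ _ _ _ (by omega) (by omega)] at e6
  simp only [List.nil_append, List.cons_append, sgn_acc] at e6
  have v3 := pair_next hx hw hW e5 e6 1 c (s1)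
    (by refine Eq.trans ?_ hc.symm; congr 2 <;> ring) (by
      simp only [hs, hq, ht, hh]
      push_cast
      generalize (p : ZMod 2) = xp, (N : ZMod 2) = xN, (a : ZMod 2) = xa, (s : ZMod 2) = xs,
        (m1 : ZMod 2) = xm1, (m2 : ZMod 2) = xm2, (n1 : ZMod 2) = xn1, (n2 : ZMod 2) = xn2,
        (A.length : ZMod 2) = xl
      clear * -
      grind)
  simp only [zpow_zero, zpow_one, one_mul] at v1 v2 v3
  have hp := G_pl22 (XQ z hbar Q u0) (cQ z hbar Q u0) (rQ z hbar Q u0) B1 B2 (A ++ C) N p q t h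
    (RowK.P1 (p + 1)) (RowK.D (q + 1)) (ColK.F x) (ColK.T1 (h + 1))
  linear_combination (1) * v1 + (-1) * v2 + (-1) * v3 + (-1) * ((K' * K) * c * sgn s1) * hp

theorem backlund_eq5 (A C B1 F : List ι) (x : ι) (T TL : ℤ → ℤ → ℂ → ℂ) (m1 m2 n1 n2 : ℤ)
    (hT : ∀ u0, ∃ K, RepP z hbar Q u0 B1 (A ++ x :: C) F T m1 (m2 + 1) n1 n2 K)
    (hL : ∀ u0, ∃ K, RepP z hbar Q u0 B1 (A ++ C) F TL m1 m2 n1 n2 K)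
    (hx : z x ≠ 0) (hw : Wt z (B1 ++ (A ++ C)) F ≠ 0)
    (hW : Wt z (B1 ++ (A ++ x :: C)) F = z x * Wt z (B1 ++ (A ++ C)) F)
    (a s : ℤ) (u : ℂ) :
    z x * T (a + 1) s (u + hbar) * TL a s (u - hbar) - T a s u * TL (a + 1) s u =
      T (a + 1) (s + 1) u * TL a (s - 1) u := by
  obtain ⟨p⟩ : Nonempty ℤ := ⟨0⟩
  obtain ⟨q, hq⟩ : ∃ q : ℤ, q = p + s + m1 - n1 - a := ⟨_, rfl⟩
  obtain ⟨t, ht⟩ : ∃ t : ℤ, t = p + m1 - n1 + m2 - n2 - a := ⟨_, rfl⟩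
  obtain ⟨h, hh⟩ : ∃ h : ℤ, h = p + s + m1 - n1 := ⟨_, rfl⟩
  obtain ⟨N, N1, N2, N3, N4⟩ : ∃ N : ℤ, N ≤ p ∧ N ≤ q ∧ N ≤ t ∧ N ≤ h :=
    ⟨min (min p q) (min t h), by omega, by omega, by omega, by omega⟩
  obtain ⟨u0, hu⟩ : ∃ u0 : ℂ, u = u0 +
      ((2 * (p) - ((a) - (s) - (m1 - n1) - ((m2 + 1) - n2)) : ℤ) : ℂ) * hbar :=
    ⟨u - _, (sub_add_cancel _ _).symm⟩
  obtain ⟨K, hK⟩ := hT u0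
  obtain ⟨K', hK'⟩ := hL u0
  have e1 := hK (a + 1) s (p + 1) N (p + 1) q (t + 1) (h + 1) (u + hbar) (by omega) (by omega) (by omega)
    (by omega) rfl (by omega) (by omega) (by omega) (by push_cast at hu ⊢; linear_combination hu)
  rw [G_b2 _ _ _ _ _ _ _ _ _ _ _ _ _ _ _ (by omega) (by omega), 
    G_P _ _ _ _ _ _ _ _ _ _ _ _ _ N1, 
    G_S _ _ _ _ _ _ _ _ _ _ _ _ _ (by omega) N3, 
    G_T _ _ _ _ _ _ _ _ _ _ _ _ _ N4] at e1
  simp only [List.nil_append, List.cons_append, sgn_acc] at e1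
  have e2 := hK' a s p N p q t h (u - hbar) (by omega) (by omega) (by omega)
    (by omega) rfl (by omega) (by omega) (by omega) (by push_cast at hu ⊢; linear_combination hu)
  obtain ⟨c, s1, hc, hs, v1⟩ := pair_one hx hw hW e1 e2 1
  have e3 := hK a s p N p q (t + 1) h u (by omega) (by omega) (by omega)
    (by omega) rfl (by omega) (by omega) (by omega) (by push_cast at hu ⊢; linear_combination hu)
  rw [G_b2 _ _ _ _ _ _ _ _ _ _ _ _ _ _ _ (by omega) (by omega), 
    G_S _ _ _ _ _ _ _ _ _ _ _ _ _ (by omega) N3] at e3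
  simp only [List.nil_append, List.cons_append, sgn_acc] at e3
  have e4 := hK' (a + 1) s (p + 1) N (p + 1) q t (h + 1) u (by omega) (by omega) (by omega)
    (by omega) rfl (by omega) (by omega) (by omega) (by push_cast at hu ⊢; linear_combination hu)
  rw [G_P _ _ _ _ _ _ _ _ _ _ _ _ _ N1, 
    G_T _ _ _ _ _ _ _ _ _ _ _ _ _ N4] at e4
  simp only [List.nil_append, List.cons_append, sgn_acc] at e4
  have v2 := pair_next hx hw hW e3 e4 0 c (s1)
    (by refine Eq.trans ?_ hc.symm; congr 2 <;> ring) (by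
      simp only [hs, hq, ht, hh]
      push_cast
      generalize (p : ZMod 2) = xp, (N : ZMod 2) = xN, (a : ZMod 2) = xa, (s : ZMod 2) = xs,
        (m1 : ZMod 2) = xm1, (m2 : ZMod 2) = xm2, (n1 : ZMod 2) = xn1, (n2 : ZMod 2) = xn2,
        (A.length : ZMod 2) = xl, (B1.length : ZMod 2) = xb
      clear * -
      grind)
  have e5 := hK (a + 1) (s + 1) p N p q t (h + 1) u (by omega) (by omega) (by omega)
    (by omega) rfl (by omega) (by omega) (by omega) (by push_cast at hu ⊢; linear_combination hu)
  rw [G_b2 _ _ _ _ _ _ _ _ _ _ _ _ _ _ _ (by omega) (by omega), 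
    G_T _ _ _ _ _ _ _ _ _ _ _ _ _ N4] at e5
  simp only [List.nil_append, List.cons_append, sgn_acc] at e5
  have e6 := hK' a (s - 1) (p + 1) N (p + 1) q (t + 1) h u (by omega) (by omega) (by omega)
    (by omega) rfl (by omega) (by omega) (by omega) (by push_cast at hu ⊢; linear_combination hu)
  rw [G_P _ _ _ _ _ _ _ _ _ _ _ _ _ N1, 
    G_S _ _ _ _ _ _ _ _ _ _ _ _ _ (by omega) N3] at e6
  simp only [List.nil_append, List.cons_append, sgn_acc] at e6
  have v3 := pair_next hx hw hW e5 e6 0 c (s1 + 1)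
    (by refine Eq.trans ?_ hc.symm; congr 2 <;> ring) (by
      simp only [hs, hq, ht, hh]
      push_cast
      generalize (p : ZMod 2) = xp, (N : ZMod 2) = xN, (a : ZMod 2) = xa, (s : ZMod 2) = xs,
        (m1 : ZMod 2) = xm1, (m2 : ZMod 2) = xm2, (n1 : ZMod 2) = xn1, (n2 : ZMod 2) = xn2,
        (A.length : ZMod 2) = xl, (B1.length : ZMod 2) = xb
      clear * -
      grind)
  simp only [sgn_add s1, sgn_one, zpow_zero, zpow_one, one_mul] at v1 v2 v3
  have hp := G_pl22 (XQ z hbar Q u0) (cQ z hbar Q u0) (rQ z hbar Q u0) B1 (A ++ C) F N p q t h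
    (RowK.b2 x) (RowK.P1 (p + 1)) (ColK.S (t + 1)) (ColK.T1 (h + 1))
  linear_combination (1) * v1 + (-1) * v2 + (-1) * v3 + (1) * ((K * K') * c * sgn s1) * hp

theorem backlund_eq6 (A C B1 F : List ι) (x : ι) (T TL : ℤ → ℤ → ℂ → ℂ) (m1 m2 n1 n2 : ℤ)
    (hT : ∀ u0, ∃ K, RepP z hbar Q u0 B1 (A ++ x :: C) F T m1 (m2 + 1) n1 n2 K)
    (hL : ∀ u0, ∃ K, RepP z hbar Q u0 B1 (A ++ C) F TL m1 m2 n1 n2 K)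
    (hx : z x ≠ 0) (hw : Wt z (B1 ++ (A ++ C)) F ≠ 0)
    (hW : Wt z (B1 ++ (A ++ x :: C)) F = z x * Wt z (B1 ++ (A ++ C)) F)
    (a s : ℤ) (u : ℂ) :
    T a (s - 1) u * TL a s u - T a s (u + hbar) * TL a (s - 1) (u - hbar) =
      T (a + 1) s u * TL (a - 1) (s - 1) u := by
  obtain ⟨p⟩ : Nonempty ℤ := ⟨0⟩
  obtain ⟨q, hq⟩ : ∃ q : ℤ, q = p + s + m1 - n1 - a - 1 := ⟨_, rfl⟩
  obtain ⟨t, ht⟩ : ∃ t : ℤ, t = p + m1 - n1 + m2 - n2 - a := ⟨_, rfl⟩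
  obtain ⟨h, hh⟩ : ∃ h : ℤ, h = p + s + m1 - n1 - 1 := ⟨_, rfl⟩
  obtain ⟨N, N1, N2, N3, N4⟩ : ∃ N : ℤ, N ≤ p ∧ N ≤ q ∧ N ≤ t ∧ N ≤ h :=
    ⟨min (min p q) (min t h), by omega, by omega, by omega, by omega⟩
  obtain ⟨u0, hu⟩ : ∃ u0 : ℂ, u = u0 +
      ((2 * (p) - ((a) - (s - 1) - (m1 - n1) - ((m2 + 1) - n2)) : ℤ) : ℂ) * hbar :=
    ⟨u - _, (sub_add_cancel _ _).symm⟩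
  obtain ⟨K, hK⟩ := hT u0
  obtain ⟨K', hK'⟩ := hL u0
  have e1 := hK a (s - 1) p N p q (t + 1) h u (by omega) (by omega) (by omega)
    (by omega) rfl (by omega) (by omega) (by omega) (by push_cast at hu ⊢; linear_combination hu)
  rw [G_b2 _ _ _ _ _ _ _ _ _ _ _ _ _ _ _ (by omega) (by omega), 
    G_S _ _ _ _ _ _ _ _ _ _ _ _ _ (by omega) N3] at e1
  simp only [List.nil_append, List.cons_append, sgn_acc] at e1
  have e2 := hK' a s p N p (q + 1) t (h + 1) u (by omega) (by omega) (by omega)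
    (by omega) rfl (by omega) (by omega) (by omega) (by push_cast at hu ⊢; linear_combination hu)
  rw [G_D _ _ _ _ _ _ _ _ _ _ _ _ _ N1 N2, 
    G_T _ _ _ _ _ _ _ _ _ _ _ _ _ N4] at e2
  simp only [List.nil_append, List.cons_append, sgn_acc] at e2
  obtain ⟨c, s1, hc, hs, v1⟩ := pair_one hx hw hW e1 e2 0
  have e3 := hK a s p N p (q + 1) (t + 1) (h + 1) (u + hbar) (by omega) (by omega) (by omega)
    (by omega) rfl (by omega) (by omega) (by omega) (by push_cast at hu ⊢; linear_combination hu)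
  rw [G_b2 _ _ _ _ _ _ _ _ _ _ _ _ _ _ _ (by omega) (by omega), 
    G_D _ _ _ _ _ _ _ _ _ _ _ _ _ N1 N2, 
    G_S _ _ _ _ _ _ _ _ _ _ _ _ _ (by omega) N3, 
    G_T _ _ _ _ _ _ _ _ _ _ _ _ _ N4] at e3
  simp only [List.nil_append, List.cons_append, sgn_acc] at e3
  have e4 := hK' a (s - 1) p N p q t h (u - hbar) (by omega) (by omega) (by omega)
    (by omega) rfl (by omega) (by omega) (by omega) (by push_cast at hu ⊢; linear_combination hu)
  have v2 := pair_next hx hw hW e3 e4 0 c (s1)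
    (by refine Eq.trans ?_ hc.symm; congr 2 <;> ring) (by
      simp only [hs, hq, ht, hh]
      push_cast
      generalize (p : ZMod 2) = xp, (N : ZMod 2) = xN, (a : ZMod 2) = xa, (s : ZMod 2) = xs,
        (m1 : ZMod 2) = xm1, (m2 : ZMod 2) = xm2, (n1 : ZMod 2) = xn1, (n2 : ZMod 2) = xn2,
        (A.length : ZMod 2) = xl, (B1.length : ZMod 2) = xb
      clear * -
      grind)
  have e5 := hK (a + 1) s p N p q t (h + 1) u (by omega) (by omega) (by omega)
    (by omega) rfl (by omega) (by omega) (by omega) (by push_cast at hu ⊢; linear_combination hu)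
  rw [G_b2 _ _ _ _ _ _ _ _ _ _ _ _ _ _ _ (by omega) (by omega), 
    G_T _ _ _ _ _ _ _ _ _ _ _ _ _ N4] at e5
  simp only [List.nil_append, List.cons_append, sgn_acc] at e5
  have e6 := hK' (a - 1) (s - 1) p N p (q + 1) (t + 1) h u (by omega) (by omega) (by omega)
    (by omega) rfl (by omega) (by omega) (by omega) (by push_cast at hu ⊢; linear_combination hu)
  rw [G_D _ _ _ _ _ _ _ _ _ _ _ _ _ N1 N2, 
    G_S _ _ _ _ _ _ _ _ _ _ _ _ _ (by omega) N3] at e6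
  simp only [List.nil_append, List.cons_append, sgn_acc] at e6
  have v3 := pair_next hx hw hW e5 e6 0 c (s1)
    (by refine Eq.trans ?_ hc.symm; congr 2 <;> ring) (by
      simp only [hs, hq, ht, hh]
      push_cast
      generalize (p : ZMod 2) = xp, (N : ZMod 2) = xN, (a : ZMod 2) = xa, (s : ZMod 2) = xs,
        (m1 : ZMod 2) = xm1, (m2 : ZMod 2) = xm2, (n1 : ZMod 2) = xn1, (n2 : ZMod 2) = xn2,
        (A.length : ZMod 2) = xl, (B1.length : ZMod 2) = xb
      clear * -
      grind)
  simp only [zpow_zero, zpow_one, one_mul] at v1 v2 v3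
  have hp := G_pl22 (XQ z hbar Q u0) (cQ z hbar Q u0) (rQ z hbar Q u0) B1 (A ++ C) F N p q t h
    (RowK.b2 x) (RowK.D (q + 1)) (ColK.S (t + 1)) (ColK.T1 (h + 1))
  linear_combination (1) * v1 + (-1) * v2 + (-1) * v3 + (-1) * ((K * K') * c * sgn s1) * hp

theorem backlund_eq7 (A C B1 B2 : List ι) (x : ι) (T TL : ℤ → ℤ → ℂ → ℂ) (m1 m2 n1 n2 : ℤ)
    (hT : ∀ u0, ∃ K, RepP z hbar Q u0 B1 B2 (A ++ x :: C) T m1 m2 n1 (n2 + 1) K)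
    (hL : ∀ u0, ∃ K, RepP z hbar Q u0 B1 B2 (A ++ C) TL m1 m2 n1 n2 K)
    (hx : z x ≠ 0) (hw : Wt z (B1 ++ B2) (A ++ x :: C) ≠ 0)
    (hW : Wt z (B1 ++ B2) (A ++ C) = z x * Wt z (B1 ++ B2) (A ++ x :: C))
    (a s : ℤ) (u : ℂ) :
    z x * TL (a + 1) s (u + hbar) * T a s (u - hbar) + TL a s u * T (a + 1) s u =
      TL (a + 1) (s + 1) u * T a (s - 1) u := by
  obtain ⟨p⟩ : Nonempty ℤ := ⟨0⟩
  obtain ⟨q, hq⟩ : ∃ q : ℤ, q = p + s + m1 - n1 - a := ⟨_, rfl⟩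
  obtain ⟨t, ht⟩ : ∃ t : ℤ, t = p + m1 - n1 + m2 - n2 - a - 1 := ⟨_, rfl⟩
  obtain ⟨h, hh⟩ : ∃ h : ℤ, h = p + s + m1 - n1 := ⟨_, rfl⟩
  obtain ⟨N, N1, N2, N3, N4⟩ : ∃ N : ℤ, N ≤ p ∧ N ≤ q ∧ N ≤ t ∧ N ≤ h :=
    ⟨min (min p q) (min t h), by omega, by omega, by omega, by omega⟩
  obtain ⟨u0, hu⟩ : ∃ u0 : ℂ, u = u0 +
      ((2 * (p) - ((a) - (s) - (m1 - n1) - (m2 - n2)) : ℤ) : ℂ) * hbar :=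
    ⟨u - _, (sub_add_cancel _ _).symm⟩
  obtain ⟨K, hK⟩ := hT u0
  obtain ⟨K', hK'⟩ := hL u0
  have e1 := hK' (a + 1) s (p + 1) N (p + 1) q (t + 1) (h + 1) (u + hbar) (by omega) (by omega) (by omega)
    (by omega) rfl (by omega) (by omega) (by omega) (by push_cast at hu ⊢; linear_combination hu)
  rw [G_P _ _ _ _ _ _ _ _ _ _ _ _ _ N1, 
    G_S _ _ _ _ _ _ _ _ _ _ _ _ _ (by omega) N3, 
    G_T _ _ _ _ _ _ _ _ _ _ _ _ _ N4] at e1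
  simp only [List.nil_append, List.cons_append, sgn_acc] at e1
  have e2 := hK a s p N p q t h (u - hbar) (by omega) (by omega) (by omega)
    (by omega) rfl (by omega) (by omega) (by omega) (by push_cast at hu ⊢; linear_combination hu)
  rw [G_F _ _ _ _ _ _ _ _ _ _ _ _ _ _ _ (by omega) (by omega)] at e2
  simp only [List.nil_append, List.cons_append, sgn_acc] at e2
  obtain ⟨c, s1, hc, hs, v1⟩ := pair_one hx hw hW e1 e2 1
  have e3 := hK' a s p N p q (t + 1) h u (by omega) (by omega) (by omega)
    (by omega) rfl (by omega) (by omega) (by omega) (by push_cast at hu ⊢; linear_combination hu)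
  rw [G_S _ _ _ _ _ _ _ _ _ _ _ _ _ (by omega) N3] at e3
  simp only [List.nil_append, List.cons_append, sgn_acc] at e3
  have e4 := hK (a + 1) s (p + 1) N (p + 1) q t (h + 1) u (by omega) (by omega) (by omega)
    (by omega) rfl (by omega) (by omega) (by omega) (by push_cast at hu ⊢; linear_combination hu)
  rw [G_P _ _ _ _ _ _ _ _ _ _ _ _ _ N1, 
    G_F _ _ _ _ _ _ _ _ _ _ _ _ _ _ _ (by omega) (by omega), 
    G_T _ _ _ _ _ _ _ _ _ _ _ _ _ N4] at e4
  simp only [List.nil_append, List.cons_append, sgn_acc] at e4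
  have v2 := pair_next hx hw hW e3 e4 0 c (s1 + 1)
    (by refine Eq.trans ?_ hc.symm; congr 2 <;> ring) (by
      simp only [hs, hq, ht, hh]
      push_cast
      generalize (p : ZMod 2) = xp, (N : ZMod 2) = xN, (a : ZMod 2) = xa, (s : ZMod 2) = xs,
        (m1 : ZMod 2) = xm1, (m2 : ZMod 2) = xm2, (n1 : ZMod 2) = xn1, (n2 : ZMod 2) = xn2,
        (A.length : ZMod 2) = xl
      clear * -
      grind)
  have e5 := hK' (a + 1) (s + 1) p N p q t (h + 1) u (by omega) (by omega) (by omega)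
    (by omega) rfl (by omega) (by omega) (by omega) (by push_cast at hu ⊢; linear_combination hu)
  rw [G_T _ _ _ _ _ _ _ _ _ _ _ _ _ N4] at e5
  simp only [List.nil_append, List.cons_append, sgn_acc] at e5
  have e6 := hK a (s - 1) (p + 1) N (p + 1) q (t + 1) h u (by omega) (by omega) (by omega)
    (by omega) rfl (by omega) (by omega) (by omega) (by push_cast at hu ⊢; linear_combination hu)
  rw [G_P _ _ _ _ _ _ _ _ _ _ _ _ _ N1, 
    G_F _ _ _ _ _ _ _ _ _ _ _ _ _ _ _ (by omega) (by omega), 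
    G_S _ _ _ _ _ _ _ _ _ _ _ _ _ (by omega) N3] at e6
  simp only [List.nil_append, List.cons_append, sgn_acc] at e6
  have v3 := pair_next hx hw hW e5 e6 0 c (s1 + 1)
    (by refine Eq.trans ?_ hc.symm; congr 2 <;> ring) (by
      simp only [hs, hq, ht, hh]
      push_cast
      generalize (p : ZMod 2) = xp, (N : ZMod 2) = xN, (a : ZMod 2) = xa, (s : ZMod 2) = xs,
        (m1 : ZMod 2) = xm1, (m2 : ZMod 2) = xm2, (n1 : ZMod 2) = xn1, (n2 : ZMod 2) = xn2,
        (A.length : ZMod 2) = xl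
      clear * -
      grind)
  simp only [sgn_add s1, sgn_one, zpow_zero, zpow_one, one_mul] at v1 v2 v3
  have hp := G_pl13 (XQ z hbar Q u0) (cQ z hbar Q u0) (rQ z hbar Q u0) B1 B2 (A ++ C) N p q t h
    (RowK.P1 (p + 1)) (ColK.F x) (ColK.S (t + 1)) (ColK.T1 (h + 1))
  linear_combination (1) * v1 + (1) * v2 + (-1) * v3 + (1) * ((K' * K) * c * sgn s1) * hp

theorem backlund_eq8 (A C B1 B2 : List ι) (x : ι) (T TL : ℤ → ℤ → ℂ → ℂ) (m1 m2 n1 n2 : ℤ)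
    (hT : ∀ u0, ∃ K, RepP z hbar Q u0 B1 B2 (A ++ x :: C) T m1 m2 n1 (n2 + 1) K)
    (hL : ∀ u0, ∃ K, RepP z hbar Q u0 B1 B2 (A ++ C) TL m1 m2 n1 n2 K)
    (hx : z x ≠ 0) (hw : Wt z (B1 ++ B2) (A ++ x :: C) ≠ 0)
    (hW : Wt z (B1 ++ B2) (A ++ C) = z x * Wt z (B1 ++ B2) (A ++ x :: C))
    (a s : ℤ) (u : ℂ) :
    TL a (s - 1) u * T a s u - TL a s (u + hbar) * T a (s - 1) (u - hbar) =
      -(TL (a + 1) s u * T (a - 1) (s - 1) u) := by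
  obtain ⟨p⟩ : Nonempty ℤ := ⟨0⟩
  obtain ⟨q, hq⟩ : ∃ q : ℤ, q = p + s + m1 - n1 - a - 1 := ⟨_, rfl⟩
  obtain ⟨t, ht⟩ : ∃ t : ℤ, t = p + m1 - n1 + m2 - n2 - a - 1 := ⟨_, rfl⟩
  obtain ⟨h, hh⟩ : ∃ h : ℤ, h = p + s + m1 - n1 - 1 := ⟨_, rfl⟩
  obtain ⟨N, N1, N2, N3, N4⟩ : ∃ N : ℤ, N ≤ p ∧ N ≤ q ∧ N ≤ t ∧ N ≤ h :=
    ⟨min (min p q) (min t h), by omega, by omega, by omega, by omega⟩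
  obtain ⟨u0, hu⟩ : ∃ u0 : ℂ, u = u0 +
      ((2 * (p) - ((a) - (s - 1) - (m1 - n1) - (m2 - n2)) : ℤ) : ℂ) * hbar :=
    ⟨u - _, (sub_add_cancel _ _).symm⟩
  obtain ⟨K, hK⟩ := hT u0
  obtain ⟨K', hK'⟩ := hL u0
  have e1 := hK' a (s - 1) p N p q (t + 1) h u (by omega) (by omega) (by omega)
    (by omega) rfl (by omega) (by omega) (by omega) (by push_cast at hu ⊢; linear_combination hu)
  rw [G_S _ _ _ _ _ _ _ _ _ _ _ _ _ (by omega) N3] at e1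
  simp only [List.nil_append, List.cons_append, sgn_acc] at e1
  have e2 := hK a s p N p (q + 1) t (h + 1) u (by omega) (by omega) (by omega)
    (by omega) rfl (by omega) (by omega) (by omega) (by push_cast at hu ⊢; linear_combination hu)
  rw [G_D _ _ _ _ _ _ _ _ _ _ _ _ _ N1 N2, 
    G_F _ _ _ _ _ _ _ _ _ _ _ _ _ _ _ (by omega) (by omega), 
    G_T _ _ _ _ _ _ _ _ _ _ _ _ _ N4] at e2
  simp only [List.nil_append, List.cons_append, sgn_acc] at e2
  obtain ⟨c, s1, hc, hs, v1⟩ := pair_one hx hw hW e1 e2 0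
  have e3 := hK' a s p N p (q + 1) (t + 1) (h + 1) (u + hbar) (by omega) (by omega) (by omega)
    (by omega) rfl (by omega) (by omega) (by omega) (by push_cast at hu ⊢; linear_combination hu)
  rw [G_D _ _ _ _ _ _ _ _ _ _ _ _ _ N1 N2, 
    G_S _ _ _ _ _ _ _ _ _ _ _ _ _ (by omega) N3, 
    G_T _ _ _ _ _ _ _ _ _ _ _ _ _ N4] at e3
  simp only [List.nil_append, List.cons_append, sgn_acc] at e3
  have e4 := hK a (s - 1) p N p q t h (u - hbar) (by omega) (by omega) (by omega)
    (by omega) rfl (by omega) (by omega) (by omega) (by push_cast at hu ⊢; linear_combination hu)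
  rw [G_F _ _ _ _ _ _ _ _ _ _ _ _ _ _ _ (by omega) (by omega)] at e4
  simp only [List.nil_append, List.cons_append, sgn_acc] at e4
  have v2 := pair_next hx hw hW e3 e4 0 c (s1)
    (by refine Eq.trans ?_ hc.symm; congr 2 <;> ring) (by
      simp only [hs, hq, ht, hh]
      push_cast
      generalize (p : ZMod 2) = xp, (N : ZMod 2) = xN, (a : ZMod 2) = xa, (s : ZMod 2) = xs,
        (m1 : ZMod 2) = xm1, (m2 : ZMod 2) = xm2, (n1 : ZMod 2) = xn1, (n2 : ZMod 2) = xn2,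
        (A.length : ZMod 2) = xl
      clear * -
      grind)
  have e5 := hK' (a + 1) s p N p q t (h + 1) u (by omega) (by omega) (by omega)
    (by omega) rfl (by omega) (by omega) (by omega) (by push_cast at hu ⊢; linear_combination hu)
  rw [G_T _ _ _ _ _ _ _ _ _ _ _ _ _ N4] at e5
  simp only [List.nil_append, List.cons_append, sgn_acc] at e5
  have e6 := hK (a - 1) (s - 1) p N p (q + 1) (t + 1) h u (by omega) (by omega) (by omega)
    (by omega) rfl (by omega) (by omega) (by omega) (by push_cast at hu ⊢; linear_combination hu)
  rw [G_D _ _ _ _ _ _ _ _ _ _ _ _ _ N1 N2, 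
    G_F _ _ _ _ _ _ _ _ _ _ _ _ _ _ _ (by omega) (by omega), 
    G_S _ _ _ _ _ _ _ _ _ _ _ _ _ (by omega) N3] at e6
  simp only [List.nil_append, List.cons_append, sgn_acc] at e6
  have v3 := pair_next hx hw hW e5 e6 0 c (s1 + 1)
    (by refine Eq.trans ?_ hc.symm; congr 2 <;> ring) (by
      simp only [hs, hq, ht, hh]
      push_cast
      generalize (p : ZMod 2) = xp, (N : ZMod 2) = xN, (a : ZMod 2) = xa, (s : ZMod 2) = xs,
        (m1 : ZMod 2) = xm1, (m2 : ZMod 2) = xm2, (n1 : ZMod 2) = xn1, (n2 : ZMod 2) = xn2,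
        (A.length : ZMod 2) = xl
      clear * -
      grind)
  simp only [sgn_add s1, sgn_one, zpow_zero, zpow_one, one_mul] at v1 v2 v3
  have hp := G_pl13 (XQ z hbar Q u0) (cQ z hbar Q u0) (rQ z hbar Q u0) B1 B2 (A ++ C) N p q t h
    (RowK.D (q + 1)) (ColK.F x) (ColK.S (t + 1)) (ColK.T1 (h + 1))
  linear_combination (1) * v1 + (-1) * v2 + (1) * v3 + (-1) * ((K' * K) * c * sgn s1) * hp

end Equations

/-- **Bäcklund transformations for the Wronskian T-functions.** -/
theorem backlund_T {ι : Type*} [DecidableEq ι] (hbar : ℂ) (hbar_ne : hbar ≠ 0)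
    (z : ι → ℂ) (B1 B2 F1 F2 : List ι)
    (hnd : (B1 ++ B2 ++ F1 ++ F2).Nodup)
    (hz0 : ∀ i ∈ B1 ++ B2 ++ F1 ++ F2, z i ≠ 0)
    (hzd : ∀ i ∈ B1 ++ B2 ++ F1 ++ F2, ∀ j ∈ B1 ++ B2 ++ F1 ++ F2, i ≠ j → z i ≠ z j)
    (Q : Finset ι → ℂ → ℂ)
    (hQQ : QQsys z hbar (fun i => if i ∈ B1 ++ B2 then 1 else -1)
      {i | i ∈ B1 ++ B2 ++ F1 ++ F2} Q)
    (b1 : ι) (hb1 : b1 ∈ B1) (f1 : ι) (hf1 : f1 ∈ F1)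
    (b2 : ι) (hb2 : b2 ∈ B2) (f2 : ι) (hf2 : f2 ∈ F2)
    (T TB1 TF1 TB2 TF2 : ℤ → ℤ → ℂ → ℂ)
    (hT : IsT z hbar Q B1 B2 F1 F2 T)
    (hTB1 : IsT z hbar Q (B1.erase b1) B2 F1 F2 TB1)
    (hTF1 : IsT z hbar Q B1 B2 (F1.erase f1) F2 TF1)
    (hTB2 : IsT z hbar Q B1 (B2.erase b2) F1 F2 TB2)
    (hTF2 : IsT z hbar Q B1 B2 F1 (F2.erase f2) TF2) :
    (∀ a s : ℤ, ∀ u : ℂ,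
      T (a + 1) s (u - hbar) * TB1 a s (u + hbar) - T a s u * TB1 (a + 1) s u =
        z b1 * T (a + 1) (s - 1) u * TB1 a (s + 1) u) ∧
    (∀ a s : ℤ, ∀ u : ℂ,
      T a (s + 1) u * TB1 a s u - T a s (u - hbar) * TB1 a (s + 1) (u + hbar) =
        z b1 * T (a + 1) s u * TB1 (a - 1) (s + 1) u) ∧
    (∀ a s : ℤ, ∀ u : ℂ,
      TF1 (a + 1) s (u - hbar) * T a s (u + hbar) - TF1 a s u * T (a + 1) s u =
        z f1 * TF1 (a + 1) (s - 1) u * T a (s + 1) u) ∧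
    (∀ a s : ℤ, ∀ u : ℂ,
      TF1 a (s + 1) u * T a s u - TF1 a s (u - hbar) * T a (s + 1) (u + hbar) =
        z f1 * TF1 (a + 1) s u * T (a - 1) (s + 1) u) ∧
    (∀ a s : ℤ, ∀ u : ℂ,
      z b2 * T (a + 1) s (u + hbar) * TB2 a s (u - hbar) - T a s u * TB2 (a + 1) s u =
        T (a + 1) (s + 1) u * TB2 a (s - 1) u) ∧
    (∀ a s : ℤ, ∀ u : ℂ,
      T a (s - 1) u * TB2 a s u - T a s (u + hbar) * TB2 a (s - 1) (u - hbar) =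
        T (a + 1) s u * TB2 (a - 1) (s - 1) u) ∧
    (∀ a s : ℤ, ∀ u : ℂ,
      z f2 * TF2 (a + 1) s (u + hbar) * T a s (u - hbar) + TF2 a s u * T (a + 1) s u =
        TF2 (a + 1) (s + 1) u * T a (s - 1) u) ∧
    (∀ a s : ℤ, ∀ u : ℂ,
      TF2 a (s - 1) u * T a s u - TF2 a s (u + hbar) * T a (s - 1) (u - hbar) =
        -(TF2 (a + 1) s u * T (a - 1) (s - 1) u)) := by
  have hp : ∀ f ∈ F1 ++ F2, f ∉ B1 ++ B2 := by
    intro f hf hb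
    rw [List.append_assoc, List.nodup_append] at hnd
    exact hnd.2.2 f hb f hf rfl
  have hgood : ∀ L1 L2 M1 M2 : List ι, L1 ⊆ B1 → L2 ⊆ B2 → M1 ⊆ F1 → M2 ⊆ F2 →
      Good z hbar Q L1 L2 (M1 ++ M2) := by
    intro L1 L2 M1 M2 g1 g2 g3 g4
    have hb : ∀ b ∈ L1 ++ L2, b ∈ B1 ++ B2 := by
      intro b hb
      rcases List.mem_append.mp hb with h | h
      · exact List.mem_append_left _ (g1 h)
      · exact List.mem_append_right _ (g2 h)
    have hf : ∀ f ∈ M1 ++ M2, f ∈ F1 ++ F2 := by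
      intro f hf
      rcases List.mem_append.mp hf with h | h
      · exact List.mem_append_left _ (g3 h)
      · exact List.mem_append_right _ (g4 h)
    have hb' : ∀ b ∈ L1 ++ L2, b ∈ B1 ++ B2 ++ F1 ++ F2 := fun b h => by
      rw [List.append_assoc]
      exact List.mem_append_left _ (hb b h)
    have hf' : ∀ f ∈ M1 ++ M2, f ∈ B1 ++ B2 ++ F1 ++ F2 := fun f h => by
      rw [List.append_assoc]
      exact List.mem_append_right _ (hf f h)
    refine ⟨fun b h => hz0 b (hb' b h), fun f h => hz0 f (hf' f h), fun u0 => ?_⟩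
    refine Xrec_Q z hbar Q u0 _ _ hQQ L1 L2 (M1 ++ M2)
      (fun b h => ⟨hb' b h, if_pos (hb b h), hz0 b (hb' b h)⟩)
      (fun f h => ⟨hf' f h, if_neg (hp f (hf f h)), hz0 f (hf' f h)⟩) ?_
    intro b h f h'
    refine hzd b (hb' b h) f (hf' f h') ?_
    rintro rfl
    exact hp b (hf b h') (hb b h)
  have hW : ∀ L M : List ι, L ⊆ B1 ++ B2 → M ⊆ F1 ++ F2 → Wt z L M ≠ 0 := by
    intro L M g1 g2
    refine Wt_ne z L M (fun b h => hz0 b ?_) (fun f h => hz0 f ?_)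
    · rw [List.append_assoc]
      exact List.mem_append_left _ (g1 h)
    · rw [List.append_assoc]
      exact List.mem_append_right _ (g2 h)
  have z1 : z b1 ≠ 0 := hz0 b1 (by simp [hb1])
  have z2 : z b2 ≠ 0 := hz0 b2 (by simp [hb2])
  have z3 : z f1 ≠ 0 := hz0 f1 (by simp [hf1])
  have z4 : z f2 ≠ 0 := hz0 f2 (by simp [hf2])
  have er : ∀ (L : List ι) (x : ι), x ∈ L →
      ∃ A C, L = A ++ x :: C ∧ L.erase x = A ++ C := by
    intro L x hx
    obtain ⟨A, C, -, h1, h2⟩ := List.exists_erase_eq hx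
    exact ⟨A, C, h1, h2⟩
  obtain ⟨A1, C1, e1, d1⟩ := er B1 b1 hb1
  obtain ⟨A2, C2, e2, d2⟩ := er B2 b2 hb2
  obtain ⟨A3, C3, e3, d3⟩ := er F1 f1 hf1
  obtain ⟨A4, C4, e4, d4⟩ := er F2 f2 hf2
  have RT := fun u0 => exists_RepP z hbar Q u0 B1 B2 F1 F2 T hT
    (hgood B1 B2 F1 F2 (by simp) (by simp) (by simp) (by simp)) _ _ _ _ rfl rfl rfl rfl
  have R1 := fun u0 => exists_RepP z hbar Q u0 (B1.erase b1) B2 F1 F2 TB1 hTB1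
    (hgood _ B2 F1 F2 List.erase_subset (by simp) (by simp) (by simp)) _ _ _ _ rfl rfl rfl rfl
  have R2 := fun u0 => exists_RepP z hbar Q u0 B1 (B2.erase b2) F1 F2 TB2 hTB2
    (hgood B1 _ F1 F2 (by simp) List.erase_subset (by simp) (by simp)) _ _ _ _ rfl rfl rfl rfl
  have R3 := fun u0 => exists_RepP z hbar Q u0 B1 B2 (F1.erase f1) F2 TF1 hTF1
    (hgood B1 B2 _ F2 (by simp) (by simp) List.erase_subset (by simp)) _ _ _ _ rfl rfl rfl rfl
  have R4 := fun u0 => exists_RepP z hbar Q u0 B1 B2 F1 (F2.erase f2) TF2 hTF2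
    (hgood B1 B2 F1 _ (by simp) (by simp) (by simp) List.erase_subset) _ _ _ _ rfl rfl rfl rfl
  have len : ∀ (L A C : List ι) (x : ι), L = A ++ x :: C →
      (L.length : ℤ) = ((A ++ C).length : ℤ) + 1 := by
    rintro _ A C x rfl
    simp only [List.length_append, List.length_cons]
    push_cast
    ring
  have q1 : ∀ u0, ∃ K, RepP z hbar Q u0 (A1 ++ b1 :: C1) B2 (F1 ++ F2) T
      (((A1 ++ C1).length : ℤ) + 1) B2.length F1.length F2.length K := by
    rw [← len B1 A1 C1 b1 e1, ← e1]
    exact RT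
  have q2 : ∀ u0, ∃ K, RepP z hbar Q u0 B1 (A2 ++ b2 :: C2) (F1 ++ F2) T
      B1.length (((A2 ++ C2).length : ℤ) + 1) F1.length F2.length K := by
    rw [← len B2 A2 C2 b2 e2, ← e2]
    exact RT
  have l3 : F1 ++ F2 = A3 ++ f1 :: (C3 ++ F2) := by rw [e3]; simp
  have l4 : F1 ++ F2 = (F1 ++ A4) ++ f2 :: C4 := by rw [e4]; simp
  have q3 : ∀ u0, ∃ K, RepP z hbar Q u0 B1 B2 (A3 ++ f1 :: (C3 ++ F2)) T
      B1.length B2.length (((A3 ++ C3).length : ℤ) + 1) F2.length K := by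
    rw [← len F1 A3 C3 f1 e3, ← l3]
    exact RT
  have q4 : ∀ u0, ∃ K, RepP z hbar Q u0 B1 B2 ((F1 ++ A4) ++ f2 :: C4) T
      B1.length B2.length F1.length (((A4 ++ C4).length : ℤ) + 1) K := by
    rw [← len F2 A4 C4 f2 e4, ← l4]
    exact RT
  rw [d1] at R1
  rw [d2] at R2
  rw [d3, List.append_assoc] at R3
  rw [d4, ← List.append_assoc] at R4
  have w1 : Wt z ((A1 ++ C1) ++ B2) (F1 ++ F2) ≠ 0 := hW _ _ (by
    rw [e1]; intro y hy; simp at hy ⊢; tauto) (by simp)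
  have w2 : Wt z (B1 ++ (A2 ++ C2)) (F1 ++ F2) ≠ 0 := hW _ _ (by
    rw [e2]; intro y hy; simp at hy ⊢; tauto) (by simp)
  have w3 : Wt z (B1 ++ B2) (A3 ++ f1 :: (C3 ++ F2)) ≠ 0 := by
    rw [← l3]; exact hW _ _ (by simp) (by simp)
  have w4 : Wt z (B1 ++ B2) ((F1 ++ A4) ++ f2 :: C4) ≠ 0 := by
    rw [← l4]; exact hW _ _ (by simp) (by simp)
  have v1 : Wt z ((A1 ++ b1 :: C1) ++ B2) (F1 ++ F2) =
      z b1 * Wt z ((A1 ++ C1) ++ B2) (F1 ++ F2) := by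
    rw [List.append_assoc, List.cons_append, Wt_b, List.append_assoc]
  have v2 : Wt z (B1 ++ (A2 ++ b2 :: C2)) (F1 ++ F2) =
      z b2 * Wt z (B1 ++ (A2 ++ C2)) (F1 ++ F2) := by
    rw [← List.append_assoc, Wt_b, List.append_assoc]
  have v3 := Wt_f z A3 (C3 ++ F2) (B1 ++ B2) f1 z3
  have v4 := Wt_f z (F1 ++ A4) C4 (B1 ++ B2) f2 z4
  exact ⟨backlund_eq1 z hbar Q A1 C1 B2 _ b1 T TB1 _ _ _ _ q1 R1 z1 w1 v1,
    backlund_eq2 z hbar Q A1 C1 B2 _ b1 T TB1 _ _ _ _ q1 R1 z1 w1 v1,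
    backlund_eq3 z hbar Q A3 (C3 ++ F2) B1 B2 f1 T TF1 _ _ _ _ q3 R3 z3 w3 v3,
    backlund_eq4 z hbar Q A3 (C3 ++ F2) B1 B2 f1 T TF1 _ _ _ _ q3 R3 z3 w3 v3,
    backlund_eq5 z hbar Q A2 C2 B1 _ b2 T TB2 _ _ _ _ q2 R2 z2 w2 v2,
    backlund_eq6 z hbar Q A2 C2 B1 _ b2 T TB2 _ _ _ _ q2 R2 z2 w2 v2,
    backlund_eq7 z hbar Q (F1 ++ A4) C4 B1 B2 f2 T TF2 _ _ _ _ q4 R4 z4 w4 v4,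
    backlund_eq8 z hbar Q (F1 ++ A4) C4 B1 B2 f2 T TF2 _ _ _ _ q4 R4 z4 w4 v4⟩



end StmtT
end

section
/- Shift lemma, part (i). Suppose S = ∅, so that m+α = n+c1+c2. If t¹_i = 0 for some 1 ≤ i ≤ c1, or r_j = 1 for some 1 ≤ j ≤ α, then Δ^{R,[η;ξ]}_{∅,T1,T2} = (−1)^{α+m2+c2} · Δ^{R−1,[η−1;ξ−2]}_{∅,T1+1,T2+1}, where R−1 = (r_1−1, …, r_α−1), T1+1 = (t¹_1+1, …, t¹_{c1}+1), and T2+1 = (t²_1+1, …, t²_{c2}+1). -/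
open scoped BigOperators

namespace Stmt9

/-- The integer segment tuple `⟨a,b⟩ = (a, a+1, …, b)`, empty when `b < a`. -/
def seg (a b : ℤ) : List ℤ := (List.range (b - a + 1).toNat).map (fun k => a + (k : ℤ))

/-- Product of `g x y` over ordered pairs `x ≺ y` in the list `L`. -/
def pairProd {ι : Type*} (L : List ι) (g : ι → ι → ℂ) : ℂ :=
  ∏ i : Fin L.length, ∏ j : Fin L.length, if i < j then g (L.get i) (L.get j) else 1

/-- Product of `g x` over a list. -/
def prodL {ι : Type*} (L : List ι) (g : ι → ℂ) : ℂ := (L.map g).prod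

/-- Product of `g x y` over pairs `(x, y) ∈ L × M`. -/
def prodLL {ι : Type*} (L M : List ι) (g : ι → ι → ℂ) : ℂ :=
  (L.map (fun x => (M.map (g x)).prod)).prod

/-- Determinant of the square matrix whose rows and columns are labelled by the given
key lists (by convention `0` if the two lists have different lengths). -/
noncomputable def listDet {α β : Type*} (rows : List α) (cols : List β) (e : α → β → ℂ) : ℂ :=
  if h : rows.length = cols.length then
    Matrix.det (Matrix.of fun i j : Fin rows.length =>
      e (rows.get i) (cols.get (Fin.cast h j)))
  else 0

/-- The coefficient-free sparse determinant `Δ^{R,[η;ξ]}_{S,T1,T2}` built from the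
coefficient-free Baxter Q-functions, as a function of the spectral parameter `u`. -/
noncomputable def DeltaCF {ι : Type*} (hbar : ℂ) (Qb Qf : ι → ℂ → ℂ) (Qbf : ι → ι → ℂ → ℂ)
    (B1 B2 F : List ι) (R S T1 T2 : List ℤ) (η ξ : ℤ) (u : ℂ) : ℂ :=
  listDet
    ((B1.map (Sum.inl : ι → ι ⊕ (ι ⊕ ℤ)) ++
      B2.map (fun b => (Sum.inr (Sum.inl b) : ι ⊕ (ι ⊕ ℤ))) ++
      R.map (fun r => (Sum.inr (Sum.inr r) : ι ⊕ (ι ⊕ ℤ)))))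
    ((F.map (Sum.inl : ι → ι ⊕ (ℤ ⊕ (ℤ ⊕ ℤ))) ++
      S.map (fun j => (Sum.inr (Sum.inl j) : ι ⊕ (ℤ ⊕ (ℤ ⊕ ℤ)))) ++
      T1.map (fun j => (Sum.inr (Sum.inr (Sum.inl j)) : ι ⊕ (ℤ ⊕ (ℤ ⊕ ℤ)))) ++
      T2.map (fun j => (Sum.inr (Sum.inr (Sum.inr j)) : ι ⊕ (ℤ ⊕ (ℤ ⊕ ℤ))))))
    (fun row col =>
      match row, col with
      | Sum.inl b, Sum.inl f => Qbf b f (u + (ξ : ℂ) * hbar)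
      | Sum.inl b, Sum.inr (Sum.inl j) => Qb b (u + ((ξ + 2 * j - 1 : ℤ) : ℂ) * hbar)
      | Sum.inl b, Sum.inr (Sum.inr (Sum.inl j)) =>
          Qb b (u + ((ξ + 2 * j - 1 : ℤ) : ℂ) * hbar)
      | Sum.inl _, Sum.inr (Sum.inr (Sum.inr _)) => 0
      | Sum.inr (Sum.inl b), Sum.inl f =>
          (-1 : ℂ) ^ η * Qbf b f (u + ((ξ - 2 * η : ℤ) : ℂ) * hbar)
      | Sum.inr (Sum.inl b), Sum.inr (Sum.inl j) =>
          Qb b (u + ((ξ + 2 * j - 1 : ℤ) : ℂ) * hbar)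
      | Sum.inr (Sum.inl _), Sum.inr (Sum.inr (Sum.inl _)) => 0
      | Sum.inr (Sum.inl b), Sum.inr (Sum.inr (Sum.inr j)) =>
          Qb b (u + ((ξ + 2 * j - 1 : ℤ) : ℂ) * hbar)
      | Sum.inr (Sum.inr r), Sum.inl f =>
          (-1 : ℂ) ^ (r - 1) * Qf f (u + ((ξ - 2 * r + 1 : ℤ) : ℂ) * hbar)
      | Sum.inr (Sum.inr _), Sum.inr _ => 0)

lemma listDet_eq {α β : Type*} (rows : List α) (cols : List β) (e : α → β → ℂ)
    (h : rows.length = cols.length) : listDet rows cols e =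
    Matrix.det (Matrix.of fun i j : Fin rows.length =>
      e (rows.get i) (cols.get (Fin.cast h j))) := by
  unfold listDet
  rw [dif_pos h]

lemma listDet_map {α β α' β' : Type*} (rows : List α) (cols : List β) (g : α → α') (k : β → β')
    (e : α' → β' → ℂ) (h : rows.length = cols.length) :
    listDet (rows.map g) (cols.map k) e = listDet rows cols (fun r c => e (g r) (k c)) := by
  rw [listDet_eq _ _ _ h, listDet_eq _ _ _ (by simpa using h)]
  rw [← Matrix.det_submatrix_equiv_self (finCongr (List.length_map g (as := rows)).symm)]
  congr 1
  ext i j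
  simp

lemma listDet_sign {α β : Type*} (rows : List α) (cols : List β) (s : α → ℂ) (t : β → ℂ)
    (e : α → β → ℂ) (h : rows.length = cols.length) :
    listDet rows cols (fun r c => s r * (t c * e r c)) =
      ((rows.map s).prod * (cols.map t).prod) * listDet rows cols e := by
  simp only [listDet_eq _ _ _ h]
  have h1 : (rows.map s).prod = ∏ i : Fin rows.length, s (rows.get i) := by
    rw [← List.prod_ofFn]; congr 1; simp [List.ofFn_getElem_eq_map]
  have h2 : (cols.map t).prod = ∏ i : Fin rows.length, t (cols.get (Fin.cast h i)) := by
    have : (cols.map t).prod = ∏ i : Fin cols.length, t (cols.get i) := by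
      rw [← List.prod_ofFn]; congr 1; simp [List.ofFn_getElem_eq_map]
    rw [this]
    exact ((finCongr h).prod_comp (fun i => t (cols.get i))).symm
  rw [h1, h2, mul_assoc, ← Matrix.det_mul_row, ← Matrix.det_mul_column]
  rfl

lemma listDet_key {α β α' β' : Type*} (rows : List α) (cols : List β) (g : α → α') (k : β → β')
    (e₁ : α → β → ℂ) (e₂ : α' → β' → ℂ) (s a : α → ℂ) (t d : β → ℂ)
    (h : rows.length = cols.length)
    (H : ∀ r ∈ rows, ∀ c ∈ cols, s r * (t c * e₂ (g r) (k c)) = e₁ r c - a r * d c)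
    (hc : (∃ c₀ ∈ cols, d c₀ = 0 ∧ ∀ r ∈ rows, e₁ r c₀ = a r) ∨
      (∃ r₀ ∈ rows, a r₀ = 0 ∧ ∀ c ∈ cols, e₁ r₀ c = d c)) :
    listDet rows cols e₁ =
      ((rows.map s).prod * (cols.map t).prod) * listDet (rows.map g) (cols.map k) e₂ := by
  rw [listDet_map _ _ _ _ _ h, ← listDet_sign _ _ _ _ _ h, listDet_eq _ _ _ h, listDet_eq _ _ _ h]
  symm
  rcases hc with ⟨c₀, hc₀, hd, he⟩ | ⟨r₀, hr₀, ha, he⟩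
  · obtain ⟨j, rfl⟩ := List.get_of_mem hc₀
    rw [← Matrix.det_transpose, ← Matrix.det_transpose (Matrix.of fun i j => e₁ _ _)]
    refine Matrix.det_eq_of_forall_row_eq_smul_add_const
      (fun j => - d (cols.get (Fin.cast h j))) (Fin.cast h.symm j) (by simpa using hd) ?_
    intro x y
    have h1 := H _ (List.get_mem rows y) _ (List.get_mem cols (Fin.cast h x))
    have h2 := he _ (List.get_mem rows y)
    simp only [Matrix.transpose_apply, Matrix.of_apply, Fin.cast_cast, Fin.cast_eq_self]
    rw [h1, h2]; ring
  · obtain ⟨i, rfl⟩ := List.get_of_mem hr₀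
    refine Matrix.det_eq_of_forall_row_eq_smul_add_const
      (fun i => - a (rows.get i)) i (by simpa using ha) ?_
    intro x y
    have h1 := H _ (List.get_mem rows x) _ (List.get_mem cols (Fin.cast h y))
    have h2 := he _ (List.get_mem cols (Fin.cast h y))
    simp only [Matrix.of_apply]
    rw [h1, h2]; ring

/-- The matrix entry used in `DeltaCF`. -/
noncomputable def ent {ι : Type*} (hbar : ℂ) (Qb Qf : ι → ℂ → ℂ) (Qbf : ι → ι → ℂ → ℂ)
    (η ξ : ℤ) (u : ℂ) : ι ⊕ (ι ⊕ ℤ) → ι ⊕ (ℤ ⊕ (ℤ ⊕ ℤ)) → ℂ :=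
    (fun row col =>
      match row, col with
      | Sum.inl b, Sum.inl f => Qbf b f (u + (ξ : ℂ) * hbar)
      | Sum.inl b, Sum.inr (Sum.inl j) => Qb b (u + ((ξ + 2 * j - 1 : ℤ) : ℂ) * hbar)
      | Sum.inl b, Sum.inr (Sum.inr (Sum.inl j)) =>
          Qb b (u + ((ξ + 2 * j - 1 : ℤ) : ℂ) * hbar)
      | Sum.inl _, Sum.inr (Sum.inr (Sum.inr _)) => 0
      | Sum.inr (Sum.inl b), Sum.inl f =>
          (-1 : ℂ) ^ η * Qbf b f (u + ((ξ - 2 * η : ℤ) : ℂ) * hbar)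
      | Sum.inr (Sum.inl b), Sum.inr (Sum.inl j) =>
          Qb b (u + ((ξ + 2 * j - 1 : ℤ) : ℂ) * hbar)
      | Sum.inr (Sum.inl _), Sum.inr (Sum.inr (Sum.inl _)) => 0
      | Sum.inr (Sum.inl b), Sum.inr (Sum.inr (Sum.inr j)) =>
          Qb b (u + ((ξ + 2 * j - 1 : ℤ) : ℂ) * hbar)
      | Sum.inr (Sum.inr r), Sum.inl f =>
          (-1 : ℂ) ^ (r - 1) * Qf f (u + ((ξ - 2 * r + 1 : ℤ) : ℂ) * hbar)
      | Sum.inr (Sum.inr _), Sum.inr _ => 0)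

/-- **Shift lemma, part (i).** -/
theorem shift_lemma_i {ι : Type*} (hbar : ℂ) (hbar_ne : hbar ≠ 0)
    (Qb Qf : ι → ℂ → ℂ) (Qbf : ι → ι → ℂ → ℂ)
    (B1 B2 F : List ι) (hnd : (B1 ++ B2 ++ F).Nodup)
    (hQQ : ∀ b ∈ B1 ++ B2, ∀ f ∈ F, ∀ u : ℂ,
      Qb b u * Qf f u = Qbf b f (u + hbar) - Qbf b f (u - hbar))
    (R T1 T2 : List ℤ) (η ξ : ℤ)
    (hlen : B1.length + B2.length + R.length = F.length + T1.length + T2.length)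
    (hcase : (0 : ℤ) ∈ T1 ∨ (1 : ℤ) ∈ R) :
    ∀ u : ℂ,
      DeltaCF hbar Qb Qf Qbf B1 B2 F R [] T1 T2 η ξ u =
        (-1 : ℂ) ^ (R.length + B2.length + T2.length) *
          DeltaCF hbar Qb Qf Qbf B1 B2 F (R.map (fun r => r - 1)) []
            (T1.map (fun t => t + 1)) (T2.map (fun t => t + 1)) (η - 1) (ξ - 2) u := by
  intro u
  have hx : u + ((ξ - 2 : ℤ) : ℂ) * hbar = (u + ((ξ - 1 : ℤ) : ℂ) * hbar) - hbar := by
    push_cast; ring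
  have hy : u + (ξ : ℂ) * hbar = (u + ((ξ - 1 : ℤ) : ℂ) * hbar) + hbar := by
    push_cast; ring
  have hη : (-1 : ℂ) ^ (η - 1) = - (-1 : ℂ) ^ η := by
    rw [zpow_sub₀ (by norm_num), zpow_one, div_neg, div_one]
  have hr : ∀ r : ℤ, (-1 : ℂ) ^ (r - 1 - 1) = - (-1 : ℂ) ^ (r - 1) := fun r => by
    rw [zpow_sub₀ (by norm_num) (r - 1), zpow_one, div_neg, div_one]
  have hR : ∀ r : ℤ, ξ - 2 - 2 * (r - 1) + 1 = ξ - 2 * r + 1 := fun r => by ring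
  have hT : ∀ t : ℤ, ξ - 2 + 2 * (t + 1) - 1 = ξ + 2 * t - 1 := fun t => by ring
  have hB : ξ - 2 - 2 * (η - 1) = ξ - 2 * η := by ring
  have key := listDet_key
    ((B1.map (Sum.inl : ι → ι ⊕ (ι ⊕ ℤ)) ++
      B2.map (fun b => (Sum.inr (Sum.inl b) : ι ⊕ (ι ⊕ ℤ))) ++
      R.map (fun r => (Sum.inr (Sum.inr r) : ι ⊕ (ι ⊕ ℤ)))))
    ((F.map (Sum.inl : ι → ι ⊕ (ℤ ⊕ (ℤ ⊕ ℤ))) ++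
      ([] : List ℤ).map (fun j => (Sum.inr (Sum.inl j) : ι ⊕ (ℤ ⊕ (ℤ ⊕ ℤ)))) ++
      T1.map (fun j => (Sum.inr (Sum.inr (Sum.inl j)) : ι ⊕ (ℤ ⊕ (ℤ ⊕ ℤ)))) ++
      T2.map (fun j => (Sum.inr (Sum.inr (Sum.inr j)) : ι ⊕ (ℤ ⊕ (ℤ ⊕ ℤ))))))
    (Sum.map id (Sum.map id (fun r => r - 1)))
    (Sum.map id (Sum.map id (Sum.map (fun t => t + 1) (fun t => t + 1))))
    (ent hbar Qb Qf Qbf η ξ u) (ent hbar Qb Qf Qbf (η - 1) (ξ - 2) u)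
    (Sum.elim (fun _ => 1) (fun _ => -1))
    (Sum.elim (fun b => Qb b (u + ((ξ - 1 : ℤ) : ℂ) * hbar)) (fun _ => 0))
    (Sum.elim (fun _ => 1) (Sum.elim (fun _ => 1) (Sum.elim (fun _ => 1) (fun _ => -1))))
    (Sum.elim (fun f => Qf f (u + ((ξ - 1 : ℤ) : ℂ) * hbar)) (fun _ => 0))
    (by simp; omega)
    (by
      rintro (b | b | r) hrow (f | j | j | j) hcol
      · have hb : b ∈ B1 ++ B2 := by simp at hrow ⊢; tauto
        have hf : f ∈ F := by simpa using hcol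
        have q := hQQ b hb f hf (u + ((ξ - 1 : ℤ) : ℂ) * hbar)
        simp only [ent, Sum.map_inl, Sum.elim_inl, id]
        rw [hx, hy, q]; ring
      all_goals first
        | (exfalso; simp at hcol; done)
        | simp [ent, hη, hr, hR, hT, hB, -Int.cast_sub, -Int.cast_add, -Int.cast_mul])
    (by
      rcases hcase with h0 | h1
      · left
        refine ⟨Sum.inr (Sum.inr (Sum.inl 0)), by simpa using h0, rfl, ?_⟩
        rintro (b | b | r) hrow <;> simp [ent]
      · right
        refine ⟨Sum.inr (Sum.inr 1), by simpa using h1, rfl, ?_⟩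
        rintro (f | j | j | j) hcol <;> simp [ent]
        congr 2; ring)
  unfold DeltaCF
  have e := key
  simp only [List.map_append, List.map_map, List.map_nil] at e
  have p : (-1 : ℂ) ^ (R.length + B2.length + T2.length) = (-1) ^ B2.length * (-1) ^ R.length * (-1) ^ T2.length := by
    rw [pow_add, pow_add]; ring
  rw [p]
  simp only [List.map_map, List.map_nil]
  refine Eq.trans e ?_
  congr 1
  simp [Function.comp_def, pow_add]

end Stmt9
end
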